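/- For every ε ∈ (0,1) there exists a positive integer K (depending only on ε) with the following property. Let W, H be positive integers and let R be a finite family of rectangles, each of width at most W, that admits a feasible packing into [0,W]×[0,H]. Then there exist at most K axis-aligned rectangular regions (containers) with pairwise disjoint interiors, each contained in [0,W]×[0,⌈(4/3+ε)·H⌉] and each labeled horizontal or vertical, together with a feasible packing into [0,W]×[0,⌈(4/3+ε)·H⌉] of the subfamily R' ⊆ R of all rectangles with h_i > ε·H or w_i > ε·W, such that every rectangle of R' lies inside one of the containers, any vertical line intersects the interior of at most one rectangle packed in each vertical container, and any horizontal line intersects the interior of at most one rectangle packed in each horizontal container. -/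

import Mathlib

open scoped Classical

/-- Open axis-aligned rectangles `(x₁, x₁+w₁) × (y₁, y₁+h₁)` and `(x₂, x₂+w₂) × (y₂, y₂+h₂)`
are disjoint. -/
def RectDisjoint (x₁ y₁ w₁ h₁ x₂ y₂ w₂ h₂ : ℕ) : Prop :=
  x₁ + w₁ ≤ x₂ ∨ x₂ + w₂ ≤ x₁ ∨ y₁ + h₁ ≤ y₂ ∨ y₂ + h₂ ≤ y₁

/-- A feasible packing of the family of rectangles `(w i, h i)` at positions `(x i, y i)`
inside `[0,W]×[0,H]`. -/
def IsPacking {ι : Type*} (w h x y : ι → ℕ) (W H : ℕ) : Prop :=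
  (∀ i, x i + w i ≤ W ∧ y i + h i ≤ H) ∧
  Pairwise fun i j => RectDisjoint (x i) (y i) (w i) (h i) (x j) (y j) (w j) (h j)

/-- Two axis-aligned rectangular regions (real coordinates) have disjoint interiors. -/
def RegionDisjoint (cx cy cw ch cx' cy' cw' ch' : ℝ) : Prop :=
  cx + cw ≤ cx' ∨ cx' + cw' ≤ cx ∨ cy + ch ≤ cy' ∨ cy' + ch' ≤ cy

/-- The rectangle of width `wi`, height `hi` placed at `(x,y)` lies inside the region with
bottom-left corner `(cx,cy)`, width `cw` and height `ch`. -/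
def InRegion (x y wi hi : ℕ) (cx cy cw ch : ℝ) : Prop :=
  cx ≤ (x : ℝ) ∧ (x : ℝ) + wi ≤ cx + cw ∧ cy ≤ (y : ℝ) ∧ (y : ℝ) + hi ≤ cy + ch

namespace SCP
open Finset

theorem exists_sort {Λ : Type*} [LinearOrder Λ] (W : ℕ) (f : ℕ → Λ) :
    ∃ π : ℕ → ℕ, ∀ j < W, π j < W ∧ ∀ P : Λ → Prop, (∀ s t, s ≤ t → P t → P s) →
      (j < ((range W).filter fun x => P (f x)).card ↔ P (f (π j))) := by
  let F : Fin W → Λ := fun k => f k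
  have hm : Monotone (F ∘ Tuple.sort F) := Tuple.monotone_sort F
  refine ⟨fun j => if h : j < W then (Tuple.sort F ⟨j, h⟩ : Fin W) else 0, fun j hj => ?_⟩
  simp only [hj, dif_pos]
  refine ⟨Fin.is_lt _, fun P hP => ?_⟩
  have h1 : ((range W).filter fun x => P (f x)).card
      = ((univ : Finset (Fin W)).filter fun k => P (F k)).card := by
    symm
    apply Finset.card_bij (fun (k : Fin W) _ => (k : ℕ))
    · intro k hk; simp [F] at hk ⊢; exact hk
    · intro k _ k' _ h; exact Fin.ext h
    · intro b hb; simp at hb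
      exact ⟨⟨b, hb.1⟩, by simp [F, hb.2], rfl⟩
  have h2 : ((univ : Finset (Fin W)).filter fun k => P (F k)).card
      = ((univ : Finset (Fin W)).filter fun k => P (F (Tuple.sort F k))).card := by
    symm
    apply Finset.card_bij (fun (k : Fin W) _ => Tuple.sort F k)
    · intro k hk; simpa using hk
    · intro k _ k' _ h; exact (Tuple.sort F).injective h
    · intro b hb
      exact ⟨(Tuple.sort F).symm b, by simpa using hb, by simp⟩
  rw [h1, h2]
  constructor
  · intro hlt
    by_contra hn
    have : ((univ : Finset (Fin W)).filter fun k => P (F (Tuple.sort F k))) ⊆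
        (univ : Finset (Fin W)).filter (fun k => k < ⟨j, hj⟩) := by
      intro k hk
      simp at hk ⊢
      by_contra hk2
      exact hn (hP _ _ (hm (not_lt.mp hk2)) hk)
    have := Finset.card_le_card this
    have h3 : ((univ : Finset (Fin W)).filter (fun k => k < ⟨j, hj⟩)).card = j := by
      have : ((univ : Finset (Fin W)).filter (fun k => k < ⟨j, hj⟩)) = Finset.Iio ⟨j, hj⟩ := by
        ext; simp
      rw [this]; simp
    omega
  · intro hp
    have : Finset.Iic (⟨j, hj⟩ : Fin W) ⊆
        ((univ : Finset (Fin W)).filter fun k => P (F (Tuple.sort F k))) := by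
      intro k hk
      simp at hk ⊢
      exact hP _ _ (hm hk) hp
    have := Finset.card_le_card this
    simp at this
    omega

/-- `π` sorts the columns `< W` with respect to the key `f`. -/
def IsSort {Λ : Type*} [LinearOrder Λ] (W : ℕ) (f : ℕ → Λ) (π : ℕ → ℕ) : Prop :=
  ∀ j < W, π j < W ∧ ∀ P : Λ → Prop, (∀ s t, s ≤ t → P t → P s) →
      (j < ((range W).filter fun x => P (f x)).card ↔ P (f (π j)))

/-- convex key sets become intervals. -/
theorem IsSort.interval {Λ : Type*} [LinearOrder Λ] {W : ℕ} {f : ℕ → Λ} {π : ℕ → ℕ}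
    (hs : IsSort W f π) (Q : Λ → Prop) (hQ : ∀ s t u, s ≤ t → t ≤ u → Q s → Q u → Q t) :
    ∃ st, st + ((range W).filter fun x => Q (f x)).card ≤ W ∧
      (∀ j < W, (st ≤ j ∧ j < st + ((range W).filter fun x => Q (f x)).card) ↔ Q (f (π j))) ∧
      ((∃ u, Q u) → st = ((range W).filter fun x => ∀ u, Q u → f x < u).card) := by
  by_cases hne : ∃ u, Q u
  · set P1 : Λ → Prop := fun t => ∀ u, Q u → t < u
    set P2 : Λ → Prop := fun t => ∃ u, Q u ∧ t ≤ u
    have hP1 : ∀ s t, s ≤ t → P1 t → P1 s := fun s t h ht u hu => lt_of_le_of_lt h (ht u hu)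
    have hP2 : ∀ s t, s ≤ t → P2 t → P2 s := fun s t h ⟨u, hu, h2⟩ => ⟨u, hu, h.trans h2⟩
    have hQe : ∀ t, Q t ↔ (P2 t ∧ ¬ P1 t) := by
      intro t
      constructor
      · intro ht; exact ⟨⟨t, ht, le_rfl⟩, fun h => lt_irrefl _ (h t ht)⟩
      · rintro ⟨⟨u, hu, h1⟩, h2⟩
        simp only [P1] at h2
        push Not at h2
        obtain ⟨v, hv, h3⟩ := h2
        exact hQ v t u h3 h1 hv hu
    have hcard : ((range W).filter fun x => P1 (f x)).card +
        ((range W).filter fun x => Q (f x)).card = ((range W).filter fun x => P2 (f x)).card := by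
      rw [← Finset.card_union_of_disjoint]
      · congr 1
        ext x
        simp only [mem_union, mem_filter]
        constructor
        · rintro (⟨h, h1⟩ | ⟨h, h1⟩)
          · obtain ⟨u, hu⟩ := hne
            exact ⟨h, u, hu, (h1 u hu).le⟩
          · exact ⟨h, ((hQe _).1 h1).1⟩
        · rintro ⟨h, h1⟩
          by_cases h2 : P1 (f x)
          · exact Or.inl ⟨h, h2⟩
          · exact Or.inr ⟨h, (hQe _).2 ⟨h1, h2⟩⟩
      · rw [Finset.disjoint_left]
        intro x hx hx2
        simp only [mem_filter] at hx hx2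
        exact ((hQe _).1 hx2.2).2 hx.2
    refine ⟨((range W).filter fun x => P1 (f x)).card, ?_, ?_, fun _ => rfl⟩
    · rw [hcard]
      exact (Finset.card_filter_le _ _).trans (by simp)
    · intro j hj
      rw [hcard, hQe, ← (hs j hj).2 P2 hP2, ← (hs j hj).2 P1 hP1]
      constructor
      · rintro ⟨h1, h2⟩; exact ⟨h2, by omega⟩
      · rintro ⟨h1, h2⟩; exact ⟨by omega, h1⟩
  · have : ∀ u, ¬ Q u := fun u hu => hne ⟨u, hu⟩
    refine ⟨0, ?_, ?_, fun h => absurd h hne⟩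
    · simp [this]
    · simp [this]

theorem IsSort.initial {Λ : Type*} [LinearOrder Λ] {W : ℕ} {f : ℕ → Λ} {π : ℕ → ℕ}
    (hs : IsSort W f π) (P : Λ → Prop) (hP : ∀ s t, s ≤ t → P t → P s) (a : ℕ) (ha : a ≤ W)
    (hPa : ∀ x < W, P (f x) ↔ x < a) {j : ℕ} (hj : j < W) : j < a ↔ π j < a := by
  have h := (hs j hj).2 P hP
  have h1 : ((range W).filter fun x => P (f x)) = range a := by
    ext x; simp only [mem_filter, mem_range]
    constructor
    · rintro ⟨h1, h2⟩; exact (hPa x h1).1 h2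
    · intro h1; exact ⟨by omega, (hPa x (by omega)).2 h1⟩
  rw [h1, card_range] at h
  rw [h, hPa _ (hs j hj).1]

theorem IsSort.transfer {Λ : Type*} [LinearOrder Λ] {W : ℕ} {f f' : ℕ → Λ} {π π' : ℕ → ℕ}
    (hs : IsSort W f π) (hs' : IsSort W f' π') (P : Λ → Prop) (hP : ∀ s t, s ≤ t → P t → P s)
    (hPa : ∀ x < W, P (f x) ↔ P (f' x)) {j : ℕ} (hj : j < W) : P (f (π j)) ↔ P (f' (π' j)) := by
  rw [← (hs j hj).2 P hP, ← (hs' j hj).2 P hP]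
  have : ((range W).filter fun x => P (f x)) = ((range W).filter fun x => P (f' x)) := by
    apply Finset.filter_congr
    intro x hx; exact hPa x (by simpa using hx)
  rw [this]

/-- disjoint intervals inside a set of points. -/
theorem sum_len_le {ι : Type*} (s : Finset ι) (l p : ι → ℕ) (T : Finset ℕ)
    (hT : ∀ i ∈ s, ∀ z, p i ≤ z → z < p i + l i → z ∈ T)
    (hd : ∀ i ∈ s, ∀ j ∈ s, i ≠ j → p i + l i ≤ p j ∨ p j + l j ≤ p i) :
    ∑ i ∈ s, l i ≤ T.card := by
  have h1 : ∑ i ∈ s, l i = (s.biUnion fun i => Finset.Ico (p i) (p i + l i)).card := by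
    rw [Finset.card_biUnion]
    · simp
    · intro i hi j hj hij
      rw [Function.onFun, Finset.disjoint_left]
      intro z hz hz2
      simp at hz hz2
      have := hd i hi j hj hij
      omega
  rw [h1]
  apply Finset.card_le_card
  intro z hz
  simp at hz
  obtain ⟨i, hi, h2, h3⟩ := hz
  exact hT i hi z h2 h3

/-- area bound -/
theorem area_le {ι : Type*} (s : Finset ι) (w h x y : ι → ℕ) (W H : ℕ)
    (hin : ∀ i ∈ s, x i + w i ≤ W ∧ y i + h i ≤ H)
    (hd : ∀ i ∈ s, ∀ j ∈ s, i ≠ j → x i + w i ≤ x j ∨ x j + w j ≤ x i ∨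
      y i + h i ≤ y j ∨ y j + h j ≤ y i) :
    ∑ i ∈ s, w i * h i ≤ W * H := by
  have h1 : ∑ i ∈ s, w i * h i = (s.biUnion fun i =>
      Finset.Ico (x i) (x i + w i) ×ˢ Finset.Ico (y i) (y i + h i)).card := by
    rw [Finset.card_biUnion]
    · simp
    · intro i hi j hj hij
      rw [Function.onFun, Finset.disjoint_left]
      rintro ⟨z, z'⟩ hz hz2
      simp at hz hz2
      have := hd i hi j hj hij
      omega
  have h2 : W * H = (range W ×ˢ range H).card := by simp
  rw [h1, h2]
  apply Finset.card_le_card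
  rintro ⟨z, z'⟩ hz
  simp at hz ⊢
  obtain ⟨i, hi, h2, h3⟩ := hz
  have := hin i hi
  omega

/-- prefix placement -/
theorem exists_prefix {ι γ : Type*} [Fintype ι] (w : ι → ℕ) (c : ι → γ) :
    ∃ pos : ι → ℕ, (∀ i j, i ≠ j → c i = c j → pos i + w i ≤ pos j ∨ pos j + w j ≤ pos i) ∧
      ∀ i, pos i + w i ≤ ∑ j ∈ univ.filter (fun j => c j = c i), w j := by
  let e := Fintype.equivFin ι
  have key : ∀ i (s : Finset ι), (univ.filter fun j => c j = c i ∧ e j < e i) ⊆ s → i ∈ s →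
      (∑ j ∈ univ.filter (fun j => c j = c i ∧ e j < e i), w j) + w i ≤ ∑ j ∈ s, w j := by
    intro i s hs hi
    have : i ∉ univ.filter (fun j => c j = c i ∧ e j < e i) := by simp
    rw [add_comm, ← Finset.sum_insert this]
    apply Finset.sum_le_sum_of_subset
    intro j hj
    rcases Finset.mem_insert.1 hj with rfl | h
    · exact hi
    · exact hs h
  refine ⟨fun i => ∑ j ∈ univ.filter (fun j => c j = c i ∧ e j < e i), w j, ?_, ?_⟩
  · have main : ∀ i j, e i < e j → c i = c j →
      (∑ k ∈ univ.filter (fun k => c k = c i ∧ e k < e i), w k) + w i ≤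
        ∑ k ∈ univ.filter (fun k => c k = c j ∧ e k < e j), w k := by
      intro i j hij hc
      apply key
      · intro k hk
        simp at hk ⊢
        exact ⟨hk.1.trans hc, hk.2.trans hij⟩
      · simp [hc, hij]
    intro i j hij hc
    rcases lt_trichotomy (e i) (e j) with h | h | h
    · exact Or.inl (main i j h hc)
    · exact absurd (e.injective h) hij
    · exact Or.inr (main j i h hc.symm)
  · intro i
    apply key
    · intro k hk; simp at hk ⊢; exact hk.1
    · simp

theorem exists_sub_fill {ι : Type*} (w : ι → ℕ) (ν ℓ : ℕ) (s : Finset ι) (hν : ∀ i ∈ s, w i ≤ ν) :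
    ∃ t ⊆ s, ∑ i ∈ t, w i ≤ ℓ ∧ (t = s ∨ ℓ ≤ ∑ i ∈ t, w i + ν) := by
  induction s using Finset.induction_on with
  | empty => exact ⟨∅, by simp, by simp, Or.inl rfl⟩
  | insert a s ha ih =>
    obtain ⟨t, hts, h1, h2⟩ := ih (fun i hi => hν i (by simp [hi]))
    have hw := hν a (by simp)
    rcases h2 with rfl | h2
    · by_cases h3 : ∑ i ∈ t, w i + w a ≤ ℓ
      · refine ⟨insert a t, subset_rfl, ?_, Or.inl rfl⟩
        rw [Finset.sum_insert ha]; omega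
      · exact ⟨t, by simp, h1, Or.inr (by omega)⟩
    · exact ⟨t, hts.trans (by simp), h1, Or.inr h2⟩

/-- greedy filling of containers. -/
theorem exists_fill {ι γ : Type*} [Nonempty γ] (w : ι → ℕ) (ν : ℕ) (ℓ : γ → ℕ) (C : Finset γ)
    (s : Finset ι) (hν : ∀ i ∈ s, w i ≤ ν) :
    ∃ (lost : Finset ι) (c : ι → γ), lost ⊆ s ∧ (∀ i ∈ s, i ∉ lost → c i ∈ C) ∧
      (∀ k ∈ C, ∑ i ∈ s.filter (fun i => i ∉ lost ∧ c i = k), w i ≤ ℓ k) ∧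
      (lost = ∅ ∨ ∑ i ∈ lost, w i + ∑ k ∈ C, ℓ k ≤ ∑ i ∈ s, w i + C.card * ν) := by
  induction C using Finset.induction_on generalizing s with
  | empty =>
    exact ⟨s, fun _ => Classical.arbitrary γ, subset_rfl, fun i hi hn => absurd hi hn,
      by simp, Or.inr (by simp)⟩
  | insert a C ha ih =>
    obtain ⟨t, hts, h1, h2⟩ := exists_sub_fill w ν (ℓ a) s hν
    obtain ⟨lost, c, hl, hc, hs, hlost⟩ := ih (s \ t) (fun i hi => hν i (by simp at hi; exact hi.1))
    refine ⟨lost, fun i => if i ∈ t then a else c i, hl.trans Finset.sdiff_subset, ?_, ?_, ?_⟩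
    · intro i hi hn
      by_cases ht : i ∈ t
      · simp [ht]
      · simp only [ht, if_false]
        exact Finset.mem_insert_of_mem (hc i (by simp [hi, ht]) hn)
    · intro k hk
      by_cases hka : k = a
      · subst hka
        refine le_trans (Finset.sum_le_sum_of_subset ?_) h1
        intro i hi
        simp only [mem_filter] at hi
        obtain ⟨h3, h4, h5⟩ := hi
        by_contra ht
        simp only [ht, if_false] at h5
        exact ha (h5 ▸ hc i (by simp [h3, ht]) h4)
      · have hkC : k ∈ C := by
          rcases Finset.mem_insert.1 hk with h | h
          · exact absurd h hka
          · exact h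
        refine le_trans (Finset.sum_le_sum_of_subset ?_) (hs k hkC)
        intro i hi
        simp only [mem_filter] at hi
        obtain ⟨h3, h4, h5⟩ := hi
        by_cases ht : i ∈ t
        · simp only [ht, if_true] at h5; exact absurd h5.symm hka
        · simp only [ht, if_false] at h5
          simp [h3, ht, h4, h5]
    · rcases h2 with rfl | h2
      · left
        simpa using hl
      · rcases hlost with h | h
        · exact Or.inl h
        · right
          rw [Finset.sum_insert ha, Finset.card_insert_of_notMem ha]
          have := Finset.sum_sdiff (f := w) hts
          rw [add_mul]
          omega
end SCP

namespace SCP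
open Finset

theorem IsSort.initial' {Λ : Type*} [LinearOrder Λ] {W : ℕ} {f : ℕ → Λ} {π : ℕ → ℕ}
    (hs : IsSort W f π) (P : Λ → Prop) (hP : ∀ s t, s ≤ t → P t → P s)
    (hlow : ∀ x y, x ≤ y → y < W → P (f y) → P (f x)) {j : ℕ} (hj : j < W) :
    P (f j) ↔ P (f (π j)) := by
  rw [← (hs j hj).2 P hP]
  constructor
  · intro h
    have : range (j+1) ⊆ ((range W).filter fun x => P (f x)) := by
      intro x hx
      simp at hx ⊢
      exact ⟨by omega, hlow x j (by omega) hj h⟩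
    have := Finset.card_le_card this
    simp at this; omega
  · intro h
    by_contra hn
    have : ((range W).filter fun x => P (f x)) ⊆ range j := by
      intro x hx
      simp at hx ⊢
      by_contra hx2
      exact hn (hlow j x (by omega) hx.1 hx.2)
    have := Finset.card_le_card this
    simp at this; omega

/-- largest element of `B` below `z`. -/
noncomputable def slab (B : Finset ℕ) (z : ℕ) : ℕ := (B.filter (· ≤ z)).sup id

theorem slab_le (B : Finset ℕ) (z : ℕ) : slab B z ≤ z := by
  unfold slab
  apply Finset.sup_le
  intro b hb
  simp at hb
  exact hb.2

theorem le_slab {B : Finset ℕ} {z b : ℕ} (hb : b ∈ B) (h : b ≤ z) : b ≤ slab B z := by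
  unfold slab
  exact Finset.le_sup (f := id) (by simp [hb, h])

theorem slab_mem {B : Finset ℕ} (h0 : 0 ∈ B) (z : ℕ) : slab B z ∈ B := by
  unfold slab
  have hne : (B.filter (· ≤ z)).Nonempty := ⟨0, by simp [h0]⟩
  obtain ⟨b, hb, h⟩ := Finset.exists_mem_eq_sup _ hne id
  rw [h]
  simp at hb
  exact hb.1

theorem slab_lt_iff {B : Finset ℕ} {b : ℕ} (hb : b ∈ B) (z : ℕ) :
    slab B z < b ↔ z < b := by
  constructor
  · intro h
    by_contra hn
    have := le_slab hb (not_lt.mp hn)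
    omega
  · intro h
    exact lt_of_le_of_lt (slab_le B z) h

theorem slab_mono {B : Finset ℕ} (h0 : 0 ∈ B) {y z : ℕ} (h : y ≤ z) : slab B y ≤ slab B z :=
  le_slab (slab_mem h0 y) ((slab_le B y).trans h)

theorem slab_eq {B : Finset ℕ} (h0 : 0 ∈ B) {y z : ℕ} (h : ∀ b ∈ B, b ≤ y ↔ b ≤ z) :
    slab B y = slab B z := by
  apply le_antisymm
  · exact le_slab (slab_mem h0 y) ((h _ (slab_mem h0 y)).1 (slab_le B y))
  · exact le_slab (slab_mem h0 z) ((h _ (slab_mem h0 z)).2 (slab_le B z))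

/-- adding boundaries at the left edges of first both-items. -/
theorem exists_bdry {ι : Type*} [Fintype ι] (B0 : Finset ℕ) (h0 : 0 ∈ B0) (W : ℕ)
    (hW : ∀ b ∈ B0, b ≤ W) (x w : ι → ℕ)
    (hw : ∀ i, 0 < w i) (hx : ∀ i, x i + w i ≤ W) (B : ι → Prop)
    (hd : ∀ i j, B i → B j → i ≠ j → x i + w i ≤ x j ∨ x j + w j ≤ x i) :
    ∃ Bd : Finset ℕ, B0 ⊆ Bd ∧ Bd.card ≤ 2 * B0.card ∧ (∀ b ∈ Bd, b ≤ W) ∧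
      ∀ i, B i → (¬ ∃ b ∈ Bd, x i < b ∧ b < x i + w i) →
        ∃ i0, B i0 ∧ (¬ ∃ b ∈ Bd, x i0 < b ∧ b < x i0 + w i0) ∧ x i0 = slab Bd (x i) := by
  let G : Finset ι := univ.filter fun i => B i ∧ ¬ ∃ b ∈ B0, x i < b ∧ b < x i + w i
  let Fs : Finset ι := G.filter fun i => ∀ j ∈ G, slab B0 (x j) = slab B0 (x i) → x i ≤ x j
  have hcard : (Fs.image x).card ≤ B0.card := by
    apply Finset.card_le_card_of_injOn (slab B0)
    · intro b hb
      exact slab_mem h0 b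
    · intro b hb c hc hbc
      simp only [coe_image, Set.mem_image, mem_coe] at hb hc
      obtain ⟨i, hi, rfl⟩ := hb
      obtain ⟨j, hj, rfl⟩ := hc
      have h1 := (mem_filter.1 hi).2 j (mem_filter.1 hj).1 hbc.symm
      have h2 := (mem_filter.1 hj).2 i (mem_filter.1 hi).1 hbc
      omega
  have hnc : ∀ i ∈ G, ¬ ∃ b ∈ B0 ∪ Fs.image x, x i < b ∧ b < x i + w i := by
    rintro i hi ⟨b, hb, h1, h2⟩
    rcases Finset.mem_union.1 hb with hb | hb
    · exact (mem_filter.1 hi).2.2 ⟨b, hb, h1, h2⟩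
    · obtain ⟨j, hj, rfl⟩ := Finset.mem_image.1 hb
      have hjG := (mem_filter.1 hj).1
      have hij : i ≠ j := by rintro rfl; omega
      have := hd i j (mem_filter.1 hi).2.1 (mem_filter.1 hjG).2.1 hij
      have := hw j
      omega
  refine ⟨B0 ∪ Fs.image x, Finset.subset_union_left, ?_, ?_, ?_⟩
  · have := Finset.card_union_le B0 (Fs.image x)
    omega
  · intro b hb
    rcases Finset.mem_union.1 hb with hb | hb
    · exact hW b hb
    · obtain ⟨j, hj, rfl⟩ := Finset.mem_image.1 hb
      have := hx j
      omega
  · intro i hB hi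
    have hiG : i ∈ G := by
      simp only [G, mem_filter, mem_univ, true_and]
      refine ⟨hB, ?_⟩
      rintro ⟨b, hb, h⟩
      exact hi ⟨b, Finset.mem_union_left _ hb, h⟩
    obtain ⟨i0, hi0, hmin⟩ := Finset.exists_min_image
      (G.filter fun j => slab B0 (x j) = slab B0 (x i)) x ⟨i, by simp [hiG]⟩
    rw [mem_filter] at hi0
    have hfs : i0 ∈ Fs := by
      simp only [Fs, mem_filter]
      refine ⟨hi0.1, fun j hj hs => hmin j ?_⟩
      rw [mem_filter]; exact ⟨hj, hs.trans hi0.2⟩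
    have hle : x i0 ≤ x i := hmin i (by simp [hiG])
    have h0' : 0 ∈ B0 ∪ Fs.image x := Finset.mem_union_left _ h0
    refine ⟨i0, (mem_filter.1 hi0.1).2.1, hnc i0 hi0.1, ?_⟩
    apply le_antisymm
    · exact le_slab (Finset.mem_union_right _ (Finset.mem_image_of_mem x hfs)) hle
    · set b := slab (B0 ∪ Fs.image x) (x i) with hbdef
      have hb : b ∈ B0 ∪ Fs.image x := slab_mem h0' _
      have hbi : b ≤ x i := slab_le _ _
      rcases Finset.mem_union.1 hb with hb | hb
      · have := le_slab hb hbi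
        have h2 := slab_le B0 (x i0)
        omega
      · obtain ⟨j, hj, hjb⟩ := Finset.mem_image.1 hb
        by_contra hlt
        have h1 : slab B0 (x i0) ≤ slab B0 (x j) := slab_mono h0 (by omega)
        have h2 : slab B0 (x j) ≤ slab B0 (x i) := slab_mono h0 (by omega)
        have h3 := (mem_filter.1 hj).2 i0 hi0.1 (by omega)
        omega
end SCP

namespace SCP
open Finset
set_option linter.unusedSectionVars false

/-- A grid instance together with fixed items and slab boundaries. -/
structure GI (ι : Type) where
  n : ℕ
  W : ℕ
  w : ι → ℕ
  a : ι → ℕ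
  b : ι → ℕ
  x : ι → ℕ
  Ob : Finset ι
  Bd : Finset ℕ
  hW : 0 < W
  hw : ∀ i, 0 < w i
  hab : ∀ i, a i < b i
  hbn : ∀ i, b i ≤ n
  hx : ∀ i, x i + w i ≤ W
  hd : ∀ i j, i ≠ j → x i + w i ≤ x j ∨ x j + w j ≤ x i ∨ b i ≤ a j ∨ b j ≤ a i
  h0 : 0 ∈ Bd
  hBW : ∀ β ∈ Bd, β ≤ W
  hOb : ∀ o ∈ Ob, x o ∈ Bd ∧ x o + w o ∈ Bd
  hP : ∀ i, i ∉ Ob → (a i < n / 3 + 1 ∧ n / 3 + 1 + n / 3 < b i) →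
      (¬ ∃ β ∈ Bd, x i < β ∧ β < x i + w i) →
      ∃ i0, i0 ∉ Ob ∧ (a i0 < n / 3 + 1 ∧ n / 3 + 1 + n / 3 < b i0) ∧
        (¬ ∃ β ∈ Bd, x i0 < β ∧ β < x i0 + w i0) ∧ x i0 = slab Bd (x i)

namespace GI
variable {ι : Type} [Fintype ι] (I : GI ι)

def q : ℕ := I.n / 3
def p : ℕ := I.n / 3 + 1
def tall (τ : ℕ × ℕ) : Prop := τ.1 + I.q < τ.2
def both (τ : ℕ × ℕ) : Prop := τ.1 < I.p ∧ I.p + I.q < τ.2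
def trk (h : Bool) (τ : ℕ × ℕ) : Prop :=
  I.tall τ ∧ (h = false → τ.1 < I.p) ∧ (h = true → I.p + I.q < τ.2)
def cov (i : ι) (z : ℕ) : Prop := I.x i ≤ z ∧ z < I.x i + I.w i
def ty (i : ι) : ℕ × ℕ := (I.a i, I.b i)
noncomputable def St (z : ℕ) : Finset (ℕ × ℕ) := (univ.filter fun i => I.cov i z).image I.ty
noncomputable def sl (z : ℕ) : ℕ := slab I.Bd z
def cross (i : ι) : Prop := ∃ β ∈ I.Bd, I.x i < β ∧ β < I.x i + I.w i
/-- fixed crossing talls -/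
def Xs (i : ι) : Prop := i ∉ I.Ob ∧ I.tall (I.ty i) ∧ I.cross i
noncomputable def cls (h : Bool) (z : ℕ) : ℕ :=
  if ∃ i, I.Xs i ∧ I.trk h (I.ty i) ∧ I.cov i z ∧ I.cov i (I.sl z) then 0
  else if ∃ i, I.Xs i ∧ I.trk h (I.ty i) ∧ I.cov i z then 3
  else if ∃ τ ∈ I.St z, I.both τ then 1 else 2

theorem mem_St {z : ℕ} {τ} : τ ∈ I.St z ↔ ∃ i, I.cov i z ∧ I.ty i = τ := by
  simp [St]

theorem both_trk {τ} (hb : I.both τ) (h : Bool) : I.trk h τ := by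
  obtain ⟨h1, h2⟩ := hb
  refine ⟨?_, fun _ => h1, fun _ => h2⟩
  simp only [tall, p, q] at *; omega

/-- items over a common column with intersecting vertical ranges are equal -/
theorem eq_of_row {i j : ι} {z r : ℕ} (hi : I.cov i z) (hj : I.cov j z)
    (h1 : I.a i ≤ r ∧ r < I.b i) (h2 : I.a j ≤ r ∧ r < I.b j) : i = j := by
  by_contra hne
  have := I.hd i j hne
  unfold cov at hi hj
  omega

theorem eq_of_ty {i j : ι} {z : ℕ} (hi : I.cov i z) (hj : I.cov j z)
    (h : I.ty i = I.ty j) : i = j := by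
  have := I.hab i
  simp only [ty, Prod.mk.injEq] at h
  exact I.eq_of_row hi hj (r := I.a i) (by omega) (by omega)

theorem eq_of_trk {i j : ι} {z : ℕ} {h : Bool} (hi : I.cov i z) (hj : I.cov j z)
    (h1 : I.trk h (I.ty i)) (h2 : I.trk h (I.ty j)) : i = j := by
  have := I.hbn i
  have := I.hbn j
  cases h
  · have h1' := h1.2.1 rfl
    have h2' := h2.2.1 rfl
    refine I.eq_of_row hi hj (r := I.q) ?_ ?_ <;>
    simp only [trk, tall, ty, p, q] at * <;> omega
  · have h1' := h1.2.2 rfl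
    have h2' := h2.2.2 rfl
    refine I.eq_of_row hi hj (r := 2 * I.q + 1) ?_ ?_ <;>
    simp only [trk, tall, ty, p, q] at * <;> omega

theorem tall_trk {τ} (ht : I.tall τ) : (τ.1 < I.p → I.trk false τ) ∧
    (I.p ≤ τ.1 → I.trk true τ) := by
  simp only [trk, tall, p, q] at *
  refine ⟨fun h => ⟨ht, fun _ => h, by simp⟩, fun h => ⟨ht, by simp, fun _ => by omega⟩⟩

theorem filter_trk {i : ι} {z : ℕ} {h : Bool} (hi : I.cov i z) (h1 : I.trk h (I.ty i)) :
    (I.St z).filter (I.trk h) = {I.ty i} := by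
  ext τ
  simp only [mem_filter, mem_singleton, mem_St]
  constructor
  · rintro ⟨⟨j, hj, rfl⟩, h2⟩
    rw [I.eq_of_trk hi hj h1 h2]
  · rintro rfl
    exact ⟨⟨i, hi, rfl⟩, h1⟩

theorem cov_lt_W {i : ι} {z : ℕ} (hi : I.cov i z) : z < I.W := by
  have := I.hx i
  unfold cov at hi; omega

theorem cov_x (i : ι) : I.cov i (I.x i) := by
  have := I.hw i
  unfold cov; omega

theorem cov_between {i : ι} {y z u : ℕ} (h1 : I.cov i y) (h2 : I.cov i u) (h3 : y ≤ z) (h4 : z ≤ u) :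
    I.cov i z := by
  unfold cov at *; omega

/-- an obstacle covering a column covers the whole slab. -/
theorem Ob_slab {o : ι} (ho : o ∈ I.Ob) {y z : ℕ} (h : I.cov o y) (hs : I.sl y = I.sl z) :
    I.cov o z := by
  obtain ⟨h1, h2⟩ := I.hOb o ho
  have a1 := le_slab h1 h.1
  have a2 := (slab_lt_iff h2 y).2 h.2
  have a3 := slab_le I.Bd z
  unfold sl at hs
  rw [hs] at a1 a2
  exact ⟨by omega, (slab_lt_iff h2 z).1 a2⟩

/-- a noncrossing item stays in one slab -/
theorem nc_slab {i : ι} (hi : ¬ I.cross i) {z : ℕ} (h : I.cov i z) : I.sl z = I.sl (I.x i) := by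
  apply slab_eq I.h0
  intro β hβ
  obtain ⟨h1, h2⟩ := h
  constructor
  · intro h3
    by_contra h4
    exact hi ⟨β, hβ, by omega, by omega⟩
  · intro h3; omega

theorem cls_zero {h : Bool} {z : ℕ} : I.cls h z = 0 ↔
    ∃ i, I.Xs i ∧ I.trk h (I.ty i) ∧ I.cov i z ∧ I.cov i (I.sl z) := by
  unfold cls; split_ifs <;> simp_all

theorem cls_three {h : Bool} {z : ℕ} (hc : 3 ≤ I.cls h z) :
    ∃ i, I.Xs i ∧ I.trk h (I.ty i) ∧ I.cov i z ∧ ¬ I.cov i (I.sl z) := by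
  unfold cls at hc
  split_ifs at hc with h1 h2
  · omega
  · obtain ⟨i, a, b, c⟩ := h2
    exact ⟨i, a, b, c, fun d => h1 ⟨i, a, b, c, d⟩⟩
  · omega
  · omega

theorem cls_le {h : Bool} {z : ℕ} : I.cls h z ≤ 3 := by
  unfold cls; split_ifs <;> simp

theorem cls_Xs {h : Bool} {z : ℕ} {i : ι} (hx : I.Xs i) (ht : I.trk h (I.ty i)) (hc : I.cov i z) :
    (I.cls h z = 0 ∧ I.cov i (I.sl z)) ∨ (I.cls h z = 3 ∧ ¬ I.cov i (I.sl z)) := by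
  by_cases h1 : I.cov i (I.sl z)
  · exact Or.inl ⟨I.cls_zero.2 ⟨i, hx, ht, hc, h1⟩, h1⟩
  · right
    refine ⟨?_, h1⟩
    unfold cls
    rw [if_neg, if_pos ⟨i, hx, ht, hc⟩]
    rintro ⟨j, hj, h2, h3, h4⟩
    rw [I.eq_of_trk hc h3 ht h2] at h1
    exact h1 h4

theorem cls_one {h : Bool} {z : ℕ} : I.cls h z = 1 ↔
    ∃ i, ¬ I.Xs i ∧ I.both (I.ty i) ∧ I.cov i z := by
  constructor
  · intro hc
    unfold cls at hc
    split_ifs at hc with h1 h2 h3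
    all_goals try omega
    obtain ⟨τ, hτ, hb⟩ := h3
    obtain ⟨i, hi, rfl⟩ := I.mem_St.1 hτ
    exact ⟨i, fun hX => h2 ⟨i, hX, I.both_trk hb h, hi⟩, hb, hi⟩
  · rintro ⟨i, hi, hb, hc⟩
    have key : ¬ ∃ i, I.Xs i ∧ I.trk h (I.ty i) ∧ I.cov i z := by
      rintro ⟨j, hj, h1, h2⟩
      rw [I.eq_of_trk hc h2 (I.both_trk hb h) h1] at hi
      exact hi hj
    unfold cls
    rw [if_neg (by rintro ⟨i, a, b, c, d⟩; exact key ⟨i, a, b, c⟩), if_neg key, if_pos]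
    exact ⟨_, I.mem_St.2 ⟨i, hc, rfl⟩, hb⟩

theorem cls_one_iff {h h' : Bool} {z : ℕ} : I.cls h z = 1 ↔ I.cls h' z = 1 := by
  rw [cls_one, cls_one]

theorem cls_two {h : Bool} {z : ℕ} (hc : I.cls h z = 2) : ∀ τ ∈ I.St z, ¬ I.both τ := by
  unfold cls at hc
  split_ifs at hc with h1 h2 h3
  all_goals try omega
  intro τ hτ hb
  exact h3 ⟨τ, hτ, hb⟩

/-- class of columns covered by a nonfixed-crossing track item -/
theorem cls_track {h : Bool} {z : ℕ} {i : ι} (hX : ¬ I.Xs i) (ht : I.trk h (I.ty i))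
    (hc : I.cov i z) : I.cls h z = if I.both (I.ty i) then 1 else 2 := by
  split_ifs with hb
  · exact I.cls_one.2 ⟨i, hX, hb, hc⟩
  · have key : ¬ ∃ i, I.Xs i ∧ I.trk h (I.ty i) ∧ I.cov i z := by
      rintro ⟨j, hj, h1, h2⟩
      rw [I.eq_of_trk hc h2 ht h1] at hX
      exact hX hj
    unfold cls
    rw [if_neg (by rintro ⟨i, a, b, c, d⟩; exact key ⟨i, a, b, c⟩), if_neg key, if_neg]
    rintro ⟨τ, hτ, hb'⟩
    obtain ⟨j, hj, rfl⟩ := I.mem_St.1 hτ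
    rw [I.eq_of_trk hc hj ht (I.both_trk hb' h)] at hb
    exact (hb hb' )

/-- P2: a slab with a class one column has no class zero column. -/
theorem no_LC {h h' : Bool} {y z : ℕ} (hy : I.cls h y = 1) (hs : I.sl z = I.sl y) :
    I.cls h' z ≠ 0 := by
  intro hz
  obtain ⟨k, hkX, hkt, hkz, hkl⟩ := I.cls_zero.1 hz
  obtain ⟨i, hiX, hib, hiy⟩ := I.cls_one.1 hy
  by_cases hO : i ∈ I.Ob
  · have h1 := I.Ob_slab hO hiy hs.symm
    rw [I.eq_of_trk h1 hkz (I.both_trk hib h') hkt] at hiX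
    exact hiX hkX
  · have hnc : ¬ I.cross i := fun hc => hiX ⟨hO, (I.both_trk hib h').1, hc⟩
    obtain ⟨i0, h1, h2, h3, h4⟩ := I.hP i hO hib hnc
    have h5 : I.x i0 = I.sl z := by
      rw [h4, hs, I.nc_slab hnc hiy]; rfl
    rw [← h5] at hkl
    have := I.eq_of_trk (I.cov_x i0) hkl (I.both_trk (τ := I.ty i0) h2 h') hkt
    rw [← this] at hkX
    exact h3 hkX.2.2

/-- lower-closedness of class zero inside a slab. -/
theorem cls_zero_mono {h : Bool} {y z : ℕ} (hyz : y ≤ z) (hs : I.sl y = I.sl z)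
    (hz : I.cls h z = 0) : I.cls h y = 0 := by
  obtain ⟨k, hkX, hkt, hkz, hkl⟩ := I.cls_zero.1 hz
  refine I.cls_zero.2 ⟨k, hkX, hkt, ?_, by rw [hs]; exact hkl⟩
  refine I.cov_between hkl hkz ?_ hyz
  rw [← hs]; exact slab_le _ _

/-- a crossing item which starts after the slab boundary covers the rest of the slab. -/
theorem RC_rest {k : ι} (hk : I.cross k) {y z : ℕ} (hky : I.cov k y) (hkl : ¬ I.cov k (I.sl y))
    (hyz : y ≤ z) (hs : I.sl y = I.sl z) : I.cov k z := by
  obtain ⟨β, hβ, h1, h2⟩ := hk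
  have h3 : I.sl y < I.x k := by
    by_contra hn
    exact hkl ⟨by omega, by have := slab_le I.Bd y; unfold sl at *; unfold cov at hky; omega⟩
  have h4 : y < β := by
    by_contra hn
    have := le_slab hβ (not_lt.mp hn)
    unfold sl at h3
    omega
  have h5 : z < β := by
    by_contra hn
    have := le_slab hβ (not_lt.mp hn)
    unfold sl at hs h3
    omega
  unfold cov at *
  omega

theorem cls_three_mono {h : Bool} {y z : ℕ} (hyz : y ≤ z) (hs : I.sl y = I.sl z)
    (hz : 3 ≤ I.cls h y) : 3 ≤ I.cls h z := by
  obtain ⟨k, hkX, hkt, hky, hkl⟩ := I.cls_three hz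
  have h1 := I.RC_rest hkX.2.2 hky hkl hyz hs
  rcases I.cls_Xs hkX hkt h1 with h2 | h2
  · rw [← hs] at h2; exact absurd h2.2 hkl
  · omega

/-- number of items over a column. -/
theorem card_cov (z : ℕ) : (univ.filter fun i => I.cov i z).card ≤ I.n := by
  have : (univ.filter fun i => I.cov i z).card ≤ (range I.n).card := by
    apply Finset.card_le_card_of_injOn I.a
    · intro i _
      have := I.hab i
      have := I.hbn i
      simp; omega
    · intro i hi j hj hij
      simp at hi hj
      have := I.hab i
      have := I.hab j
      exact I.eq_of_row hi hj (r := I.a i) (by omega) (by omega)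
  simpa using this

theorem St_sub (z : ℕ) : I.St z ⊆ range I.n ×ˢ range (I.n + 1) := by
  intro τ hτ
  obtain ⟨i, hi, rfl⟩ := I.mem_St.1 hτ
  have := I.hab i
  have := I.hbn i
  simp [ty]; omega

end GI
end SCP

namespace SCP
open Finset
set_option linter.unusedSectionVars false

abbrev Key : Type := ℕ ×ₗ ℕ ×ₗ ℕ ×ₗ ℕ
def kmk (l c k m : ℕ) : Key := toLex (l, toLex (c, toLex (k, m)))

theorem kmk_lt {l c k m l' c' k' m' : ℕ} : kmk l c k m < kmk l' c' k' m' ↔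
    l < l' ∨ l = l' ∧ (c < c' ∨ c = c' ∧ (k < k' ∨ k = k' ∧ m < m')) := by
  simp [kmk, Prod.Lex.toLex_lt_toLex]

theorem kmk_inj {l c k m l' c' k' m' : ℕ} : kmk l c k m = kmk l' c' k' m' ↔
    l = l' ∧ c = c' ∧ k = k' ∧ m = m' := by
  simp [kmk]

theorem kmk_le {l c k m l' c' k' m' : ℕ} : kmk l c k m ≤ kmk l' c' k' m' ↔
    l < l' ∨ l = l' ∧ (c < c' ∨ c = c' ∧ (k < k' ∨ k = k' ∧ m ≤ m')) := by
  rw [le_iff_lt_or_eq, kmk_lt, kmk_inj]; omega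

namespace GI
variable {ι : Type} [Fintype ι] (I : GI ι)

def clean (z : ℕ) : Prop :=
  (I.cls false z = 1 ∨ I.cls false z = 2) ∧ (I.cls true z = 1 ∨ I.cls true z = 2)
noncomputable def cleanS (l : ℕ) : Finset ℕ := (range I.W).filter fun z => I.sl z = l ∧ I.clean z
def Pn : ℕ := 2 ^ (I.n * (I.n + 1))

theorem card_image_St (s : Finset ℕ) : (s.image I.St).card ≤ I.Pn := by
  have h1 : s.image I.St ⊆ (range I.n ×ˢ range (I.n + 1)).powerset := by
    intro S hS
    obtain ⟨z, _, rfl⟩ := Finset.mem_image.1 hS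
    rw [Finset.mem_powerset]; exact I.St_sub z
  have h2 := Finset.card_le_card h1
  rw [Finset.card_powerset, Finset.card_product, card_range, card_range] at h2
  exact h2

theorem exists_popular (l : ℕ) : ∃ S, (S = ∅ ∨ ∃ z, I.St z = S) ∧
    (I.cleanS l).card ≤ I.Pn * ((I.cleanS l).filter fun z => I.St z = S).card := by
  by_cases hne : ((I.cleanS l).image I.St).Nonempty
  · obtain ⟨S, hS, hmax⟩ := Finset.exists_max_image _
      (fun S => ((I.cleanS l).filter fun z => I.St z = S).card) hne
    refine ⟨S, ?_, ?_⟩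
    · obtain ⟨z, _, hz⟩ := Finset.mem_image.1 hS
      exact Or.inr ⟨z, hz⟩
    · rw [Finset.card_eq_sum_card_image I.St (I.cleanS l)]
      refine (Finset.sum_le_card_nsmul _ _ _ hmax).trans ?_
      rw [smul_eq_mul]
      exact Nat.mul_le_mul_right _ (I.card_image_St _)
  · refine ⟨∅, Or.inl rfl, ?_⟩
    rw [Finset.not_nonempty_iff_eq_empty, Finset.image_eq_empty] at hne
    simp [hne]

noncomputable def Ss (l : ℕ) : Finset (ℕ × ℕ) := Classical.choose (I.exists_popular l)
theorem Ss_spec (l : ℕ) : (I.Ss l = ∅ ∨ ∃ z, I.St z = I.Ss l) ∧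
    (I.cleanS l).card ≤ I.Pn * ((I.cleanS l).filter fun z => I.St z = I.Ss l).card :=
  Classical.choose_spec (I.exists_popular l)

noncomputable def code (h : Bool) (l : ℕ) (S : Finset (ℕ × ℕ)) : ℕ :=
  if S = (I.Ss l).filter (I.trk h) then 0 else 1 + Encodable.encode S
noncomputable def code' (l : ℕ) (S : Finset (ℕ × ℕ)) : ℕ :=
  if S = I.Ss l then 0 else 1 + Encodable.encode S

theorem code_inj {h : Bool} {l : ℕ} {S T} (hc : I.code h l S = I.code h l T) : S = T := by
  unfold code at hc
  split_ifs at hc with h1 h2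
  · rw [h1, h2]
  · omega
  · omega
  · exact Encodable.encode_injective (by omega)

theorem code'_inj {l : ℕ} {S T} (hc : I.code' l S = I.code' l T) : S = T := by
  unfold code' at hc
  split_ifs at hc with h1 h2
  · rw [h1, h2]
  · omega
  · omega
  · exact Encodable.encode_injective (by omega)

theorem code_both {l : ℕ} {τ} (hb : I.both τ) (h h' : Bool) :
    I.code h l {τ} = I.code h' l {τ} := by
  have key : ∀ h h' : Bool, {τ} = (I.Ss l).filter (I.trk h) → {τ} = (I.Ss l).filter (I.trk h') := by
    intro h h' he
    have hm : τ ∈ (I.Ss l).filter (I.trk h) := by rw [← he]; simp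
    have hm2 := (mem_filter.1 hm).1
    rcases (I.Ss_spec l).1 with h1 | ⟨z, h1⟩
    · rw [h1] at hm2; simp at hm2
    · rw [← h1] at hm2 ⊢
      obtain ⟨i, hi, rfl⟩ := I.mem_St.1 hm2
      rw [I.filter_trk hi (I.both_trk hb h')]
  unfold code
  by_cases h1 : {τ} = (I.Ss l).filter (I.trk h)
  · rw [if_pos h1, if_pos (key h h' h1)]
  · rw [if_neg h1, if_neg (fun h2 => h1 (key h' h h2))]

noncomputable def key (h : Bool) (z : ℕ) : Key :=
  kmk (I.sl z) (I.cls h z) (I.code h (I.sl z) ((I.St z).filter (I.trk h))) (I.code' (I.sl z) (I.St z))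

noncomputable def π (h : Bool) : ℕ → ℕ := Classical.choose (exists_sort I.W (I.key h))
theorem π_sort (h : Bool) : IsSort I.W (I.key h) (I.π h) :=
  Classical.choose_spec (exists_sort I.W (I.key h))

theorem pi_lt {h : Bool} {j : ℕ} (hj : j < I.W) : I.π h j < I.W := (I.π_sort h j hj).1

theorem lt_low (u : Key) : ∀ s t : Key, s ≤ t → t < u → s < u := fun _ _ => lt_of_le_of_lt

theorem pi_sl {h : Bool} {j : ℕ} (hj : j < I.W) : I.sl (I.π h j) = I.sl j := by
  apply slab_eq I.h0
  intro β hβ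
  have h1 := (I.π_sort h).initial' (· < kmk β 0 0 0) (lt_low _) (by
    intro x y hxy hy
    simp only [key, kmk_lt]
    have h2 : I.sl x < β ↔ x < β := slab_lt_iff hβ x
    have h3 : I.sl y < β ↔ y < β := slab_lt_iff hβ y
    omega) hj
  simp only [key, kmk_lt] at h1
  have h2 : I.sl j < β ↔ j < β := slab_lt_iff hβ j
  have h3 : I.sl (I.π h j) < β ↔ I.π h j < β := slab_lt_iff hβ _
  omega

theorem pi_cls0 {h : Bool} {j : ℕ} (hj : j < I.W) : I.cls h j = 0 ↔ I.cls h (I.π h j) = 0 := by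
  have h1 := (I.π_sort h).initial' (· < kmk (I.sl j) 1 0 0) (lt_low _) (by
    intro x y hxy hy
    simp only [key, kmk_lt]
    have h2 : I.sl x ≤ I.sl y := slab_mono I.h0 hxy
    rintro (h3 | ⟨h3, h4⟩)
    · left; omega
    · rcases lt_or_eq_of_le h2 with h5 | h5
      · left; omega
      · right
        have := I.cls_zero_mono hxy h5 (h := h) (by omega)
        omega) hj
  simp only [key, kmk_lt, I.pi_sl hj, true_and] at h1
  omega

theorem pi_cls3 {h : Bool} {j : ℕ} (hj : j < I.W) : 3 ≤ I.cls h j ↔ 3 ≤ I.cls h (I.π h j) := by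
  have h1 := (I.π_sort h).initial' (· < kmk (I.sl j) 3 0 0) (lt_low _) (by
    intro x y hxy hy
    simp only [key, kmk_lt]
    have h2 : I.sl x ≤ I.sl y := slab_mono I.h0 hxy
    rintro (h3 | ⟨h3, h4⟩)
    · left; omega
    · rcases lt_or_eq_of_le h2 with h5 | h5
      · left; omega
      · right
        have := I.cls_three_mono hxy h5 (h := h)
        omega) hj
  simp only [key, kmk_lt, I.pi_sl hj, true_and] at h1
  omega

theorem pi_Ob {h : Bool} {j : ℕ} {o : ι} (ho : o ∈ I.Ob) (hc : I.cov o j) :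
    I.cov o (I.π h j) :=
  I.Ob_slab ho hc (I.pi_sl (I.cov_lt_W hc)).symm

theorem pi_Xs {h : Bool} {j : ℕ} {k : ι} (hk : I.Xs k) (ht : I.trk h (I.ty k)) (hc : I.cov k j) :
    I.cov k (I.π h j) := by
  have hj := I.cov_lt_W hc
  have hs := I.pi_sl (h := h) hj
  rcases I.cls_Xs hk ht hc with ⟨h1, h2⟩ | ⟨h1, h2⟩
  · obtain ⟨k', a1, a2, a3, a4⟩ := I.cls_zero.1 ((I.pi_cls0 hj).1 h1)
    rw [hs] at a4
    rw [I.eq_of_trk h2 a4 ht a2]; exact a3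
  · obtain ⟨k', a1, a2, a3, a4⟩ := I.cls_three ((I.pi_cls3 hj).1 h1.ge)
    rcases le_total j (I.π h j) with h3 | h3
    · exact I.RC_rest hk.2.2 hc h2 h3 hs.symm
    · have := I.RC_rest a1.2.2 a3 a4 h3 hs
      rw [I.eq_of_trk hc this ht a2]; exact a3

theorem pi_Xs_cls {h : Bool} {j : ℕ} {k : ι} (hk : I.Xs k) (ht : I.trk h (I.ty k)) (hc : I.cov k j) :
    I.cls h (I.π h j) ≠ 1 ∧ I.cls h (I.π h j) ≠ 2 := by
  have := I.cls_Xs hk ht (I.pi_Xs hk ht hc)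
  omega

/-- alignment of blocks of type containing both tracks -/
theorem both_align {i : ι} (hX : ¬ I.Xs i) (hb : I.both (I.ty i)) {j : ℕ} (hj : j < I.W) (h h' : Bool)
    (hk : kmk (I.sl (I.x i)) 1 (I.code false (I.sl (I.x i)) {I.ty i}) 0 ≤ I.key h (I.π h j) ∧
      I.key h (I.π h j) < kmk (I.sl (I.x i)) 1 (I.code false (I.sl (I.x i)) {I.ty i} + 1) 0) :
    kmk (I.sl (I.x i)) 1 (I.code false (I.sl (I.x i)) {I.ty i}) 0 ≤ I.key h' (I.π h' j) ∧
      I.key h' (I.π h' j) < kmk (I.sl (I.x i)) 1 (I.code false (I.sl (I.x i)) {I.ty i} + 1) 0 := by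
  have gen : ∀ c, (I.key h (I.π h j) < kmk (I.sl (I.x i)) 1 c 0 ↔
      I.key h' (I.π h' j) < kmk (I.sl (I.x i)) 1 c 0) := by
    intro c
    refine IsSort.transfer (I.π_sort h) (I.π_sort h') (· < kmk (I.sl (I.x i)) 1 c 0) (lt_low _) ?_ hj
    intro y hy
    simp only [key, kmk_lt]
    by_cases hs : I.sl y = I.sl (I.x i)
    · have h1 : I.cls h (I.x i) = 1 := I.cls_one.2 ⟨i, hX, hb, I.cov_x i⟩
      have h2 := I.no_LC (h' := h) h1 hs
      have h3 := I.no_LC (h' := h') h1 hs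
      have h4 := I.cls_one_iff (h := h) (h' := h') (z := y)
      have h5 : I.cls h y = 1 → I.code h (I.sl y) ((I.St y).filter (I.trk h)) =
          I.code h' (I.sl y) ((I.St y).filter (I.trk h')) := by
        intro hc
        obtain ⟨k, _, kb, kc⟩ := I.cls_one.1 hc
        rw [I.filter_trk kc (I.both_trk kb h), I.filter_trk kc (I.both_trk kb h'),
          I.code_both kb h h']
      omega
    · omega
  rw [← not_lt, gen, gen, not_lt] at hk
  exact hk

end GI
end SCP

namespace SCP
open Finset
set_option linter.unusedSectionVars false

inductive Lab (ι : Type) : Type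
  | F (i : ι) : Lab ι
  | T (l : ℕ) (τ : ℕ × ℕ) : Lab ι
  | C (t : Key) (τ : ℕ × ℕ) : Lab ι
  | G (l : ℕ) : Lab ι

namespace GI
variable {ι : Type} [Fintype ι] (I : GI ι)

noncomputable def half (τ : ℕ × ℕ) : Bool := if τ.1 < I.p then false else true
noncomputable def cl (τ : ℕ × ℕ) : ℕ := if I.both τ then 1 else 2
noncomputable def clS (l : ℕ) : ℕ := if ∃ τ ∈ I.Ss l, I.both τ then 1 else 2
noncomputable def lo (l : ℕ) (τ : ℕ × ℕ) : Key := kmk l (I.cl τ) (I.code (I.half τ) l {τ}) 0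
noncomputable def hi (l : ℕ) (τ : ℕ × ℕ) : Key := kmk l (I.cl τ) (I.code (I.half τ) l {τ} + 1) 0
noncomputable def gk (l : ℕ) : Key := kmk l (I.clS l) 0 0

def Cols : Lab ι → ℕ → Prop
  | .F i, j => I.cov i j
  | .T l τ, j => I.lo l τ ≤ I.key (I.half τ) (I.π (I.half τ) j) ∧
      I.key (I.half τ) (I.π (I.half τ) j) < I.hi l τ
  | .C t τ, j => I.key (I.half τ) (I.π (I.half τ) j) = t
  | .G l, j => ∀ h, I.key h (I.π h j) = I.gk l

noncomputable def ys (τ : ℕ × ℕ) : ℕ := if τ.1 < I.p then τ.1 else τ.1 + I.q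
noncomputable def Tst (l : ℕ) : ℕ := ((I.Ss l).filter fun τ => τ.1 < I.p).sup Prod.snd

noncomputable def Yl : Lab ι → ℕ
  | .F i => I.ys (I.ty i)
  | .T _ τ => I.ys τ
  | .C _ τ => I.ys τ
  | .G l => I.Tst l
noncomputable def Hl : Lab ι → ℕ
  | .F i => I.b i - I.a i
  | .T _ τ => τ.2 - τ.1
  | .C _ τ => τ.2 - τ.1
  | .G _ => I.q

def lty : Lab ι → Option (ℕ × ℕ)
  | .F i => some (I.ty i)
  | .T _ τ => some τ
  | .C _ τ => some τ
  | .G _ => none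

def Used : Lab ι → Prop
  | .F i => i ∈ I.Ob ∨ I.Xs i
  | .T l τ => ∃ i, i ∉ I.Ob ∧ ¬ I.cross i ∧ I.ty i = τ ∧ I.tall τ ∧ I.sl (I.x i) = l
  | .C t τ => ∃ i, i ∉ I.Ob ∧ ¬ I.cross i ∧ I.ty i = τ ∧ ¬ I.tall τ ∧
      ∃ z, I.sl z = I.sl (I.x i) ∧ τ ∈ I.St z ∧ t = I.key (I.half τ) z
  | .G _ => True

def Val (τ : ℕ × ℕ) (j : ℕ) : Prop :=
  (τ.1 < I.p → τ ∈ I.St (I.π false j)) ∧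
    ((I.p ≤ τ.1 ∨ I.both τ) → τ ∈ I.St (I.π true j))

theorem St_proper {τ} {z : ℕ} (h : τ ∈ I.St z) : τ.1 < τ.2 ∧ τ.2 ≤ I.n := by
  obtain ⟨i, hi, rfl⟩ := I.mem_St.1 h
  exact ⟨I.hab i, I.hbn i⟩

theorem St_disj {τ τ'} {z : ℕ} (h : τ ∈ I.St z) (h' : τ' ∈ I.St z) (hne : τ ≠ τ') :
    τ.2 ≤ τ'.1 ∨ τ'.2 ≤ τ.1 := by
  obtain ⟨i, hi, rfl⟩ := I.mem_St.1 h
  obtain ⟨j, hj, rfl⟩ := I.mem_St.1 h'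
  have hij : i ≠ j := by rintro rfl; exact hne rfl
  have := I.hd i j hij
  unfold cov at hi hj
  simp only [ty]
  omega

theorem val_disj {τ τ'} {j : ℕ} (h : I.Val τ j) (h' : I.Val τ' j) (hne : τ ≠ τ') :
    I.ys τ + (τ.2 - τ.1) ≤ I.ys τ' ∨ I.ys τ' + (τ'.2 - τ'.1) ≤ I.ys τ := by
  have mixed : ∀ τ τ' : ℕ × ℕ, I.Val τ j → I.Val τ' j → τ ≠ τ' → τ.1 < I.p → ¬ τ'.1 < I.p →
      I.ys τ + (τ.2 - τ.1) ≤ I.ys τ' := by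
    intro τ τ' h h' hne h1 h2
    have m1 := h.1 h1
    have m2 := h'.2 (Or.inl (not_lt.mp h2))
    have p1 := I.St_proper m1
    have p2 := I.St_proper m2
    unfold ys
    rw [if_pos h1, if_neg h2]
    by_cases hb : I.both τ
    · have := I.St_disj (h.2 (Or.inr hb)) m2 hne
      omega
    · have : τ.2 ≤ I.p + I.q := by
        by_contra hn
        exact hb ⟨h1, by omega⟩
      omega
  by_cases h1 : τ.1 < I.p <;> by_cases h2 : τ'.1 < I.p
  · have := I.St_disj (h.1 h1) (h'.1 h2) hne
    have := I.St_proper (h.1 h1)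
    have := I.St_proper (h'.1 h2)
    unfold ys
    rw [if_pos h1, if_pos h2]
    omega
  · exact Or.inl (mixed τ τ' h h' hne h1 h2)
  · exact Or.inr (mixed τ' τ h' h hne.symm h2 h1)
  · have m1 := h.2 (Or.inl (not_lt.mp h1))
    have m2 := h'.2 (Or.inl (not_lt.mp h2))
    have := I.St_disj m1 m2 hne
    have := I.St_proper m1
    have := I.St_proper m2
    unfold ys
    rw [if_neg h1, if_neg h2]
    omega

theorem half_eq {τ : ℕ × ℕ} : (τ.1 < I.p → I.half τ = false) ∧ (I.p ≤ τ.1 → I.half τ = true) := by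
  unfold half
  constructor
  · intro h; rw [if_pos h]
  · intro h; rw [if_neg (by omega)]

theorem half_trk {τ} (h : I.tall τ) : I.trk (I.half τ) τ := by
  unfold half
  split_ifs with h1
  · exact (I.tall_trk h).1 h1
  · exact (I.tall_trk h).2 (not_lt.mp h1)

/-- a column in block of key `lo..hi` -/
theorem blk_spec {l : ℕ} {h : Bool} {z c k : ℕ}
    (h1 : kmk l c k 0 ≤ I.key h z) (h2 : I.key h z < kmk l c (k+1) 0) :
    I.sl z = l ∧ I.cls h z = c ∧ I.code h (I.sl z) ((I.St z).filter (I.trk h)) = k := by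
  simp only [key, kmk_le, kmk_lt] at h1 h2
  omega

theorem blk_mem {l : ℕ} {τ : ℕ × ℕ} {h : Bool} {z c : ℕ}
    (h1 : kmk l c (I.code h l {τ}) 0 ≤ I.key h z) (h2 : I.key h z < kmk l c (I.code h l {τ} +1) 0) :
    τ ∈ I.St z := by
  obtain ⟨a1, a2, a3⟩ := I.blk_spec h1 h2
  rw [a1] at a3
  have := I.code_inj a3
  have h3 : τ ∈ (I.St z).filter (I.trk h) := by rw [this]; simp
  exact (mem_filter.1 h3).1

theorem both_half {τ : ℕ × ℕ} (hb : I.both τ) : I.half τ = false := I.half_eq.1 hb.1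

theorem Val_T {l : ℕ} {τ} {j : ℕ} (hj : j < I.W) (hu : I.Used (.T l τ)) (hc : I.Cols (.T l τ) j) :
    I.Val τ j := by
  obtain ⟨i, hO, hcr, rfl, ht, rfl⟩ := hu
  have hX : ¬ I.Xs i := fun h => hcr h.2.2
  have hm := I.blk_mem hc.1 hc.2
  constructor
  · intro h
    rw [I.half_eq.1 h] at hm; exact hm
  · intro h
    by_cases hb : I.both (I.ty i)
    · simp only [Cols, lo, hi, cl, if_pos hb, I.both_half hb] at hc
      have h2 := I.both_align hX hb hj false true hc
      rw [I.code_both hb false true] at h2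
      exact I.blk_mem h2.1 h2.2
    · rw [I.half_eq.2 (h.resolve_right hb)] at hm; exact hm

theorem not_tall_both {τ : ℕ × ℕ} (h : ¬ I.tall τ) : ¬ I.both τ := fun hb => h (I.both_trk hb true).1

theorem key_eq_St {h : Bool} {y z : ℕ} (hk : I.key h y = I.key h z) : I.sl y = I.sl z ∧
    I.St y = I.St z := by
  simp only [key, kmk_inj] at hk
  obtain ⟨h1, _, _, h2⟩ := hk
  rw [h1] at h2
  exact ⟨h1, I.code'_inj h2⟩

theorem Val_C {t : Key} {τ} {j : ℕ} (hu : I.Used (.C t τ)) (hc : I.Cols (.C t τ) j) :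
    I.Val τ j := by
  obtain ⟨i, hO, hcr, rfl, ht, z, hz, hm, rfl⟩ := hu
  have h1 := (I.key_eq_St hc).2
  rw [← h1] at hm
  constructor
  · intro h
    rw [I.half_eq.1 h] at hm; exact hm
  · intro h
    rw [I.half_eq.2 (h.resolve_right (I.not_tall_both ht))] at hm; exact hm

theorem Val_F {i : ι} {j : ℕ} (hu : I.Used (.F i)) (hc : I.Cols (.F i) j) : I.Val (I.ty i) j := by
  rcases hu with h | h
  · exact ⟨fun _ => I.mem_St.2 ⟨i, I.pi_Ob h hc, rfl⟩, fun _ => I.mem_St.2 ⟨i, I.pi_Ob h hc, rfl⟩⟩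
  · refine ⟨fun h1 => I.mem_St.2 ⟨i, I.pi_Xs h ((I.tall_trk h.2.1).1 h1) hc, rfl⟩,
      fun h1 => I.mem_St.2 ⟨i, I.pi_Xs h ?_ hc, rfl⟩⟩
    rcases h1 with h1 | h1
    · exact (I.tall_trk h.2.1).2 h1
    · exact I.both_trk h1 true

/-- an unfixed item cannot share type and slab column with an obstacle. -/
theorem Ob_same {i o : ι} (ho : o ∈ I.Ob) (hi : i ∉ I.Ob) (hty : I.ty o = I.ty i) {j : ℕ}
    (hc : I.cov o j) (hs : I.sl j = I.sl (I.x i)) : False := by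
  have := I.eq_of_ty (I.Ob_slab ho hc hs) (I.cov_x i) hty
  rw [this] at ho
  exact hi ho

theorem Xs_T {i i' : ι} {j : ℕ} (hX : I.Xs i) (hc : I.cov i j) (hty : I.ty i = I.ty i')
    (ht : I.tall (I.ty i')) {l : ℕ} (hc' : I.Cols (.T l (I.ty i')) j) : False := by
  have h1 : I.trk (I.half (I.ty i')) (I.ty i) := by rw [hty]; exact I.half_trk ht
  have h2 := I.pi_Xs_cls hX h1 hc
  have h3 := (I.blk_spec hc'.1 hc'.2).2.1
  unfold cl at h3
  split_ifs at h3 <;> omega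

theorem same_ty {k k' : Lab ι} (hu : I.Used k) (hu' : I.Used k') (hne : k ≠ k') {j : ℕ} (hj : j < I.W)
    (hc : I.Cols k j) (hc' : I.Cols k' j) {τ} (h : I.lty k = some τ) (h' : I.lty k' = some τ) :
    False := by
  rcases k with i | ⟨l, σ⟩ | ⟨t, σ⟩ | l <;> rcases k' with i' | ⟨l', σ'⟩ | ⟨t', σ'⟩ | l' <;>
    simp only [lty, Option.some.injEq, reduceCtorEq] at h h'
  · exact hne (by rw [I.eq_of_ty hc hc' (h.trans h'.symm)])
  · obtain ⟨i', hO, hcr, rfl, ht, rfl⟩ := hu'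
    rcases hu with hu | hu
    · refine I.Ob_same hu hO (h.trans h'.symm) hc ?_
      have := (I.blk_spec hc'.1 hc'.2).1
      rw [I.pi_sl hj] at this
      exact this
    · exact I.Xs_T hu hc (h.trans h'.symm) ht hc'
  · obtain ⟨i', hO, hcr, rfl, ht, z, hz, hm, rfl⟩ := hu'
    rcases hu with hu | hu
    · refine I.Ob_same hu hO (h.trans h'.symm) hc ?_
      have := (I.key_eq_St hc').1
      rw [I.pi_sl hj] at this
      exact this.trans hz
    · rw [h', ← h] at ht
      exact ht hu.2.1
  · obtain ⟨i, hO, hcr, rfl, ht, rfl⟩ := hu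
    rcases hu' with hu' | hu'
    · refine I.Ob_same hu' hO (h'.trans h.symm) hc' ?_
      have := (I.blk_spec hc.1 hc.2).1
      rw [I.pi_sl hj] at this
      exact this
    · exact I.Xs_T hu' hc' (h'.trans h.symm) ht hc
  · subst h; subst h'
    have h1 := (I.blk_spec hc.1 hc.2).1
    have h2 := (I.blk_spec hc'.1 hc'.2).1
    exact hne (by rw [← h1, ← h2])
  · obtain ⟨i, hO, hcr, rfl, ht, rfl⟩ := hu
    obtain ⟨i', hO', hcr', rfl, ht', z, hz, hm, rfl⟩ := hu'
    rw [h', ← h] at ht'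
    exact ht' ht
  · obtain ⟨i, hO, hcr, rfl, ht, z, hz, hm, rfl⟩ := hu
    rcases hu' with hu' | hu'
    · refine I.Ob_same hu' hO (h'.trans h.symm) hc' ?_
      have := (I.key_eq_St hc).1
      rw [I.pi_sl hj] at this
      exact this.trans hz
    · rw [h, ← h'] at ht
      exact ht hu'.2.1
  · obtain ⟨i, hO, hcr, rfl, ht, z, hz, hm, rfl⟩ := hu
    obtain ⟨i', hO', hcr', rfl, ht', rfl⟩ := hu'
    rw [h, ← h'] at ht
    exact ht ht'
  · subst h; subst h'
    exact hne (by rw [← hc, ← hc'])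

theorem G_St {l j : ℕ} {h : Bool} (hc : I.Cols (.G l) j) : I.sl (I.π h j) = l ∧
    I.St (I.π h j) = I.Ss l := by
  have := hc h
  simp only [key, gk, kmk_inj] at this
  obtain ⟨h1, _, _, h2⟩ := this
  refine ⟨h1, ?_⟩
  rw [h1] at h2
  unfold code' at h2
  split_ifs at h2 with h3
  · exact h3
  · omega

theorem G_disj {l j : ℕ} (hc : I.Cols (.G l) j) {τ} (hv : I.Val τ j) :
    I.ys τ + (τ.2 - τ.1) ≤ I.Tst l ∨ I.Tst l + I.q ≤ I.ys τ := by
  have s1 := (I.G_St (h := false) hc).2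
  have s2 := (I.G_St (h := true) hc).2
  by_cases h1 : τ.1 < I.p
  · left
    have hm := hv.1 h1
    have hp := I.St_proper hm
    rw [s1] at hm
    have : τ.2 ≤ I.Tst l := Finset.le_sup (f := Prod.snd) (mem_filter.2 ⟨hm, h1⟩)
    unfold ys
    rw [if_pos h1]; omega
  · right
    have hm := hv.2 (Or.inl (not_lt.mp h1))
    have hp := I.St_proper hm
    unfold ys
    rw [if_neg h1]
    have : I.Tst l ≤ τ.1 := by
      apply Finset.sup_le
      intro σ hσ
      rw [mem_filter, ← s2] at hσ
      have hne : σ ≠ τ := by rintro rfl; exact h1 hσ.2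
      have := I.St_disj hσ.1 hm hne
      omega
    omega

theorem lty_val {k : Lab ι} (hu : I.Used k) {j : ℕ} (hj : j < I.W) (hc : I.Cols k j) {τ}
    (h : I.lty k = some τ) : I.Val τ j ∧ I.Yl k = I.ys τ ∧ I.Hl k = τ.2 - τ.1 := by
  rcases k with i | ⟨l, σ⟩ | ⟨t, σ⟩ | l <;>
    simp only [lty, Option.some.injEq, reduceCtorEq] at h <;> subst h
  · exact ⟨I.Val_F hu hc, rfl, rfl⟩
  · exact ⟨I.Val_T hj hu hc, rfl, rfl⟩
  · exact ⟨I.Val_C hu hc, rfl, rfl⟩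

theorem used_disj {k k' : Lab ι} (hu : I.Used k) (hu' : I.Used k') (hne : k ≠ k') {j : ℕ} (hj : j < I.W)
    (hc : I.Cols k j) (hc' : I.Cols k' j) :
    I.Yl k + I.Hl k ≤ I.Yl k' ∨ I.Yl k' + I.Hl k' ≤ I.Yl k := by
  rcases hk : I.lty k with _ | τ <;> rcases hk' : I.lty k' with _ | τ'
  · rcases k with i | ⟨l, σ⟩ | ⟨t, σ⟩ | l <;> simp [lty] at hk
    rcases k' with i' | ⟨l', σ'⟩ | ⟨t', σ'⟩ | l' <;> simp [lty] at hk'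
    have h1 := (I.G_St (h := false) hc).1
    have h2 := (I.G_St (h := false) hc').1
    exact absurd (by rw [← h1, ← h2]) hne
  · rcases k with i | ⟨l, σ⟩ | ⟨t, σ⟩ | l <;> simp [lty] at hk
    obtain ⟨h1, h2, h3⟩ := I.lty_val hu' hj hc' hk'
    have := I.G_disj hc h1
    rw [h2, h3]
    exact this.symm
  · rcases k' with i | ⟨l, σ⟩ | ⟨t, σ⟩ | l <;> simp [lty] at hk'
    obtain ⟨h1, h2, h3⟩ := I.lty_val hu hj hc hk
    have := I.G_disj hc' h1
    rw [h2, h3]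
    exact this
  · by_cases hτ : τ = τ'
    · subst hτ
      exact (I.same_ty hu hu' hne hj hc hc' hk hk').elim
    · obtain ⟨h1, h2, h3⟩ := I.lty_val hu hj hc hk
      obtain ⟨h1', h2', h3'⟩ := I.lty_val hu' hj hc' hk'
      rw [h2, h3, h2', h3']
      exact I.val_disj h1 h1' hτ

theorem used_height {k : Lab ι} (hu : I.Used k) {j : ℕ} (hj : j < I.W) (hc : I.Cols k j) :
    I.Yl k + I.Hl k ≤ I.n + I.q := by
  rcases hk : I.lty k with _ | τ
  · rcases k with i | ⟨l, σ⟩ | ⟨t, σ⟩ | l <;> simp [lty] at hk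
    simp only [Yl, Hl]
    have : I.Tst l ≤ I.n := by
      apply Finset.sup_le
      intro σ hσ
      rw [mem_filter, ← (I.G_St (h := true) hc).2] at hσ
      exact (I.St_proper hσ.1).2
    omega
  · obtain ⟨h1, h2, h3⟩ := I.lty_val hu hj hc hk
    rw [h2, h3]
    unfold ys
    split_ifs with h4
    · have := I.St_proper (h1.1 h4); omega
    · have := I.St_proper (h1.2 (Or.inl (not_lt.mp h4))); omega
end GI
end SCP

namespace SCP
open Finset
set_option linter.unusedSectionVars false

namespace GI
variable {ι : Type} [Fintype ι] (I : GI ι)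

theorem cov_card (k : ι) (s : Finset ℕ) (hs : ∀ z ∈ s, I.cov k z) : s.card ≤ I.w k := by
  have : s ⊆ Finset.Ico (I.x k) (I.x k + I.w k) := by
    intro z hz
    have := hs z hz
    unfold cov at this
    simp; omega
  have := Finset.card_le_card this
  simpa using this

theorem mem_cleanS {l z : ℕ} : z ∈ I.cleanS l ↔ z < I.W ∧ I.sl z = l ∧ I.clean z := by
  unfold cleanS
  rw [mem_filter, mem_range]

theorem class_card {A : ℕ} (hA0 : 0 < A) (hA : ∀ i, i ∉ I.Ob → A * I.w i ≤ I.W) (h : Bool)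
    (l c : ℕ) (hc : c = 0 ∨ c = 3) :
    ((range I.W).filter fun z => I.sl z = l ∧ I.cls h z = c).card ≤ I.W / A := by
  have hle : ∀ k, I.Xs k → I.w k ≤ I.W / A := by
    intro k hk
    rw [Nat.le_div_iff_mul_le hA0, mul_comm]
    exact hA k hk.1
  rcases Finset.eq_empty_or_nonempty ((range I.W).filter fun z => I.sl z = l ∧ I.cls h z = c)
    with he | ⟨z, hz⟩
  · rw [he]; simp
  · rw [mem_filter] at hz
    rcases hc with rfl | rfl
    · obtain ⟨k, k1, k2, k3, k4⟩ := I.cls_zero.1 hz.2.2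
      refine (I.cov_card k _ ?_).trans (hle k k1)
      intro y hy
      rw [mem_filter] at hy
      obtain ⟨k', a1, a2, a3, a4⟩ := I.cls_zero.1 hy.2.2
      rw [hy.2.1] at a4
      rw [hz.2.1] at k4
      rw [I.eq_of_trk k4 a4 k2 a2]; exact a3
    · obtain ⟨k, k1, k2, k3, k4⟩ := I.cls_three hz.2.2.ge
      refine (I.cov_card k _ ?_).trans (hle k k1)
      intro y hy
      rw [mem_filter] at hy
      obtain ⟨k', a1, a2, a3, a4⟩ := I.cls_three hy.2.2.ge
      have hs : I.sl z = I.sl y := hz.2.1.trans hy.2.1.symm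
      rcases le_total z y with h3 | h3
      · exact I.RC_rest k1.2.2 k3 k4 h3 hs
      · have := I.RC_rest a1.2.2 a3 a4 h3 hs.symm
        rw [I.eq_of_trk k3 this k2 a2]; exact a3

theorem clean_card {A : ℕ} (hA0 : 0 < A) (hA : ∀ i, i ∉ I.Ob → A * I.w i ≤ I.W) (l : ℕ) :
    ((range I.W).filter fun z => I.sl z = l).card ≤ (I.cleanS l).card + 4 * (I.W / A) := by
  have hsub : ((range I.W).filter fun z => I.sl z = l) ⊆ I.cleanS l ∪
      ((((range I.W).filter fun z => I.sl z = l ∧ I.cls false z = 0) ∪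
      ((range I.W).filter fun z => I.sl z = l ∧ I.cls false z = 3)) ∪
      (((range I.W).filter fun z => I.sl z = l ∧ I.cls true z = 0) ∪
      ((range I.W).filter fun z => I.sl z = l ∧ I.cls true z = 3))) := by
    intro z hz
    have h1 := I.cls_le (h := false) (z := z)
    have h2 := I.cls_le (h := true) (z := z)
    rw [mem_filter, mem_range] at hz
    simp only [mem_union, mem_cleanS, mem_filter, mem_range]
    unfold clean
    omega
  have h0 := Finset.card_le_card hsub
  have u1 := Finset.card_union_le (I.cleanS l)
    ((((range I.W).filter fun z => I.sl z = l ∧ I.cls false z = 0) ∪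
      ((range I.W).filter fun z => I.sl z = l ∧ I.cls false z = 3)) ∪
      (((range I.W).filter fun z => I.sl z = l ∧ I.cls true z = 0) ∪
      ((range I.W).filter fun z => I.sl z = l ∧ I.cls true z = 3)))
  have u2 := Finset.card_union_le
    (((range I.W).filter fun z => I.sl z = l ∧ I.cls false z = 0) ∪
      ((range I.W).filter fun z => I.sl z = l ∧ I.cls false z = 3))
      (((range I.W).filter fun z => I.sl z = l ∧ I.cls true z = 0) ∪
      ((range I.W).filter fun z => I.sl z = l ∧ I.cls true z = 3))
  have u3 := Finset.card_union_le
    ((range I.W).filter fun z => I.sl z = l ∧ I.cls false z = 0)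
      ((range I.W).filter fun z => I.sl z = l ∧ I.cls false z = 3)
  have u4 := Finset.card_union_le
      ((range I.W).filter fun z => I.sl z = l ∧ I.cls true z = 0)
      ((range I.W).filter fun z => I.sl z = l ∧ I.cls true z = 3)
  have c1 := I.class_card hA0 hA false l 0 (by simp)
  have c2 := I.class_card hA0 hA false l 3 (by simp)
  have c3 := I.class_card hA0 hA true l 0 (by simp)
  have c4 := I.class_card hA0 hA true l 3 (by simp)
  omega

/-- size of the popular clean state -/
noncomputable def ml (l : ℕ) : ℕ := ((I.cleanS l).filter fun z => I.St z = I.Ss l).card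

theorem ml_le (h : Bool) (l : ℕ) : I.ml l ≤ ((range I.W).filter fun z => I.key h z = I.gk l).card := by
  apply Finset.card_le_card
  intro z hz
  rw [mem_filter, mem_cleanS] at hz
  obtain ⟨⟨hz1, hz2, hc⟩, hS⟩ := hz
  rw [mem_filter, mem_range]
  refine ⟨hz1, ?_⟩
  have hcl : I.cls h z = I.clS l := by
    have h12 : I.cls h z = 1 ∨ I.cls h z = 2 := by
      cases h
      · exact hc.1
      · exact hc.2
    unfold clS
    split_ifs with hb
    · rcases h12 with h1 | h1
      · exact h1
      · obtain ⟨τ, hτ, hb⟩ := hb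
        rw [← hS] at hτ
        exact absurd hb (I.cls_two h1 τ hτ)
    · rcases h12 with h1 | h1
      · obtain ⟨i, _, ib, ic⟩ := I.cls_one.1 h1
        exact absurd ⟨I.ty i, by rw [← hS]; exact I.mem_St.2 ⟨i, ic, rfl⟩, ib⟩ hb
      · exact h1
  simp only [key, gk, kmk_inj, hz2, hcl, hS, code, code', if_true, and_self]

theorem start_le {A : ℕ} (hA0 : 0 < A) (hA : ∀ i, i ∉ I.Ob → A * I.w i ≤ I.W) (h h' : Bool) (l : ℕ) :
    ((range I.W).filter fun z => I.key h z < I.gk l).card ≤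
      ((range I.W).filter fun z => I.key h' z < I.gk l).card + I.W / A := by
  have hsub : ((range I.W).filter fun z => I.key h z < I.gk l) ⊆
      ((range I.W).filter fun z => I.key h' z < I.gk l) ∪
      ((range I.W).filter fun z => I.sl z = l ∧ I.cls h z = 0) := by
    intro z hz
    simp only [mem_union, mem_filter, key, gk, kmk_lt] at hz ⊢
    obtain ⟨hz1, hz2⟩ := hz
    simp only [hz1, true_and]
    have h1 := I.cls_one_iff (h := h) (h' := h') (z := z)
    have h2 : I.clS l ≤ 2 := by unfold clS; split_ifs <;> omega
    omega
  have h0 := Finset.card_le_card hsub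
  have u1 := Finset.card_union_le ((range I.W).filter fun z => I.key h' z < I.gk l)
      ((range I.W).filter fun z => I.sl z = l ∧ I.cls h z = 0)
  have c1 := I.class_card hA0 hA h l 0 (by simp)
  omega

noncomputable def cap (A : ℕ) : Lab ι → ℕ
  | .F i => I.w i
  | .T l τ => ((range I.W).filter fun z => I.lo l τ ≤ I.key (I.half τ) z ∧
      I.key (I.half τ) z < I.hi l τ).card
  | .C t τ => ((range I.W).filter fun z => I.key (I.half τ) z = t).card
  | .G l => I.ml l - I.W / A

theorem exists_cols {A : ℕ} (hA0 : 0 < A) (hA : ∀ i, i ∉ I.Ob → A * I.w i ≤ I.W) (k : Lab ι) :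
    ∃ X L, X + L ≤ I.W ∧ (∀ j < I.W, (X ≤ j ∧ j < X + L) ↔ I.Cols k j) ∧ I.cap A k ≤ L := by
  rcases k with i | ⟨l, τ⟩ | ⟨t, τ⟩ | l
  · exact ⟨I.x i, I.w i, I.hx i, fun j _ => Iff.rfl, le_rfl⟩
  · obtain ⟨st, h1, h2, -⟩ := (I.π_sort (I.half τ)).interval
      (fun u => I.lo l τ ≤ u ∧ u < I.hi l τ)
      (fun s t u h1 h2 h3 h4 => ⟨h3.1.trans h1, lt_of_le_of_lt h2 h4.2⟩)
    exact ⟨st, _, h1, h2, by simp only [cap]; exact le_of_eq (by congr)⟩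
  · obtain ⟨st, h1, h2, -⟩ := (I.π_sort (I.half τ)).interval
      (fun u => u = t)
      (fun s t u h1 h2 h3 h4 => by subst h3; subst h4; exact le_antisymm h2 h1)
    exact ⟨st, _, h1, h2, by simp only [cap]; exact le_of_eq (by congr)⟩
  · have gen : ∀ h, ∃ st, st + ((range I.W).filter fun z => I.key h z = I.gk l).card ≤ I.W ∧
        (∀ j < I.W, (st ≤ j ∧ j < st + ((range I.W).filter fun z => I.key h z = I.gk l).card) ↔
          I.key h (I.π h j) = I.gk l) ∧
        st = ((range I.W).filter fun z => I.key h z < I.gk l).card := by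
      intro h
      obtain ⟨st, h1, h2, h3⟩ := (I.π_sort h).interval (fun u => u = I.gk l)
        (fun s t u h1 h2 h3 h4 => by subst h3; subst h4; exact le_antisymm h2 h1)
      refine ⟨st, by convert h1, by convert h2, ?_⟩
      have := h3 ⟨_, rfl⟩
      simpa using this
    obtain ⟨s1, a1, a2, a3⟩ := gen false
    obtain ⟨s2, b1, b2, b3⟩ := gen true
    have m1 := I.ml_le false l
    have m2 := I.ml_le true l
    have d1 := I.start_le hA0 hA false true l
    have d2 := I.start_le hA0 hA true false l
    rw [← a3, ← b3] at d1 d2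
    set c1 := ((range I.W).filter fun z => I.key false z = I.gk l).card
    set c2 := ((range I.W).filter fun z => I.key true z = I.gk l).card
    refine ⟨max s1 s2, min (s1 + c1) (s2 + c2) - max s1 s2, ?_, ?_, ?_⟩
    · by_cases hle : max s1 s2 ≤ min (s1 + c1) (s2 + c2)
      · omega
      · omega
    · intro j hj
      have e1 := a2 j hj
      have e2 := b2 j hj
      simp only [Cols, Bool.forall_bool]
      rw [← e1, ← e2]
      omega
    · simp only [cap]
      omega

end GI
end SCP

namespace SCP
open Finset
set_option linter.unusedSectionVars false

namespace GI
variable {ι : Type} [Fintype ι] (I : GI ι)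

noncomputable def grp (Z0 : Finset ι) (l : ℕ) (τ : ℕ × ℕ) : Finset ι :=
  univ.filter fun i => i ∉ I.Ob ∧ ¬ I.cross i ∧ ¬ I.tall (I.ty i) ∧ i ∉ Z0 ∧ I.ty i = τ ∧
    I.sl (I.x i) = l

noncomputable def cells (l : ℕ) (τ : ℕ × ℕ) : Finset Key :=
  ((range I.W).filter fun z => I.sl z = l ∧ τ ∈ I.St z).image (I.key (I.half τ))

theorem mem_grp {Z0 : Finset ι} {l : ℕ} {τ : ℕ × ℕ} {i : ι} : i ∈ I.grp Z0 l τ ↔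
    i ∉ I.Ob ∧ ¬ I.cross i ∧ ¬ I.tall (I.ty i) ∧ i ∉ Z0 ∧ I.ty i = τ ∧ I.sl (I.x i) = l := by
  unfold grp; rw [mem_filter]; simp only [mem_univ, true_and]

theorem cells_card (l : ℕ) (τ : ℕ × ℕ) : (I.cells l τ).card ≤ 4 * I.Pn := by
  have hsub : I.cells l τ ⊆ (range 4 ×ˢ ((range I.W).image I.St)).image
      (fun u : ℕ × Finset (ℕ × ℕ) => kmk l u.1 (I.code (I.half τ) l (u.2.filter (I.trk (I.half τ))))
        (I.code' l u.2)) := by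
    intro t ht
    unfold cells at ht
    rw [mem_image] at ht
    obtain ⟨z, hz, rfl⟩ := ht
    rw [mem_filter] at hz
    rw [mem_image]
    refine ⟨(I.cls (I.half τ) z, I.St z), ?_, ?_⟩
    · rw [mem_product]
      refine ⟨?_, mem_image_of_mem _ hz.1⟩
      have := I.cls_le (h := I.half τ) (z := z)
      simp; omega
    · simp only [key, hz.2.1]
  refine (Finset.card_le_card hsub).trans (Finset.card_image_le.trans ?_)
  rw [Finset.card_product, Finset.card_range]
  exact Nat.mul_le_mul_left _ (I.card_image_St _)

theorem same_ty_disj {i j : ι} (hij : i ≠ j) (h : I.ty i = I.ty j) :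
    I.x i + I.w i ≤ I.x j ∨ I.x j + I.w j ≤ I.x i := by
  have h1 := I.hd i j hij
  have h2 := I.hab i
  have h3 := I.hab j
  simp only [ty, Prod.mk.injEq] at h
  omega

theorem group_fill (Z0 : Finset ι) (ν : ℕ)
    (hν : ∀ i, i ∉ I.Ob → i ∉ Z0 → ¬ I.tall (I.ty i) → I.w i ≤ ν) (l : ℕ) (τ : ℕ × ℕ) :
    ∃ (lost : Finset ι) (c : ι → Key), lost ⊆ I.grp Z0 l τ ∧
      (∀ i ∈ I.grp Z0 l τ, i ∉ lost → c i ∈ I.cells l τ) ∧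
      (∀ t ∈ I.cells l τ, ∑ i ∈ (I.grp Z0 l τ).filter (fun i => i ∉ lost ∧ c i = t), I.w i ≤
        ((range I.W).filter fun z => I.key (I.half τ) z = t).card) ∧
      ∑ i ∈ lost, I.w i ≤ 4 * I.Pn * ν := by
  have : Nonempty Key := ⟨kmk 0 0 0 0⟩
  obtain ⟨lost, c, h1, h2, h3, h4⟩ := exists_fill I.w ν
    (fun t => ((range I.W).filter fun z => I.key (I.half τ) z = t).card) (I.cells l τ)
    (I.grp Z0 l τ) (by
      intro i hi
      rw [mem_grp] at hi
      exact hν i hi.1 hi.2.2.2.1 hi.2.2.1)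
  refine ⟨lost, c, h1, h2, by convert h3, ?_⟩
  rcases h4 with h4 | h4
  · rw [h4]; simp
  · have s1 : ∑ i ∈ I.grp Z0 l τ, I.w i ≤
        ((range I.W).filter fun z => I.sl z = l ∧ τ ∈ I.St z).card := by
      apply sum_len_le _ _ I.x
      · intro i hi z hz1 hz2
        rw [mem_grp] at hi
        have hc : I.cov i z := ⟨hz1, hz2⟩
        rw [mem_filter, mem_range]
        refine ⟨I.cov_lt_W hc, ?_, ?_⟩
        · rw [I.nc_slab hi.2.1 hc]; exact hi.2.2.2.2.2
        · exact I.mem_St.2 ⟨i, hc, hi.2.2.2.2.1⟩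
      · intro i hi j hj hij
        rw [mem_grp] at hi hj
        exact I.same_ty_disj hij (hi.2.2.2.2.1.trans hj.2.2.2.2.1.symm)
    have s2 : ((range I.W).filter fun z => I.sl z = l ∧ τ ∈ I.St z).card ≤
        ∑ t ∈ I.cells l τ, ((range I.W).filter fun z => I.key (I.half τ) z = t).card := by
      rw [Finset.card_eq_sum_card_image (I.key (I.half τ))]
      apply Finset.sum_le_sum
      intro t ht
      apply Finset.card_le_card
      intro z hz
      rw [mem_filter, mem_filter] at hz
      rw [mem_filter]
      exact ⟨hz.1.1, hz.2⟩
    have s3 := Nat.mul_le_mul_right ν (I.cells_card l τ)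
    have h4' : ∑ i ∈ lost, I.w i + ∑ t ∈ I.cells l τ, ((range I.W).filter fun z => I.key (I.half τ) z = t).card
       ≤ ∑ i ∈ I.grp Z0 l τ, I.w i + (I.cells l τ).card * ν := h4
    omega

theorem T_sum (l : ℕ) (τ : ℕ × ℕ) (A : ℕ) (ht : I.tall τ) :
    ∑ i ∈ univ.filter (fun i => i ∉ I.Ob ∧ ¬ I.cross i ∧ I.ty i = τ ∧ I.sl (I.x i) = l), I.w i ≤
      I.cap A (.T l τ) := by
  unfold cap
  apply sum_len_le _ _ I.x
  · intro i hi z hz1 hz2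
    rw [mem_filter] at hi
    obtain ⟨-, hO, hcr, rfl, rfl⟩ := hi
    have hc : I.cov i z := ⟨hz1, hz2⟩
    have htr := I.half_trk ht
    have h1 := I.cls_track (h := I.half (I.ty i)) (fun h : I.Xs i => hcr h.2.2) htr hc
    have h2 := I.filter_trk hc htr
    have h3 := I.nc_slab hcr hc
    rw [mem_filter, mem_range]
    refine ⟨I.cov_lt_W hc, ?_⟩
    simp only [key, lo, hi, h1, h2, h3, cl, kmk_le, kmk_lt]
    simp
  · intro i hi j hj hij
    rw [mem_filter] at hi hj
    exact I.same_ty_disj hij (hi.2.2.2.1.trans hj.2.2.2.1.symm)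

/-- total popular size -/
theorem ml_total {A : ℕ} (hA0 : 0 < A) (hA : ∀ i, i ∉ I.Ob → A * I.w i ≤ I.W) :
    I.W ≤ I.Pn * (∑ l ∈ I.Bd, (I.ml l - I.W / A) + I.Bd.card * (I.W / A)) +
      4 * I.Bd.card * (I.W / A) := by
  have h1 : I.W = ∑ l ∈ I.Bd, ((range I.W).filter fun z => I.sl z = l).card := by
    have := Finset.card_eq_sum_card_fiberwise (s := range I.W) (t := I.Bd) (f := I.sl)
      (fun z _ => slab_mem I.h0 z)
    rw [Finset.card_range] at this
    exact this
  have h2 : ∑ l ∈ I.Bd, ((range I.W).filter fun z => I.sl z = l).card ≤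
      ∑ l ∈ I.Bd, (I.Pn * ((I.ml l - I.W / A) + I.W / A) + 4 * (I.W / A)) := by
    apply Finset.sum_le_sum
    intro l _
    have a1 := I.clean_card hA0 hA l
    have a2 := (I.Ss_spec l).2
    have a3 : I.Pn * I.ml l ≤ I.Pn * ((I.ml l - I.W / A) + I.W / A) := Nat.mul_le_mul_left _ (by omega)
    unfold ml at a3 ⊢
    omega
  rw [Finset.sum_add_distrib, ← Finset.mul_sum, Finset.sum_add_distrib, Finset.sum_const,
    Finset.sum_const, smul_eq_mul, smul_eq_mul] at h2
  rw [← h1] at h2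
  refine h2.trans (le_of_eq ?_)
  ring

theorem cross_card : (univ.filter fun i => I.cross i).card ≤ I.Bd.card * I.n := by
  have hsub : (univ.filter fun i => I.cross i) ⊆ I.Bd.biUnion fun β => univ.filter fun i => I.cov i β := by
    intro i hi
    rw [mem_filter] at hi
    obtain ⟨-, β, hβ, h1, h2⟩ := hi
    rw [mem_biUnion]
    refine ⟨β, hβ, ?_⟩
    rw [mem_filter]
    exact ⟨mem_univ _, h1.le, h2⟩
  exact (Finset.card_le_card hsub).trans (Finset.card_biUnion_le_card_mul _ _ _ fun β _ => I.card_cov β)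


theorem sum_union_le' {ι : Type*} (s t : Finset ι) (f : ι → ℕ) :
    ∑ i ∈ s ∪ t, f i ≤ ∑ i ∈ s, f i + ∑ i ∈ t, f i := by
  rw [← Finset.sum_union_inter]; omega

theorem sum_biUnion_le' {ι κ : Type*} (s : Finset κ) (t : κ → Finset ι) (f : ι → ℕ) :
    ∑ i ∈ s.biUnion t, f i ≤ ∑ k ∈ s, ∑ i ∈ t k, f i := by
  induction s using Finset.induction_on with
  | empty => simp
  | insert a s ha ih =>
    rw [Finset.biUnion_insert, Finset.sum_insert ha]
    exact (sum_union_le' _ _ _).trans (by omega)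

noncomputable def grid : Finset (ℕ × (ℕ × ℕ)) := I.Bd ×ˢ (range I.n ×ˢ range (I.n + 1))

theorem grid_card : I.grid.card = I.Bd.card * (I.n * (I.n + 1)) := by
  unfold grid; simp

theorem mem_grid (i : ι) : (I.sl (I.x i), I.ty i) ∈ I.grid := by
  unfold grid
  rw [mem_product]
  exact ⟨slab_mem I.h0 _, I.St_sub (I.x i) (I.mem_St.2 ⟨i, I.cov_x i, rfl⟩)⟩

theorem core {A : ℕ} (hA0 : 0 < A) (hA : ∀ i, i ∉ I.Ob → A * I.w i ≤ I.W)
    (Z0 : Finset ι) (ν : ℕ)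
    (hν : ∀ i, i ∉ I.Ob → i ∉ Z0 → ¬ I.tall (I.ty i) → I.w i ≤ ν)
    (hineq : I.Pn * (∑ i ∈ Z0, I.w i + I.Bd.card * I.n * ν +
        I.Bd.card * (I.n * (I.n + 1)) * (4 * I.Pn * ν) + 2 * I.Bd.card * (I.W / A)) +
        4 * I.Bd.card * (I.W / A) < I.W) :
    ∃ (c : ι → Lab ι) (X Y L Hh : Lab ι → ℕ),
      (∀ i, X (c i) + L (c i) ≤ I.W ∧ Y (c i) + Hh (c i) ≤ I.n + I.n / 3) ∧
      (∀ i, ∑ j ∈ univ.filter (fun j => c j = c i), I.w j ≤ L (c i) ∧ I.b i - I.a i ≤ Hh (c i)) ∧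
      (∀ i j, c i ≠ c j → X (c i) + L (c i) ≤ X (c j) ∨ X (c j) + L (c j) ≤ X (c i) ∨
        Y (c i) + Hh (c i) ≤ Y (c j) ∨ Y (c j) + Hh (c j) ≤ Y (c i)) ∧
      (∀ i ∈ I.Ob, ∀ j, c j = c i → j = i) ∧
      (univ.image c).card ≤ I.Ob.card + I.Bd.card * I.n + I.Bd.card * (I.n * (I.n + 1)) +
        I.Bd.card * (I.n * (I.n + 1)) * (4 * I.Pn) + I.Bd.card := by
  choose lost cc g1 g2 g3 g4 using I.group_fill Z0 ν hν
  set Z : Finset ι := univ.filter (fun i => i ∉ I.Ob ∧ ¬ I.tall (I.ty i) ∧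
    (i ∈ Z0 ∨ I.cross i ∨ i ∈ lost (I.sl (I.x i)) (I.ty i))) with hZ
  have mZ : ∀ i, i ∈ Z ↔ i ∉ I.Ob ∧ ¬ I.tall (I.ty i) ∧
    (i ∈ Z0 ∨ I.cross i ∨ i ∈ lost (I.sl (I.x i)) (I.ty i)) := by
    intro i; rw [hZ, mem_filter]; simp only [mem_univ, true_and]
  have hZsum : ∑ i ∈ Z, I.w i ≤ ∑ i ∈ Z0, I.w i + I.Bd.card * I.n * ν +
        I.Bd.card * (I.n * (I.n + 1)) * (4 * I.Pn * ν) := by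
    have hsub : Z ⊆ (Z0 ∪ ((univ.filter fun i => I.cross i).filter
        fun i => i ∉ I.Ob ∧ i ∉ Z0 ∧ ¬ I.tall (I.ty i))) ∪
        I.grid.biUnion fun u => lost u.1 u.2 := by
      intro i hi
      rw [mZ] at hi
      obtain ⟨h1, h2, h3⟩ := hi
      rw [mem_union, mem_union]
      by_cases h0 : i ∈ Z0
      · exact Or.inl (Or.inl h0)
      · rcases h3 with h3 | h3 | h3
        · exact absurd h3 h0
        · left; right
          rw [mem_filter, mem_filter]
          exact ⟨⟨mem_univ _, h3⟩, h1, h0, h2⟩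
        · right
          rw [mem_biUnion]
          exact ⟨_, I.mem_grid i, h3⟩
    refine (Finset.sum_le_sum_of_subset hsub).trans ((sum_union_le' _ _ _).trans ?_)
    apply add_le_add
    · refine (sum_union_le' _ _ _).trans ?_
      apply Nat.add_le_add_left
      refine (Finset.sum_le_card_nsmul _ _ ν ?_).trans ?_
      · intro i hi
        rw [mem_filter] at hi
        exact hν i hi.2.1 hi.2.2.1 hi.2.2.2
      · rw [smul_eq_mul]
        apply Nat.mul_le_mul_right
        exact (Finset.card_filter_le _ _).trans I.cross_card
    · refine (sum_biUnion_le' _ _ _).trans ((Finset.sum_le_card_nsmul _ _ (4 * I.Pn * ν) ?_).trans ?_)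
      · intro u _; exact g4 u.1 u.2
      · rw [smul_eq_mul, grid_card]
  obtain ⟨lst, cg, -, f2, f3, f4⟩ := exists_fill I.w (I.W / A) (fun l => I.ml l - I.W / A) I.Bd Z (by
    intro i hi
    rw [mZ] at hi
    rw [Nat.le_div_iff_mul_le hA0, mul_comm]
    exact hA i hi.1)
  have hl : lst = ∅ := by
    rcases f4 with h | h
    · exact h
    · exfalso
      have h1 := I.ml_total hA0 hA
      have h2 : I.Pn * (∑ l ∈ I.Bd, (I.ml l - I.W / A) + I.Bd.card * (I.W / A)) ≤
          I.Pn * (∑ i ∈ Z0, I.w i + I.Bd.card * I.n * ν +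
        I.Bd.card * (I.n * (I.n + 1)) * (4 * I.Pn * ν) + 2 * I.Bd.card * (I.W / A)) := by
        apply Nat.mul_le_mul_left
        have : 2 * I.Bd.card * (I.W / A) = I.Bd.card * (I.W / A) + I.Bd.card * (I.W / A) := by ring
        omega
      omega
  subst hl
  set c : ι → Lab ι := fun i => if i ∈ I.Ob ∨ I.Xs i then .F i else if I.tall (I.ty i) then
    .T (I.sl (I.x i)) (I.ty i) else if i ∈ Z then .G (cg i) else
    .C (cc (I.sl (I.x i)) (I.ty i) i) (I.ty i) with hcdef
  have hc : ∀ i, ((i ∈ I.Ob ∨ I.Xs i) ∧ c i = .F i) ∨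
      (i ∉ I.Ob ∧ ¬ I.cross i ∧ I.tall (I.ty i) ∧ c i = .T (I.sl (I.x i)) (I.ty i)) ∨
      (i ∈ Z ∧ c i = .G (cg i)) ∨
      (i ∈ I.grp Z0 (I.sl (I.x i)) (I.ty i) ∧ i ∉ lost (I.sl (I.x i)) (I.ty i) ∧
        c i = .C (cc (I.sl (I.x i)) (I.ty i) i) (I.ty i)) := by
    intro i
    simp only [hcdef]
    by_cases h1 : i ∈ I.Ob ∨ I.Xs i
    · left; rw [if_pos h1]; exact ⟨h1, rfl⟩
    · right
      rw [if_neg h1]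
      by_cases h2 : I.tall (I.ty i)
      · left
        rw [if_pos h2]
        exact ⟨fun h => h1 (Or.inl h), fun h => h1 (Or.inr ⟨fun h => h1 (Or.inl h), h2, h⟩), h2, rfl⟩
      · right
        rw [if_neg h2]
        by_cases h3 : i ∈ Z
        · left; rw [if_pos h3]; exact ⟨h3, rfl⟩
        · right
          rw [if_neg h3]
          rw [mZ] at h3
          rw [mem_grp]
          tauto
  have hcells : ∀ {l τ t}, t ∈ I.cells l τ → ∃ z, I.sl z = l ∧ τ ∈ I.St z ∧ t = I.key (I.half τ) z := by
    intro l τ t ht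
    unfold cells at ht
    rw [mem_image] at ht
    obtain ⟨z, hz, rfl⟩ := ht
    rw [mem_filter] at hz
    exact ⟨z, hz.2.1, hz.2.2, rfl⟩
  have hused : ∀ i, I.Used (c i) := by
    intro i
    rcases hc i with ⟨h, e⟩ | ⟨h1, h2, h3, e⟩ | ⟨h, e⟩ | ⟨h1, h2, e⟩
    · rw [e]; exact h
    · rw [e]; exact ⟨i, h1, h2, rfl, h3, rfl⟩
    · rw [e]; trivial
    · rw [e]
      have := I.mem_grp.1 h1
      exact ⟨i, this.1, this.2.1, rfl, this.2.2.1, hcells (g2 _ _ i h1 h2)⟩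
  have hsum : ∀ i, ∑ j ∈ univ.filter (fun j => c j = c i), I.w j ≤ I.cap A (c i) := by
    intro i
    rcases hc i with ⟨h, e⟩ | ⟨h1, h2, h3, e⟩ | ⟨h, e⟩ | ⟨h1, h2, e⟩
    · rw [e]
      have : univ.filter (fun j => c j = Lab.F i) ⊆ {i} := by
        intro j hj
        rw [mem_filter] at hj
        rcases hc j with ⟨_, e'⟩ | ⟨_, _, _, e'⟩ | ⟨_, e'⟩ | ⟨_, _, e'⟩ <;> rw [e'] at hj <;>
          simp at hj
        rw [hj]; simp
      refine (Finset.sum_le_sum_of_subset this).trans ?_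
      simp [cap]
    · rw [e]
      refine (Finset.sum_le_sum_of_subset ?_).trans (I.T_sum _ _ A h3)
      intro j hj
      rw [mem_filter] at hj
      rcases hc j with ⟨_, e'⟩ | ⟨_, _, _, e'⟩ | ⟨_, e'⟩ | ⟨_, _, e'⟩ <;> rw [e'] at hj <;>
          simp at hj
      rw [mem_filter]
      exact ⟨mem_univ _, by assumption, by assumption, hj.2, hj.1⟩
    · rw [e]
      have hf : ∑ j ∈ Z.filter (fun j => j ∉ (∅ : Finset ι) ∧ cg j = cg i), I.w j ≤
          I.ml (cg i) - I.W / A := by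
        convert f3 (cg i) (f2 i h (by simp))
      refine (Finset.sum_le_sum_of_subset ?_).trans hf
      intro j hj
      rw [mem_filter] at hj
      rcases hc j with ⟨_, e'⟩ | ⟨_, _, _, e'⟩ | ⟨_, e'⟩ | ⟨_, _, e'⟩ <;> rw [e'] at hj <;>
          simp at hj
      exact mem_filter.2 ⟨by assumption, by simp, hj⟩
    · rw [e]
      have := g3 _ _ _ (g2 _ _ i h1 h2)
      simp only [cap]
      refine le_trans (Finset.sum_le_sum_of_subset ?_) (le_trans this (le_of_eq (by congr)))
      intro j hj
      rw [mem_filter] at hj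
      rcases hc j with ⟨_, e'⟩ | ⟨_, _, _, e'⟩ | ⟨_, e'⟩ | ⟨k1, k2, e'⟩ <;> rw [e'] at hj <;>
          simp at hj
      obtain ⟨z, z1, -, z2⟩ := hcells (g2 _ _ i h1 h2)
      obtain ⟨z', z1', -, z2'⟩ := hcells (g2 _ _ j k1 k2)
      have hj' := hj.1
      rw [z2, z2', hj.2] at hj'
      have hs := (I.key_eq_St hj').1
      rw [z1, z1'] at hs
      rw [hs, hj.2] at k1 k2
      rw [hs, hj.2] at hj
      rw [mem_filter]
      exact ⟨k1, k2, hj.1⟩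
  choose X L x1 x2 x3 using I.exists_cols hA0 hA
  have hL : ∀ i, I.w i ≤ L (c i) := by
    intro i
    refine le_trans ?_ ((hsum i).trans (x3 _))
    exact Finset.single_le_sum (f := I.w) (fun _ _ => Nat.zero_le _) (by simp)
  refine ⟨c, X, I.Yl, L, I.Hl, ?_, ?_, ?_, ?_, ?_⟩
  · intro i
    refine ⟨x1 _, ?_⟩
    have h1 := hL i
    have h2 := I.hw i
    have h3 := x1 (c i)
    exact I.used_height (hused i) (j := X (c i)) (by omega) ((x2 (c i) _ (by omega)).1 (by omega))
  · intro i
    refine ⟨(hsum i).trans (x3 _), ?_⟩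
    rcases hc i with ⟨h, e⟩ | ⟨h1, h2, h3, e⟩ | ⟨h, e⟩ | ⟨h1, h2, e⟩
    · rw [e]; rfl
    · rw [e]; rfl
    · rw [e]
      have := ((mZ i).1 h).2.1
      simp only [tall, ty, Hl] at this ⊢
      omega
    · rw [e]; rfl
  · intro i j hij
    have h1 := hL i
    have h2 := I.hw i
    have h3 := x1 (c i)
    have h1' := hL j
    have h2' := I.hw j
    have h3' := x1 (c j)
    by_cases hh : X (c i) + L (c i) ≤ X (c j) ∨ X (c j) + L (c j) ≤ X (c i)
    · omega
    · have hm : max (X (c i)) (X (c j)) < I.W := by omega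
      have := I.used_disj (hused i) (hused j) hij hm ((x2 (c i) _ hm).1 (by omega))
        ((x2 (c j) _ hm).1 (by omega))
      omega
  · intro i hi j hj
    rcases hc i with ⟨h, e⟩ | ⟨h1, h2, h3, e⟩ | ⟨h, e⟩ | ⟨h1, h2, e⟩
    · rw [e] at hj
      rcases hc j with ⟨_, e'⟩ | ⟨_, _, _, e'⟩ | ⟨_, e'⟩ | ⟨_, _, e'⟩ <;> rw [e'] at hj <;>
          simp at hj
      exact hj
    · exact absurd hi h1
    · exact absurd hi ((mZ i).1 h).1
    · exact absurd hi (I.mem_grp.1 h1).1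
  · have hsub : univ.image c ⊆ ((((I.Ob.image Lab.F) ∪ (univ.filter fun i => I.cross i).image Lab.F) ∪
        (I.grid.image fun u => Lab.T u.1 u.2)) ∪
        (I.grid.biUnion fun u => (I.cells u.1 u.2).image fun t => Lab.C t u.2)) ∪
        I.Bd.image Lab.G := by
      intro k hk
      rw [mem_image] at hk
      obtain ⟨i, -, rfl⟩ := hk
      simp only [mem_union]
      rcases hc i with ⟨h, e⟩ | ⟨h1, h2, h3, e⟩ | ⟨h, e⟩ | ⟨h1, h2, e⟩
      · rw [e]
        left; left; left
        rcases h with h | h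
        · left; exact mem_image_of_mem _ h
        · right; exact mem_image_of_mem _ (by rw [mem_filter]; exact ⟨mem_univ _, h.2.2⟩)
      · rw [e]
        left; left; right
        rw [mem_image]
        exact ⟨_, I.mem_grid i, rfl⟩
      · rw [e]
        right
        exact mem_image_of_mem _ (f2 i h (by simp))
      · rw [e]
        left; right
        rw [mem_biUnion]
        refine ⟨_, I.mem_grid i, ?_⟩
        rw [mem_image]
        exact ⟨_, g2 _ _ i h1 h2, rfl⟩
    refine (Finset.card_le_card hsub).trans ?_
    refine (Finset.card_union_le _ _).trans (add_le_add ?_ Finset.card_image_le)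
    refine (Finset.card_union_le _ _).trans (add_le_add ?_ ?_)
    · refine (Finset.card_union_le _ _).trans (add_le_add ?_ ?_)
      · refine (Finset.card_union_le _ _).trans (add_le_add Finset.card_image_le ?_)
        exact Finset.card_image_le.trans I.cross_card
      · rw [← grid_card]; exact Finset.card_image_le
    · rw [← grid_card]
      exact Finset.card_biUnion_le_card_mul _ _ _ fun u _ => Finset.card_image_le.trans (I.cells_card _ _)

end GI
end SCP

namespace SCP
open Finset
set_option linter.unusedSectionVars false

theorem pigeon {ι : Type*} (E : ℕ) (hE : 0 < E) (R : ℕ → Finset ι) (s : Finset ι) (f : ι → ℕ)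
    (hR : ∀ k, R k ⊆ s) (hd : ∀ k k', k < k' → Disjoint (R k) (R k')) :
    ∃ k < E, E * ∑ i ∈ R k, f i ≤ ∑ i ∈ s, f i := by
  by_contra hcon
  push Not at hcon
  have h1 : ∑ k ∈ range E, ∑ i ∈ R k, f i ≤ ∑ i ∈ s, f i := by
    rw [← Finset.sum_biUnion]
    · apply Finset.sum_le_sum_of_subset
      intro i hi
      rw [mem_biUnion] at hi
      obtain ⟨k, _, hk⟩ := hi
      exact hR k hk
    · intro k _ k' _ hne
      rcases lt_or_gt_of_ne hne with h | h
      · exact hd k k' h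
      · exact (hd k' k h).symm
  have h2 : ∑ k ∈ range E, (∑ i ∈ s, f i) < ∑ k ∈ range E, E * ∑ i ∈ R k, f i := by
    apply Finset.sum_lt_sum_of_nonempty
    · exact ⟨0, by simp; exact hE⟩
    · intro k hk
      exact hcon k (by simpa using hk)
  rw [← Finset.mul_sum, Finset.sum_const, Finset.card_range, smul_eq_mul] at h2
  have h3 := Nat.mul_le_mul_left E h1
  omega

theorem grid_lemma (n M : ℕ) : ∃ K : ℕ, ∀ (W : ℕ), 0 < W → ∀ (ι : Type) [Fintype ι]
    (w a b x : ι → ℕ), (∀ i, 0 < w i) → (∀ i, a i < b i) → (∀ i, b i ≤ n) →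
    (∀ i, x i + w i ≤ W) →
    (∀ i j, i ≠ j → x i + w i ≤ x j ∨ x j + w j ≤ x i ∨ b i ≤ a j ∨ b j ≤ a i) →
    ∀ F : Finset ι, F.card ≤ M →
    ∃ (κ : Type) (c : ι → κ) (U : Finset κ) (X Y L Hh : κ → ℕ) (x' a' : ι → ℕ),
      U.card ≤ K ∧ (∀ i, c i ∈ U) ∧
      (∀ k ∈ U, X k + L k ≤ W ∧ Y k + Hh k ≤ n + n / 3) ∧
      (∀ k ∈ U, ∀ k' ∈ U, k ≠ k' → X k + L k ≤ X k' ∨ X k' + L k' ≤ X k ∨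
        Y k + Hh k ≤ Y k' ∨ Y k' + Hh k' ≤ Y k) ∧
      (∀ i, X (c i) ≤ x' i ∧ x' i + w i ≤ X (c i) + L (c i) ∧
        Y (c i) ≤ a' i ∧ a' i + (b i - a i) ≤ Y (c i) + Hh (c i)) ∧
      (∀ i j, i ≠ j → c i = c j → x' i + w i ≤ x' j ∨ x' j + w j ≤ x' i) ∧
      (∀ i ∈ F, ∀ j, c j = c i → j = i) := by
  obtain ⟨P, hP⟩ : ∃ P, P = 2 ^ (n * (n + 1)) := ⟨_, rfl⟩
  obtain ⟨T, hT⟩ : ∃ T, T = n * (n + 1) := ⟨_, rfl⟩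
  obtain ⟨c1, hc1⟩ : ∃ c1, c1 = 8 * n + 6 := ⟨_, rfl⟩
  obtain ⟨c2, hc2⟩ : ∃ c2, c2 = n + T * (4 * P) := ⟨_, rfl⟩
  obtain ⟨E, hE⟩ : ∃ E, E = P * (n + 3 * c1) + 4 * c1 + 1 := ⟨_, rfl⟩
  obtain ⟨D, hD⟩ : ∃ D, D = E + M * E + c2 + 2 := ⟨_, rfl⟩
  obtain ⟨O, hO⟩ : ∃ O, O = D ^ (2 * E) * (1 + 2 * n) := ⟨_, rfl⟩
  obtain ⟨N, hN⟩ : ∃ N, N = 2 * (2 * O + 1) := ⟨_, rfl⟩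
  refine ⟨O + N * n + N * T + N * T * (4 * P) + N, ?_⟩
  intro W hW ι _ w a b x hw hab hbn hx hd F hF
  have hE0 : 0 < E := by omega
  have hD0 : 0 < D := by omega
  have htot : ∑ i, w i ≤ n * W := by
    have h1 := area_le (univ : Finset ι) w (fun i => b i - a i) x a W n
      (by intro i _; have := hab i; have := hbn i; have := hx i; omega)
      (by intro i _ j _ hij; have := hab i; have := hab j; have := hd i j hij; omega)
    have h2 : ∑ i, w i ≤ ∑ i, w i * (b i - a i) := by
      apply Finset.sum_le_sum
      intro i _
      have := hab i
      exact Nat.le_mul_of_pos_right _ (by omega)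
    rw [mul_comm n W]; omega
  obtain ⟨k, hkE, hk⟩ := pigeon E hE0
    (fun k => univ.filter fun i => w i * D ^ (2 * k) ≤ W ∧ W < w i * D ^ (2 * k + 2)) univ w
    (fun k => Finset.subset_univ _) (by
      intro k k' hkk
      rw [Finset.disjoint_left]
      intro i h1 h2
      rw [mem_filter] at h1 h2
      have h3 : w i * D ^ (2 * k + 2) ≤ w i * D ^ (2 * k') :=
        Nat.mul_le_mul_left _ (Nat.pow_le_pow_right hD0 (by omega))
      omega)
  obtain ⟨A, hA⟩ : ∃ A, A = D ^ (2 * k + 1) := ⟨_, rfl⟩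
  obtain ⟨A', hA'⟩ : ∃ A', A' = D ^ (2 * k) := ⟨_, rfl⟩
  have hAA : A = A' * D := by rw [hA, hA', pow_succ]
  have hAD : D ^ (2 * k + 2) = A * D := by rw [hA, ← pow_succ]
  have hA0' : 0 < A' := by rw [hA']; positivity
  have hA0 : 0 < A := by rw [hA]; positivity
  have hDA : D ≤ A := by rw [hAA]; exact Nat.le_mul_of_pos_left _ hA0'
  have hA'A : A' ≤ A := by rw [hAA]; exact Nat.le_mul_of_pos_right _ hD0
  have hAmax : A ≤ D ^ (2 * E) := by rw [hA]; exact Nat.pow_le_pow_right hD0 (by omega)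
  simp only [← hA', hAD] at hk
  have hk' := hk.trans htot
  set S := ∑ i ∈ univ.filter (fun i => w i * A' ≤ W ∧ W < w i * (A * D)), w i with hS
  -- obstacles
  set big : Finset ι := univ.filter fun i => W < w i * A with hbig
  set Ob : Finset ι := F ∪ big with hObdef
  have hbigcard : big.card * E ≤ 2 * n * A := by
    set b1 : Finset ι := univ.filter fun i => W < w i * A' with hb1
    set b2 : Finset ι := univ.filter fun i => w i * A' ≤ W ∧ W < w i * A with hb2
    have hsub : big ⊆ b1 ∪ b2 := by
      intro i hi
      simp only [hbig, hb1, hb2, mem_union, mem_filter, mem_univ, true_and] at hi ⊢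
      omega
    have hcard := (Finset.card_le_card hsub).trans (Finset.card_union_le _ _)
    have e1 : b1.card ≤ n * A' := by
      have h1 : b1.card * W ≤ ∑ i ∈ b1, w i * A' := by
        rw [← smul_eq_mul]
        apply Finset.card_nsmul_le_sum
        intro i hi
        rw [hb1, mem_filter] at hi
        exact hi.2.le
      have h2 : ∑ i ∈ b1, w i * A' ≤ n * W * A' := by
        rw [← Finset.sum_mul]
        exact Nat.mul_le_mul_right _ ((Finset.sum_le_sum_of_subset (Finset.subset_univ _)).trans htot)
      have h3 : b1.card * W ≤ (n * A') * W := by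
        calc _ ≤ n * W * A' := h1.trans h2
          _ = _ := by ring
      exact Nat.le_of_mul_le_mul_right h3 hW
    have e2 : b2.card * E ≤ n * A := by
      have h1 : b2.card * W ≤ ∑ i ∈ b2, w i * A := by
        rw [← smul_eq_mul]
        apply Finset.card_nsmul_le_sum
        intro i hi
        rw [hb2, mem_filter] at hi
        exact hi.2.2.le
      have h2 : ∑ i ∈ b2, w i * A ≤ S * A := by
        rw [← Finset.sum_mul]
        apply Nat.mul_le_mul_right
        apply Finset.sum_le_sum_of_subset
        intro i hi
        rw [hb2, mem_filter] at hi
        rw [mem_filter]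
        refine ⟨mem_univ _, hi.2.1, lt_of_lt_of_le hi.2.2 ?_⟩
        exact Nat.mul_le_mul_left _ (Nat.le_mul_of_pos_right _ hD0)
      have h3 : b2.card * E * W ≤ (n * A) * W := by
        calc b2.card * E * W = E * (b2.card * W) := by ring
          _ ≤ E * (S * A) := Nat.mul_le_mul_left _ (h1.trans h2)
          _ = (E * S) * A := by ring
          _ ≤ (n * W) * A := Nat.mul_le_mul_right _ hk'
          _ = _ := by ring
      exact Nat.le_of_mul_le_mul_right h3 hW
    have e3 : b1.card * E ≤ n * A := by
      calc b1.card * E ≤ (n * A') * D := Nat.mul_le_mul e1 (by omega)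
        _ = n * A := by rw [hAA]; ring
    calc big.card * E ≤ (b1.card + b2.card) * E := Nat.mul_le_mul_right _ hcard
      _ = b1.card * E + b2.card * E := by ring
      _ ≤ n * A + n * A := by omega
      _ = _ := by ring
  have hObcard : Ob.card * E ≤ A * (1 + 2 * n) := by
    have h1 : Ob.card ≤ M + big.card := (Finset.card_union_le _ _).trans (by omega)
    calc Ob.card * E ≤ (M + big.card) * E := Nat.mul_le_mul_right _ h1
      _ = M * E + big.card * E := by ring
      _ ≤ A + 2 * n * A := by omega
      _ = _ := by ring
  have hObO : Ob.card ≤ O := by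
    have h1 : Ob.card ≤ Ob.card * E := Nat.le_mul_of_pos_right _ hE0
    rw [hO]
    exact (h1.trans hObcard).trans (Nat.mul_le_mul_right _ hAmax)
  obtain ⟨Bd, hB0, hBcard, hBW, hBP⟩ := exists_bdry
    (insert 0 (Ob.image x ∪ Ob.image fun i => x i + w i)) (by simp) W (by
      intro β hβ
      simp only [mem_insert, mem_union, mem_image] at hβ
      rcases hβ with rfl | ⟨i, _, rfl⟩ | ⟨i, _, rfl⟩
      · omega
      · have := hx i; omega
      · exact hx i) x w hw hx
    (fun i => i ∉ Ob ∧ (a i < n / 3 + 1 ∧ n / 3 + 1 + n / 3 < b i)) (by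
      rintro i j ⟨_, h1, h2⟩ ⟨_, h3, h4⟩ hij
      have := hd i j hij
      omega)
  have hBN : Bd.card ≤ 2 * (2 * Ob.card + 1) := by
    refine hBcard.trans ?_
    have h1 := Finset.card_insert_le 0 (Ob.image x ∪ Ob.image fun i => x i + w i)
    have h2 := Finset.card_union_le (Ob.image x) (Ob.image fun i => x i + w i)
    have h3 : (Ob.image x).card ≤ Ob.card := Finset.card_image_le
    have h4 : (Ob.image fun i => x i + w i).card ≤ Ob.card := Finset.card_image_le
    omega
  have hBE : Bd.card * E ≤ c1 * A := by
    calc Bd.card * E ≤ (2 * (2 * Ob.card + 1)) * E := Nat.mul_le_mul_right _ hBN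
      _ = 4 * (Ob.card * E) + 2 * E := by ring
      _ ≤ 4 * (A * (1 + 2 * n)) + 2 * A := by omega
      _ = _ := by rw [hc1]; ring
  have hBN' : Bd.card ≤ N := by omega
  let I : GI ι :=
    { n := n, W := W, w := w, a := a, b := b, x := x, Ob := Ob, Bd := Bd
      hW := hW, hw := hw, hab := hab, hbn := hbn, hx := hx, hd := hd
      h0 := hB0 (by simp)
      hBW := hBW
      hOb := fun o ho => ⟨hB0 (by
        rw [mem_insert, mem_union]; right; left; exact mem_image_of_mem _ ho), hB0 (by
        rw [mem_insert, mem_union]; right; right; exact mem_image.2 ⟨o, ho, rfl⟩)⟩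
      hP := fun i h1 h2 h3 => by
        obtain ⟨i0, g1, g2, g3⟩ := hBP i ⟨h1, h2⟩ h3
        exact ⟨i0, g1.1, g1.2, g2, g3⟩ }
  have hnb : ∀ i, i ∉ Ob → w i * A ≤ W := by
    intro i hi
    by_contra hcon
    apply hi
    rw [hObdef, mem_union]
    right
    rw [hbig, mem_filter]
    exact ⟨mem_univ _, by omega⟩
  set Z0 : Finset ι := univ.filter fun i => i ∉ Ob ∧ W < w i * (A * D) with hZ0
  have hZ0S : ∑ i ∈ Z0, w i ≤ S := by
    apply Finset.sum_le_sum_of_subset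
    intro i hi
    rw [hZ0, mem_filter] at hi
    rw [mem_filter]
    exact ⟨mem_univ _, (Nat.mul_le_mul_left _ hA'A).trans (hnb i hi.2.1), hi.2.2⟩
  have hineq : P * (∑ i ∈ Z0, w i + Bd.card * n * (W / (A * D)) +
        Bd.card * (n * (n + 1)) * (4 * P * (W / (A * D))) + 2 * Bd.card * (W / A)) +
        4 * Bd.card * (W / A) < W := by
    set ν := W / (A * D) with hν
    set V := W / A with hV
    have n1 : A * D * ν ≤ W := Nat.mul_div_le _ _
    have n2 : A * V ≤ W := Nat.mul_div_le _ _
    have m1 : E * (∑ i ∈ Z0, w i) ≤ n * W := (Nat.mul_le_mul_left _ hZ0S).trans hk'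
    have m2 : E * (Bd.card * V) ≤ c1 * W := by
      calc E * (Bd.card * V) = (Bd.card * E) * V := by ring
        _ ≤ (c1 * A) * V := Nat.mul_le_mul_right _ hBE
        _ = c1 * (A * V) := by ring
        _ ≤ c1 * W := Nat.mul_le_mul_left _ n2
    have m3 : E * (Bd.card * c2 * ν) ≤ c1 * W := by
      calc E * (Bd.card * c2 * ν) = (Bd.card * E) * (c2 * ν) := by ring
        _ ≤ (c1 * A) * (D * ν) := Nat.mul_le_mul hBE (Nat.mul_le_mul_right _ (by omega))
        _ = c1 * (A * D * ν) := by ring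
        _ ≤ c1 * W := Nat.mul_le_mul_left _ n1
    have e1 : P * (∑ i ∈ Z0, w i + Bd.card * n * ν +
        Bd.card * (n * (n + 1)) * (4 * P * ν) + 2 * Bd.card * V) + 4 * Bd.card * V =
        P * (∑ i ∈ Z0, w i + Bd.card * c2 * ν + 2 * (Bd.card * V)) + 4 * (Bd.card * V) := by
      rw [hc2, hT]; ring
    rw [e1]
    apply Nat.lt_of_mul_lt_mul_left (a := E)
    calc E * (P * (∑ i ∈ Z0, w i + Bd.card * c2 * ν + 2 * (Bd.card * V)) + 4 * (Bd.card * V))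
        = P * (E * (∑ i ∈ Z0, w i) + E * (Bd.card * c2 * ν) + 2 * (E * (Bd.card * V))) +
          4 * (E * (Bd.card * V)) := by ring
      _ ≤ P * (n * W + c1 * W + 2 * (c1 * W)) + 4 * (c1 * W) := by
        have := Nat.mul_le_mul_left P (add_le_add (add_le_add m1 m3) (Nat.mul_le_mul_left 2 m2))
        omega
      _ = (P * (n + 3 * c1) + 4 * c1) * W := by ring
      _ < E * W := by
        apply Nat.mul_lt_mul_of_pos_right _ hW
        omega
  obtain ⟨c, X, Y, L, Hh, r1, r2, r3, r4, r5⟩ := I.core hA0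
    (fun i hi => by rw [mul_comm]; exact hnb i hi) Z0 (W / (A * D)) (by
      intro i hi hz _
      rw [Nat.le_div_iff_mul_le (by positivity)]
      by_contra hcon
      apply hz
      rw [hZ0, mem_filter]
      exact ⟨mem_univ _, hi, not_le.1 hcon⟩)
    (by
      have : I.Pn = P := by rw [hP]; rfl
      rw [this]
      exact hineq)
  obtain ⟨pos, p1, p2⟩ := exists_prefix w c
  refine ⟨Lab ι, c, univ.image c, X, Y, L, Hh, fun i => X (c i) + pos i, fun i => Y (c i),
    ?_, ?_, ?_, ?_, ?_, ?_, ?_⟩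
  · refine r5.trans ?_
    have : I.Pn = P := by rw [hP]; rfl
    rw [this]
    show Ob.card + Bd.card * n + Bd.card * (n * (n + 1)) + Bd.card * (n * (n + 1)) * (4 * P) + Bd.card ≤ _
    rw [← hT]
    gcongr
  · intro i; exact mem_image_of_mem _ (mem_univ _)
  · intro k hk
    rw [mem_image] at hk
    obtain ⟨i, -, rfl⟩ := hk
    exact r1 i
  · intro k hk k' hk' hne
    rw [mem_image] at hk hk'
    obtain ⟨i, -, rfl⟩ := hk
    obtain ⟨j, -, rfl⟩ := hk'
    exact r3 i j hne
  · intro i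
    have h1 := p2 i
    have h2 : ∑ j ∈ univ.filter (fun j => c j = c i), w j ≤ L (c i) := by
      convert (r2 i).1
    have h3 : b i - a i ≤ Hh (c i) := (r2 i).2
    dsimp only
    have h4 : pos i + w i ≤ L (c i) := le_trans (by convert h1) h2
    omega
  · intro i j hij hc
    have := p1 i j hij hc
    dsimp only
    rw [hc]; omega
  · intro i hi j hj
    exact r4 i (by show i ∈ Ob; rw [hObdef, mem_union]; exact Or.inl hi) j hj

end SCP

namespace SCP
open Finset
set_option linter.unusedSectionVars false

theorem exists_groups {ι : Type} [Fintype ι] (w h : ι → ℕ) (Q hm : ℕ) (hQ : 0 < Q)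
    (hh : ∀ i, h i ≤ hm) :
    ∃ gr : ι → ℕ, (∀ i j, gr i < gr j → w j ≤ w i) ∧
      (∀ k, ∑ i ∈ univ.filter (fun i => gr i = k), h i ≤ Q + hm) ∧
      (∀ k j, k < gr j → Q ≤ ∑ i ∈ univ.filter (fun i => gr i = k), h i + hm) ∧
      ∀ i, gr i * Q ≤ ∑ i, h i := by
  let M := ∑ i, w i
  have hM : ∀ i, w i ≤ M := fun i => Finset.single_le_sum (f := w) (fun _ _ => Nat.zero_le _) (mem_univ i)
  let f : ι → ℕ ×ₗ ℕ := fun i => toLex (M - w i, (Fintype.equivFin ι i).val)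
  have finj : ∀ i j, f i = f j → i = j := by
    intro i j hij
    have : (M - w i, (Fintype.equivFin ι i).val) = (M - w j, (Fintype.equivFin ι j).val) :=
      toLex.injective hij
    have h2 := (Prod.mk.injEq _ _ _ _ ▸ this).2
    exact (Fintype.equivFin ι).injective (Fin.ext h2)
  let s : ι → ℕ := fun i => ∑ j ∈ univ.filter (fun j => f j < f i), h j
  have hs : ∀ i j, f j < f i → s j + h j ≤ s i := by
    intro i j hij
    have hn : j ∉ univ.filter (fun j' => f j' < f j) := by simp
    show (∑ j' ∈ univ.filter (fun j' => f j' < f j), h j') + h j ≤ _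
    rw [add_comm, ← Finset.sum_insert hn]
    apply Finset.sum_le_sum_of_subset
    intro j' hj'
    rw [mem_insert, mem_filter] at hj'
    rw [mem_filter]
    refine ⟨mem_univ _, ?_⟩
    rcases hj' with rfl | h'
    · exact hij
    · exact h'.2.trans hij
  have hsd : ∀ i j, i ≠ j → s i + h i ≤ s j ∨ s j + h j ≤ s i := by
    intro i j hij
    rcases lt_trichotomy (f i) (f j) with h' | h' | h'
    · exact Or.inl (hs _ _ h')
    · exact absurd (finj _ _ h') hij
    · exact Or.inr (hs _ _ h')
  refine ⟨fun i => s i / Q, ?_, ?_, ?_, ?_⟩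
  · intro i j hij
    have h1 : s i < s j := by
      by_contra hcon
      have := Nat.div_le_div_right (c := Q) (not_lt.1 hcon)
      dsimp only at hij
      omega
    have h2 : ¬ f j < f i := fun h' => by have := hs _ _ h'; omega
    have h3 := not_lt.1 h2
    simp only [f, Prod.Lex.toLex_le_toLex] at h3
    have := hM i
    have := hM j
    omega
  · intro k
    have := sum_len_le (univ.filter (fun i => s i / Q = k)) h s (Finset.Ico (k * Q) (k * Q + (Q + hm)))
      (by
        intro i hi z h1 h2
        rw [mem_filter] at hi
        have h3 := hi.2
        have h4 := hh i
        have h5 := Nat.div_mul_le_self (s i) Q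
        have h6 := Nat.lt_div_mul_add hQ (a := s i)
        rw [h3] at h5 h6
        rw [Finset.mem_Ico]
        omega)
      (fun i _ j _ hij => hsd i j hij)
    simpa using this
  · intro k j hkj
    obtain ⟨i, hi, hmin⟩ := Finset.exists_min_image (univ.filter fun i => k < s i / Q) f
      ⟨j, by rw [mem_filter]; exact ⟨mem_univ _, hkj⟩⟩
    rw [mem_filter] at hi
    have h1 : (k + 1) * Q ≤ s i := (Nat.le_div_iff_mul_le hQ).1 hi.2
    have h2 : s i ≤ ∑ j ∈ univ.filter (fun j => s j / Q ≤ k), h j := by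
      apply Finset.sum_le_sum_of_subset
      intro j' hj'
      rw [mem_filter] at hj' ⊢
      refine ⟨mem_univ _, ?_⟩
      by_contra hcon
      have := hmin j' (by rw [mem_filter]; exact ⟨mem_univ _, not_le.1 hcon⟩)
      exact absurd hj'.2 (not_lt.2 this)
    have h3 : ∑ j ∈ univ.filter (fun j => s j / Q ≤ k), h j ≤
        ∑ j ∈ univ.filter (fun j => s j / Q < k), h j +
        ∑ j ∈ univ.filter (fun j => s j / Q = k), h j := by
      refine le_trans (Finset.sum_le_sum_of_subset ?_) (GI.sum_union_le' _ _ _)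
      intro j' hj'
      rw [mem_filter] at hj'
      rw [mem_union, mem_filter, mem_filter]
      have := lt_or_eq_of_le hj'.2
      simp only [mem_univ, true_and]
      exact this
    have h4 : ∑ j ∈ univ.filter (fun j => s j / Q < k), h j ≤ k * Q + hm := by
      have := sum_len_le (univ.filter (fun i => s i / Q < k)) h s (Finset.range (k * Q + hm))
        (by
          intro i hi z h1 h2
          rw [mem_filter, Nat.div_lt_iff_lt_mul hQ] at hi
          have h4 := hh i
          rw [Finset.mem_range]
          omega)
        (fun i _ j _ hij => hsd i j hij)
      simpa using this
    have h5 : (k + 1) * Q = k * Q + Q := by ring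
    dsimp only
    omega
  · intro i
    refine (Nat.div_mul_le_self _ _).trans ?_
    exact Finset.sum_le_sum_of_subset (Finset.subset_univ _)

end SCP

namespace SCP
open Finset
set_option linter.unusedSectionVars false

theorem exists_cells (g : ℕ) (key : ℕ → ℕ) : ∃ st : ℕ → ℕ,
    (∀ t, st t + ((range g).filter fun y => key y = t).card ≤ g) ∧
    ∀ t t', t ≠ t' → st t + ((range g).filter fun y => key y = t).card ≤ st t' ∨
      st t' + ((range g).filter fun y => key y = t').card ≤ st t := by
  have h1 : ∀ t, ((range g).filter fun y => key y < t).card +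
      ((range g).filter fun y => key y = t).card = ((range g).filter fun y => key y < t + 1).card := by
    intro t
    rw [← Finset.card_union_of_disjoint]
    · congr 1
      ext y
      simp only [mem_union, mem_filter]
      have := Nat.lt_succ_iff_lt_or_eq (m := key y) (n := t)
      tauto
    · rw [Finset.disjoint_left]
      intro y hy hy'
      rw [mem_filter] at hy hy'
      omega
  have h2 : ∀ t t', t < t' → ((range g).filter fun y => key y < t + 1).card ≤
      ((range g).filter fun y => key y < t').card := by
    intro t t' htt
    apply Finset.card_le_card
    intro y hy
    rw [mem_filter] at hy ⊢
    exact ⟨hy.1, by omega⟩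
  refine ⟨fun t => ((range g).filter fun y => key y < t).card, ?_, ?_⟩
  · intro t
    dsimp only
    rw [h1]
    exact (Finset.card_filter_le _ _).trans (by simp)
  · intro t t' hne
    dsimp only
    rw [h1, h1]
    rcases lt_or_gt_of_ne hne with h | h
    · exact Or.inl (h2 _ _ h)
    · exact Or.inr (h2 _ _ h)

theorem h_lemma (e t : ℕ) (ht : 0 < t) : ∃ Θ K : ℕ, ∀ (W B g : ℕ), 0 < W → B ≤ W →
    ∀ (ι : Type) [Fintype ι] (w h x y : ι → ℕ), (∀ i, 0 < h i) →
    (∀ i, x i + w i ≤ B ∧ y i + h i ≤ g) →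
    (∀ i j, i ≠ j → x i + w i ≤ x j ∨ x j + w j ≤ x i ∨ y i + h i ≤ y j ∨ y j + h j ≤ y i) →
    (∀ i, W < e * w i) → (∀ i, Θ * h i ≤ g) →
    ∃ (lost : Finset ι) (κ : Type) (c : ι → κ) (U : Finset κ) (X Y L Hh : κ → ℕ) (x' y' : ι → ℕ),
      t * ∑ i ∈ lost, h i ≤ g ∧ U.card ≤ K ∧ (∀ i, i ∉ lost → c i ∈ U) ∧
      (∀ k ∈ U, X k + L k ≤ B ∧ Y k + Hh k ≤ g) ∧
      (∀ k ∈ U, ∀ k' ∈ U, k ≠ k' → X k + L k ≤ X k' ∨ X k' + L k' ≤ X k ∨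
        Y k + Hh k ≤ Y k' ∨ Y k' + Hh k' ≤ Y k) ∧
      (∀ i, i ∉ lost → X (c i) ≤ x' i ∧ x' i + w i ≤ X (c i) + L (c i) ∧
        Y (c i) ≤ y' i ∧ y' i + h i ≤ Y (c i) + Hh (c i)) ∧
      (∀ i j, i ∉ lost → j ∉ lost → i ≠ j → c i = c j →
        y' i + h i ≤ y' j ∨ y' j + h j ≤ y' i) := by
  obtain ⟨G, hG⟩ : ∃ G, G = 4 * t * e := ⟨_, rfl⟩
  obtain ⟨C, hC⟩ : ∃ C, C = e ^ (G + 1) * e := ⟨_, rfl⟩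
  obtain ⟨Θ, hΘ⟩ : ∃ Θ, Θ = 2 * t * (1 + (G + 1) * (2 + C)) := ⟨_, rfl⟩
  refine ⟨Θ, C, ?_⟩
  intro W B g hW hB ι _ w h x y hh hin hd hwide hthin
  rcases isEmpty_or_nonempty ι with hemp | ⟨⟨i₀⟩⟩
  · exact ⟨∅, Unit, fun _ => (), ∅, fun _ => 0, fun _ => 0, fun _ => 0, fun _ => 0, fun _ => 0,
      fun _ => 0, by simp, by simp, fun i => hemp.elim i, by simp, by simp, fun i => hemp.elim i,
      fun i => hemp.elim i⟩
  have hΘ0 : 2 * t ≤ Θ := by rw [hΘ]; exact Nat.le_mul_of_pos_right _ (by omega)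
  have hg : 2 * t ≤ g := by
    have h1 := hthin i₀
    have h2 : Θ ≤ Θ * h i₀ := Nat.le_mul_of_pos_right _ (hh i₀)
    omega
  obtain ⟨Q, hQ⟩ : ∃ Q, Q = g / (2 * t) := ⟨_, rfl⟩
  have hQ0 : 0 < Q := by rw [hQ]; exact Nat.div_pos hg (by omega)
  have hQ1 : 2 * t * Q ≤ g := by rw [hQ]; exact Nat.mul_div_le _ _
  have hQ2 : g ≤ 4 * t * Q := by
    have h1 : g < Q * (2 * t) + 2 * t := by rw [hQ]; exact Nat.lt_div_mul_add (by omega)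
    have h2 : 2 * t ≤ 2 * t * Q := Nat.le_mul_of_pos_right _ hQ0
    nlinarith
  obtain ⟨hm, hhm⟩ : ∃ hm, hm = g / Θ := ⟨_, rfl⟩
  have hΘpos : 0 < Θ := by omega
  have hm1 : ∀ i, h i ≤ hm := by
    intro i
    rw [hhm, Nat.le_div_iff_mul_le hΘpos, mul_comm]
    exact hthin i
  have hm2 : Θ * hm ≤ g := by rw [hhm]; exact Nat.mul_div_le _ _
  have htot : ∑ i, h i ≤ e * g := by
    have h1 := area_le univ w h x y B g (fun i _ => hin i) (fun i _ j _ hij => hd i j hij)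
    have h2 : ∑ i, W * h i ≤ ∑ i, e * (w i * h i) := by
      apply Finset.sum_le_sum
      intro i _
      rw [← mul_assoc]
      exact Nat.mul_le_mul_right _ (hwide i).le
    rw [← Finset.mul_sum, ← Finset.mul_sum] at h2
    have h3 : e * (∑ i, w i * h i) ≤ e * (W * g) :=
      Nat.mul_le_mul_left _ (h1.trans (Nat.mul_le_mul_right _ hB))
    have h4 : W * (∑ i, h i) ≤ W * (e * g) := by
      calc _ ≤ e * (W * g) := h2.trans h3
        _ = _ := by ring
    exact Nat.le_of_mul_le_mul_left h4 hW
  obtain ⟨gr, gr1, gr2, gr3, gr4⟩ := exists_groups w h Q hm hQ0 hm1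
  have grG : ∀ i, gr i ≤ G := by
    intro i
    have h1 := (gr4 i).trans (htot.trans (Nat.mul_le_mul_left e hQ2))
    have h2 : gr i * Q ≤ G * Q := by
      rw [hG]
      calc _ ≤ e * (4 * t * Q) := h1
        _ = _ := by ring
    exact Nat.le_of_mul_le_mul_right h2 hQ0
  -- rows
  let R : ℕ → Finset ι := fun z => univ.filter fun i => y i ≤ z ∧ z < y i + h i
  have mR : ∀ {z i}, i ∈ R z ↔ y i ≤ z ∧ z < y i + h i := by
    intro z i; simp only [R, mem_filter, mem_univ, true_and]
  have hRd : ∀ z i j, i ∈ R z → j ∈ R z → i ≠ j → x i + w i ≤ x j ∨ x j + w j ≤ x i := by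
    intro z i j hi hj hij
    rw [mR] at hi hj
    have := hd i j hij
    omega
  have hRc : ∀ z, (R z).card < e := by
    intro z
    have h1 := sum_len_le (R z) w x (range B) (by
      intro i _ z h1 h2
      have := (hin i).1
      rw [mem_range]; omega) (fun i hi j hj hij => hRd z i j hi hj hij)
    rw [Finset.card_range] at h1
    have h2 : (R z).card * W ≤ e * B := by
      calc (R z).card * W ≤ ∑ i ∈ R z, e * w i := by
            rw [← smul_eq_mul]
            exact Finset.card_nsmul_le_sum _ _ _ fun i _ => (hwide i).le
        _ = e * ∑ i ∈ R z, w i := by rw [Finset.mul_sum]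
        _ ≤ e * B := Nat.mul_le_mul_left _ h1
    rcases Finset.eq_empty_or_nonempty (R z) with h0 | h0
    · rw [h0, Finset.card_empty]
      have := hwide i₀
      by_contra hcon
      have : e = 0 := by omega
      subst this
      omega
    · have h3 : (R z).card * W < e * W := by
        calc (R z).card * W < ∑ i ∈ R z, e * w i := by
              rw [← smul_eq_mul, ← Finset.sum_const]
              exact Finset.sum_lt_sum_of_nonempty h0 fun i _ => hwide i
          _ = e * ∑ i ∈ R z, w i := by rw [Finset.mul_sum]
          _ ≤ e * B := Nat.mul_le_mul_left _ h1
          _ ≤ e * W := Nat.mul_le_mul_left _ hB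
      exact Nat.lt_of_mul_lt_mul_right h3
  let cnt : ℕ → Fin (G + 1) → ℕ := fun z k => ((R z).filter fun i => gr i = k.val).card
  let key : ℕ → ℕ := fun z => Encodable.encode (cnt z)
  have hkey : ∀ z z', key z = key z' → ∀ k ≤ G, ((R z).filter fun i => gr i = k).card =
      ((R z').filter fun i => gr i = k).card := by
    intro z z' hzz k hk
    have := Encodable.encode_injective hzz
    exact congrFun this ⟨k, by omega⟩
  obtain ⟨st, st1, st2⟩ := exists_cells g key
  let T : Finset ℕ := (range g).image key
  have hT : T.card ≤ e ^ (G + 1) := by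
    have : T ⊆ (Fintype.piFinset fun _ : Fin (G + 1) => range e).image Encodable.encode := by
      intro u hu
      rw [mem_image] at hu
      obtain ⟨z, _, rfl⟩ := hu
      apply mem_image_of_mem
      rw [Fintype.mem_piFinset]
      intro k
      rw [mem_range]
      exact lt_of_le_of_lt (Finset.card_filter_le _ _) (hRc z)
    refine (Finset.card_le_card this).trans (Finset.card_image_le.trans ?_)
    rw [Fintype.card_piFinset]
    simp
  have hrep : ∀ u, ∃ z, u ∈ T → key z = u := by
    intro u
    by_cases hu : u ∈ T
    · rw [mem_image] at hu
      obtain ⟨z, _, hz⟩ := hu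
      exact ⟨z, fun _ => hz⟩
    · exact ⟨0, fun h => absurd h hu⟩
  choose ρ hρ using hrep
  let ℓ : ℕ → ℕ := fun u => ((range g).filter fun z => key z = u).card
  let S : Finset (ℕ × ι) := T.biUnion fun u => (R (ρ u)).image fun i => (u, i)
  have mS : ∀ {u i}, (u, i) ∈ S ↔ u ∈ T ∧ i ∈ R (ρ u) := by
    intro u i
    simp only [S, mem_biUnion, mem_image, Prod.mk.injEq]
    constructor
    · rintro ⟨u', h1, i', h2, rfl, rfl⟩; exact ⟨h1, h2⟩
    · rintro ⟨h1, h2⟩; exact ⟨u, h1, i, h2, rfl, rfl⟩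
  have hS : S.card ≤ C := by
    refine (Finset.card_biUnion_le_card_mul _ _ e fun u _ =>
      Finset.card_image_le.trans (hRc _).le).trans ?_
    rw [hC]
    exact Nat.mul_le_mul_right _ hT
  have hcap : ∀ k ≤ G, ∑ i ∈ univ.filter (fun i => gr i = k), h i ≤
      ∑ u ∈ S.filter (fun u => gr u.2 = k), ℓ u.1 := by
    intro k hk
    have e1 : ∑ i ∈ univ.filter (fun i => gr i = k), h i =
        ∑ z ∈ range g, ((R z).filter fun i => gr i = k).card := by
      have a1 : ∀ i, h i = ∑ z ∈ range g, if i ∈ R z then 1 else 0 := by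
        intro i
        rw [← Finset.card_filter]
        have : (range g).filter (fun z => i ∈ R z) = Finset.Ico (y i) (y i + h i) := by
          ext z
          rw [mem_filter, mR, mem_range, Finset.mem_Ico]
          have := (hin i).2
          omega
        rw [this]; simp
      have a2 : ∀ z, ((R z).filter fun i => gr i = k).card =
          ∑ i ∈ univ.filter (fun i => gr i = k), if i ∈ R z then 1 else 0 := by
        intro z
        rw [← Finset.card_filter]
        congr 1
        ext i
        simp only [mem_filter, mem_univ, true_and]
        tauto
      rw [Finset.sum_congr rfl fun i _ => a1 i, Finset.sum_comm]
      exact (Finset.sum_congr rfl fun z _ => a2 z).symm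
    have e2 : ∑ z ∈ range g, ((R z).filter fun i => gr i = k).card =
        ∑ u ∈ T, ((R (ρ u)).filter fun i => gr i = k).card * ℓ u := by
      rw [← Finset.sum_fiberwise_of_maps_to (s := range g) (t := T) (g := key)
        (fun z hz => mem_image_of_mem _ hz)]
      apply Finset.sum_congr rfl
      intro u hu
      rw [Finset.sum_congr rfl (g := fun _ => ((R (ρ u)).filter fun i => gr i = k).card)]
      · rw [Finset.sum_const, smul_eq_mul, mul_comm]
      · intro z hz
        rw [mem_filter] at hz
        exact hkey _ _ (hz.2.trans (hρ u hu).symm) k hk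
    have e3 : S.filter (fun u => gr u.2 = k) =
        T.biUnion fun u => ((R (ρ u)).filter fun i => gr i = k).image fun i => (u, i) := by
      ext ⟨u, i⟩
      rw [mem_filter, mS]
      simp only [mem_biUnion, mem_image, mem_filter, Prod.mk.injEq]
      constructor
      · rintro ⟨⟨h1, h2⟩, h3⟩; exact ⟨u, h1, i, ⟨h2, h3⟩, rfl, rfl⟩
      · rintro ⟨u', h1, i', ⟨h2, h3⟩, rfl, rfl⟩; exact ⟨⟨h1, h2⟩, h3⟩
    rw [e1, e2, e3, Finset.sum_biUnion]
    · apply le_of_eq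
      apply Finset.sum_congr rfl
      intro u _
      rw [Finset.sum_image (by intro i _ j _ hij; exact (Prod.mk.inj hij).2)]
      dsimp only
      rw [Finset.sum_const, smul_eq_mul]
    · intro u _ u' _ hne
      rw [Function.onFun, Finset.disjoint_left]
      intro v hv hv'
      rw [mem_image] at hv hv'
      obtain ⟨i, _, rfl⟩ := hv
      obtain ⟨j, _, hj⟩ := hv'
      exact hne (Prod.mk.inj hj).1.symm
  -- filling
  have hfill : ∀ k, ∃ (lost : Finset ι) (c : ι → ℕ × ι), lost ⊆ univ.filter (fun i => gr i = k + 1) ∧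
      (∀ i ∈ univ.filter (fun i => gr i = k + 1), i ∉ lost → c i ∈ S.filter (fun u => gr u.2 = k)) ∧
      (∀ u ∈ S.filter (fun u => gr u.2 = k),
        ∑ i ∈ (univ.filter (fun i => gr i = k + 1)).filter (fun i => i ∉ lost ∧ c i = u), h i ≤ ℓ u.1) ∧
      ∑ i ∈ lost, h i ≤ (2 + C) * hm := by
    intro k
    have : Nonempty (ℕ × ι) := ⟨(0, i₀)⟩
    obtain ⟨lost, c, f1, f2, f3, f4⟩ := exists_fill h hm (fun u : ℕ × ι => ℓ u.1)
      (S.filter (fun u => gr u.2 = k)) (univ.filter (fun i => gr i = k + 1)) (fun i _ => hm1 i)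
    refine ⟨lost, c, f1, f2, by convert f3, ?_⟩
    rcases Finset.eq_empty_or_nonempty lost with h0 | ⟨j, hj⟩
    · rw [h0]; simp
    · have hj1 := f1 hj
      rw [mem_filter] at hj1
      rcases f4 with f4 | f4
      · rw [f4] at hj; simp at hj
      · have g1 := gr2 (k + 1)
        have g2 := gr3 k j (by omega)
        have g3 := hcap k (by have := grG j; omega)
        have g4 : (S.filter (fun u => gr u.2 = k)).card * hm ≤ C * hm :=
          Nat.mul_le_mul_right _ ((Finset.card_filter_le _ _).trans hS)
        have g5 : (2 + C) * hm = hm + hm + C * hm := by ring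
        omega
  choose lst cc f1 f2 f3 f4 using hfill
  let lost : Finset ι := univ.filter (fun i => gr i = 0) ∪ (range (G + 1)).biUnion lst
  let c : ι → ℕ × ι := fun i => cc (gr i - 1) i
  have hlost : ∀ i, i ∉ lost → 0 < gr i ∧ i ∉ lst (gr i - 1) := by
    intro i hi
    simp only [lost, mem_union, mem_filter, mem_univ, true_and, mem_biUnion, mem_range] at hi
    push Not at hi
    refine ⟨by omega, hi.2 _ ?_⟩
    have := grG i
    omega
  have hcS : ∀ i, i ∉ lost → c i ∈ S ∧ gr (c i).2 + 1 = gr i := by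
    intro i hi
    obtain ⟨h1, h2⟩ := hlost i hi
    have := f2 (gr i - 1) i (by rw [mem_filter]; exact ⟨mem_univ _, by omega⟩) h2
    rw [mem_filter] at this
    refine ⟨this.1, ?_⟩
    have h3 : gr (c i).2 = gr i - 1 := this.2
    omega
  let c' : ι → Option (ℕ × ι) := fun i => if i ∈ lost then none else some (c i)
  obtain ⟨pos, p1, p2⟩ := exists_prefix h c'
  have hpos : ∀ i, i ∉ lost → pos i + h i ≤ ℓ (c i).1 := by
    intro i hi
    have p2' : pos i + h i ≤ ∑ j ∈ univ.filter (fun j => c' j = c' i), h j := by convert p2 i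
    refine p2'.trans ?_
    obtain ⟨h1, h2⟩ := hlost i hi
    obtain ⟨h3, h4⟩ := hcS i hi
    refine le_trans (Finset.sum_le_sum_of_subset ?_) (f3 (gr i - 1) (c i) (by
      rw [mem_filter]; exact ⟨h3, by omega⟩))
    intro j hj
    rw [mem_filter] at hj
    simp only [c', if_neg hi] at hj
    have hjl : j ∉ lost := by
      intro hcon
      rw [if_pos hcon] at hj
      simp at hj
    rw [if_neg hjl] at hj
    have hcj : c j = c i := by simpa using hj
    have h5 := (hcS j hjl).2
    rw [hcj, h4] at h5
    have h6 := (hlost j hjl).2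
    have hcj' : cc (gr j - 1) j = c i := hcj
    rw [← h5] at h6 hcj'
    rw [mem_filter, mem_filter]
    exact ⟨⟨mem_univ _, by omega⟩, h6, hcj'⟩
  refine ⟨lost, ℕ × ι, c, S, fun u => x u.2, fun u => st u.1, fun u => w u.2, fun u => ℓ u.1,
    fun i => x (c i).2, fun i => st (c i).1 + pos i, ?_, hS, fun i hi => (hcS i hi).1, ?_, ?_, ?_, ?_⟩
  · have b1 : ∑ i ∈ lost, h i ≤ (Q + hm) + (G + 1) * ((2 + C) * hm) := by
      refine (GI.sum_union_le' _ _ _).trans (add_le_add (gr2 0) ?_)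
      refine (GI.sum_biUnion_le' _ _ _).trans ?_
      refine (Finset.sum_le_card_nsmul _ _ ((2 + C) * hm) fun k _ => f4 k).trans ?_
      simp
    have b2 : 2 * (t * ∑ i ∈ lost, h i) ≤ 2 * g := by
      calc 2 * (t * ∑ i ∈ lost, h i) ≤ 2 * (t * ((Q + hm) + (G + 1) * ((2 + C) * hm))) := by gcongr
        _ = 2 * t * Q + (2 * t * (1 + (G + 1) * (2 + C))) * hm := by ring
        _ = 2 * t * Q + Θ * hm := by rw [hΘ]
        _ ≤ 2 * g := by omega
    omega
  · rintro ⟨u, i⟩ hu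
    exact ⟨(hin i).1, st1 u⟩
  · rintro ⟨u, i⟩ hu ⟨u', i'⟩ hu' hne
    dsimp only
    by_cases huu : u = u'
    · subst huu
      have hii : i ≠ i' := by rintro rfl; exact hne rfl
      have := hRd _ i i' (mS.1 hu).2 (mS.1 hu').2 hii
      omega
    · have : st u + ℓ u ≤ st u' ∨ st u' + ℓ u' ≤ st u := st2 u u' huu
      omega
  · intro i hi
    dsimp only
    have h1 := hpos i hi
    have h2 := gr1 (c i).2 i (by have := (hcS i hi).2; omega)
    omega
  · intro i j hi hj hij hcc
    dsimp only
    have := p1 i j hij (by simp only [c', if_neg hi, if_neg hj, hcc])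
    rw [hcc]; omega

end SCP

set_option linter.unusedSectionVars false
namespace SCP
open Finset

lemma renumber {κ : Type} [Nonempty κ] (U : Finset κ) :
    ∃ (f : κ → ℕ) (φ : ℕ → κ), (∀ k ∈ U, f k < U.card ∧ φ (f k) = k) ∧
      (∀ n < U.card, φ n ∈ U ∧ f (φ n) = n) := by
  let f : κ → ℕ := fun k => if h : k ∈ U then (U.equivFin ⟨k, h⟩ : ℕ) else 0
  let φ : ℕ → κ := fun n => if h : n < U.card then (U.equivFin.symm ⟨n, h⟩ : κ) else Classical.arbitrary κ
  refine ⟨f, φ, ?_, ?_⟩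
  · intro k hk
    have h1 : f k = U.equivFin ⟨k, hk⟩ := by simp only [f, dif_pos hk]
    have h2 : f k < U.card := by rw [h1]; exact (U.equivFin ⟨k, hk⟩).2
    refine ⟨h2, ?_⟩
    simp only [φ, dif_pos h2]
    have : (⟨f k, h2⟩ : Fin U.card) = U.equivFin ⟨k, hk⟩ := Fin.ext h1
    rw [this, Equiv.symm_apply_apply]
  · intro n hn
    have h1 : φ n = U.equivFin.symm ⟨n, hn⟩ := by simp only [φ, dif_pos hn]
    have h2 : φ n ∈ U := by rw [h1]; exact (U.equivFin.symm ⟨n, hn⟩).2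
    refine ⟨h2, ?_⟩
    simp only [f, dif_pos h2]
    have : (⟨φ n, h2⟩ : {x // x ∈ U}) = U.equivFin.symm ⟨n, hn⟩ := Subtype.ext h1
    rw [this, Equiv.apply_symm_apply]

/-- Finset version of `h_lemma` with numerical labels. -/
theorem h_lemma' (e t : ℕ) (ht : 0 < t) : ∃ Θ K : ℕ, ∀ W B g : ℕ, 0 < W → B ≤ W →
    ∀ (ι : Type) (s : Finset ι) (w h x y : ι → ℕ), (∀ i ∈ s, 0 < h i) →
    (∀ i ∈ s, x i + w i ≤ B ∧ y i + h i ≤ g) →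
    (∀ i ∈ s, ∀ j ∈ s, i ≠ j → x i + w i ≤ x j ∨ x j + w j ≤ x i ∨ y i + h i ≤ y j ∨ y j + h j ≤ y i) →
    (∀ i ∈ s, W < e * w i) → (∀ i ∈ s, Θ * h i ≤ g) →
    ∃ (A : Finset ι) (c : ι → ℕ) (U : Finset ℕ) (X Y L Hh : ℕ → ℕ) (x' y' : ι → ℕ),
      t * ∑ i ∈ s \ A, h i ≤ g ∧ U.card ≤ K ∧ A ⊆ s ∧ (∀ i ∈ A, c i ∈ U) ∧
      (∀ k ∈ U, X k + L k ≤ B ∧ Y k + Hh k ≤ g) ∧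
      (∀ k ∈ U, ∀ k' ∈ U, k ≠ k' → X k + L k ≤ X k' ∨ X k' + L k' ≤ X k ∨
        Y k + Hh k ≤ Y k' ∨ Y k' + Hh k' ≤ Y k) ∧
      (∀ i ∈ A, X (c i) ≤ x' i ∧ x' i + w i ≤ X (c i) + L (c i) ∧
        Y (c i) ≤ y' i ∧ y' i + h i ≤ Y (c i) + Hh (c i)) ∧
      (∀ i ∈ A, ∀ j ∈ A, i ≠ j → c i = c j → y' i + h i ≤ y' j ∨ y' j + h j ≤ y' i) := by
  obtain ⟨Θ, K, HH⟩ := h_lemma e t ht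
  refine ⟨Θ, K, ?_⟩
  intro W B g hW hB ι s w h x y h1 h2 h3 h4 h5
  rcases s.eq_empty_or_nonempty with h0 | ⟨i₀, hi₀⟩
  · refine ⟨∅, fun _ => 0, ∅, fun _ => 0, fun _ => 0, fun _ => 0, fun _ => 0, fun _ => 0, fun _ => 0, ?_⟩
    simp [h0]
  obtain ⟨lost, κ, c, U, X, Y, L, Hh, x', y', a1, a2, a3, a4, a5, a6, a7⟩ :=
    HH W B g hW hB {i // i ∈ s} (fun i => w i) (fun i => h i) (fun i => x i) (fun i => y i)
      (fun i => h1 i i.2) (fun i => h2 i i.2)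
      (fun i j hij => h3 i i.2 j j.2 (fun hh => hij (Subtype.ext hh)))
      (fun i => h4 i i.2) (fun i => h5 i i.2)
  have : Nonempty κ := ⟨c ⟨i₀, hi₀⟩⟩
  have : Nonempty {i // i ∈ s} := ⟨⟨i₀, hi₀⟩⟩
  obtain ⟨f, φ, f1, f2⟩ := renumber U
  let q : ι → {i // i ∈ s} := fun i => if hi : i ∈ s then ⟨i, hi⟩ else ⟨i₀, hi₀⟩
  have hq : ∀ i ∈ s, (q i : ι) = i := by
    intro i hi; simp only [q, dif_pos hi]
  let A : Finset ι := s.filter fun i => q i ∉ lost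
  have hA : ∀ i ∈ A, i ∈ s ∧ (q i : ι) = i ∧ q i ∉ lost := by
    intro i hi
    have := (mem_filter.1 hi)
    exact ⟨this.1, hq i this.1, this.2⟩
  have hc : ∀ i ∈ A, φ (f (c (q i))) = c (q i) := fun i hi => (f1 _ (a3 _ (hA i hi).2.2)).2
  refine ⟨A, fun i => f (c (q i)), range U.card, fun n => X (φ n), fun n => Y (φ n), fun n => L (φ n),
    fun n => Hh (φ n), fun i => x' (q i), fun i => y' (q i), ?_, by simpa using a2, filter_subset _ _,
    ?_, ?_, ?_, ?_, ?_⟩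
  · refine le_trans (Nat.mul_le_mul_left _ ?_) a1
    have : s \ A ⊆ lost.image (fun i : {i // i ∈ s} => i.1) := by
      intro i hi
      rw [mem_sdiff, mem_filter] at hi
      rw [mem_image]
      refine ⟨q i, ?_, hq i hi.1⟩
      by_contra hcon
      exact hi.2 ⟨hi.1, hcon⟩
    refine (Finset.sum_le_sum_of_subset this).trans ?_
    rw [Finset.sum_image (by intro i _ j _ hij; exact Subtype.ext hij)]
  · intro i hi
    rw [mem_range]
    exact (f1 _ (a3 _ (hA i hi).2.2)).1
  · intro k hk
    exact a4 _ (f2 k (mem_range.1 hk)).1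
  · intro k hk k' hk' hne
    refine a5 _ (f2 k (mem_range.1 hk)).1 _ (f2 k' (mem_range.1 hk')).1 ?_
    intro hh
    apply hne
    rw [← (f2 k (mem_range.1 hk)).2, hh, (f2 k' (mem_range.1 hk')).2]
  · intro i hi
    have := a6 (q i) (hA i hi).2.2
    dsimp only
    rw [hc i hi]
    rw [(hA i hi).2.1] at this
    exact this
  · intro i hi j hj hne hcc
    have := a7 (q i) (q j) (hA i hi).2.2 (hA j hj).2.2 (by
      intro hh; apply hne; rw [← (hA i hi).2.1, hh, (hA j hj).2.1]) (by
      rw [← hc i hi, ← hc j hj]; exact congrArg φ hcc)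
    rw [(hA i hi).2.1, (hA j hj).2.1] at this
    exact this

/-- Finset version of `grid_lemma` with numerical labels, uniform in `n ≤ N`. -/
theorem grid_lemma' (N M : ℕ) : ∃ K : ℕ, ∀ n ≤ N, ∀ W : ℕ, 0 < W →
    ∀ (ι : Type) (s : Finset ι) (w a b x : ι → ℕ), (∀ i ∈ s, 0 < w i) → (∀ i ∈ s, a i < b i) →
    (∀ i ∈ s, b i ≤ n) → (∀ i ∈ s, x i + w i ≤ W) →
    (∀ i ∈ s, ∀ j ∈ s, i ≠ j → x i + w i ≤ x j ∨ x j + w j ≤ x i ∨ b i ≤ a j ∨ b j ≤ a i) →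
    ∀ F : Finset ι, F ⊆ s → F.card ≤ M →
    ∃ (c : ι → ℕ) (U : Finset ℕ) (X Y L Hh : ℕ → ℕ) (x' a' : ι → ℕ),
      U.card ≤ K ∧ (∀ i ∈ s, c i ∈ U) ∧
      (∀ k ∈ U, X k + L k ≤ W ∧ Y k + Hh k ≤ n + n / 3) ∧
      (∀ k ∈ U, ∀ k' ∈ U, k ≠ k' → X k + L k ≤ X k' ∨ X k' + L k' ≤ X k ∨
        Y k + Hh k ≤ Y k' ∨ Y k' + Hh k' ≤ Y k) ∧
      (∀ i ∈ s, X (c i) ≤ x' i ∧ x' i + w i ≤ X (c i) + L (c i) ∧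
        Y (c i) ≤ a' i ∧ a' i + (b i - a i) ≤ Y (c i) + Hh (c i)) ∧
      (∀ i ∈ s, ∀ j ∈ s, i ≠ j → c i = c j → x' i + w i ≤ x' j ∨ x' j + w j ≤ x' i) ∧
      (∀ i ∈ F, ∀ j ∈ s, c j = c i → j = i) := by
  have HH := fun n => grid_lemma n M
  choose Kf HH using HH
  refine ⟨∑ n ∈ range (N + 1), Kf n, ?_⟩
  intro n hn W hW ι s w a b x h1 h2 h3 h4 h5 F hF hFM
  rcases s.eq_empty_or_nonempty with h0 | ⟨i₀, hi₀⟩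
  · refine ⟨fun _ => 0, ∅, fun _ => 0, fun _ => 0, fun _ => 0, fun _ => 0, fun _ => 0, fun _ => 0, ?_⟩
    simp [h0]
  obtain ⟨κ, c, U, X, Y, L, Hh, x', a', a1, a2, a3, a4, a5, a6, a7⟩ :=
    HH n W hW {i // i ∈ s} (fun i => w i) (fun i => a i) (fun i => b i) (fun i => x i)
      (fun i => h1 i i.2) (fun i => h2 i i.2) (fun i => h3 i i.2) (fun i => h4 i i.2)
      (fun i j hij => h5 i i.2 j j.2 (fun hh => hij (Subtype.ext hh)))
      (F.subtype (fun i => i ∈ s)) (by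
        refine le_trans ?_ hFM
        rw [card_subtype]; exact card_filter_le _ _)
  have : Nonempty κ := ⟨c ⟨i₀, hi₀⟩⟩
  obtain ⟨f, φ, f1, f2⟩ := renumber U
  let q : ι → {i // i ∈ s} := fun i => if hi : i ∈ s then ⟨i, hi⟩ else ⟨i₀, hi₀⟩
  have hq : ∀ i ∈ s, (q i : ι) = i := by
    intro i hi; simp only [q, dif_pos hi]
  have hc : ∀ i ∈ s, φ (f (c (q i))) = c (q i) := fun i hi => (f1 _ (a2 _)).2
  refine ⟨fun i => f (c (q i)), range U.card, fun n => X (φ n), fun n => Y (φ n), fun n => L (φ n),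
    fun n => Hh (φ n), fun i => x' (q i), fun i => a' (q i), ?_, ?_, ?_, ?_, ?_, ?_, ?_⟩
  · rw [card_range]
    exact a1.trans (Finset.single_le_sum (f := Kf) (fun _ _ => Nat.zero_le _) (mem_range.2 (by omega)))
  · intro i hi
    rw [mem_range]
    exact (f1 _ (a2 _)).1
  · intro k hk
    exact a3 _ (f2 k (mem_range.1 hk)).1
  · intro k hk k' hk' hne
    refine a4 _ (f2 k (mem_range.1 hk)).1 _ (f2 k' (mem_range.1 hk')).1 ?_
    intro hh
    apply hne
    rw [← (f2 k (mem_range.1 hk)).2, hh, (f2 k' (mem_range.1 hk')).2]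
  · intro i hi
    have := a5 (q i)
    dsimp only
    rw [hc i hi]
    rw [hq i hi] at this
    exact this
  · intro i hi j hj hne hcc
    have := a6 (q i) (q j) (by
      intro hh; apply hne; rw [← hq i hi, hh, hq j hj]) (by
      rw [← hc i hi, ← hc j hj]; exact congrArg φ hcc)
    rw [hq i hi, hq j hj] at this
    exact this
  · intro i hi j hj hcc
    have := a7 (q i) (by rw [mem_subtype, hq i (hF hi)]; exact hi) (q j) (by
      rw [← hc i (hF hi), ← hc j hj]; exact congrArg φ hcc)
    rw [← hq i (hF hi), ← hq j hj, this]

/-- At most `e` disjoint wide intervals. -/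
lemma wide_card {ι : Type} (s : Finset ι) (l p : ι → ℕ) (W e : ℕ) (hT : ∀ i ∈ s, p i + l i ≤ W)
    (hd : ∀ i ∈ s, ∀ j ∈ s, i ≠ j → p i + l i ≤ p j ∨ p j + l j ≤ p i)
    (hw : ∀ i ∈ s, W < e * l i) : s.card ≤ e := by
  have h1 := sum_len_le s l p (range W) (fun i hi z _ h2 => by
    rw [mem_range]; have := hT i hi; omega) hd
  rw [card_range] at h1
  by_contra hcon
  have h2 : s.card * (W + 1) ≤ ∑ i ∈ s, e * l i := by
    have := Finset.card_nsmul_le_sum s (fun i => e * l i) (W + 1) (fun i hi => hw i hi)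
    simpa using this
  rw [← Finset.mul_sum] at h2
  have h3 : e * ∑ i ∈ s, l i ≤ e * W := Nat.mul_le_mul_left _ h1
  nlinarith
end SCP

set_option linter.unusedSectionVars false
namespace SCP
open Finset

/-- Walls of the horizontal boxes. -/
lemma walls {ι : Type} (W : ℕ) (w x a b r : ι → ℕ) (G T : Finset ι)
    (hG : ∀ j ∈ G, 0 < w j ∧ x j + w j ≤ W) (hT : ∀ i ∈ T, 0 < w i ∧ x i + w i ≤ W)
    (hd : ∀ i ∈ T, ∀ j ∈ G, a j ≤ r i → r i < b j → x j + w j ≤ x i ∨ x i + w i ≤ x j) :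
    ∃ l R : ι → ℕ, (∀ i ∈ T, l i ≤ x i ∧ x i + w i ≤ R i ∧ R i ≤ W) ∧
      (∀ i ∈ T, ∀ j ∈ T, r i = r j → (l i = l j ∧ R i = R j) ∨ R i ≤ l j ∨ R j ≤ l i) ∧
      (∀ i ∈ T, ∀ j ∈ G, a j ≤ r i → r i < b j → x j + w j ≤ l i ∨ R i ≤ x j) := by
  let SL : ι → Finset ι := fun i => G.filter fun j => (a j ≤ r i ∧ r i < b j) ∧ x j + w j ≤ x i
  let SR : ι → Finset ι := fun i => G.filter fun j => (a j ≤ r i ∧ r i < b j) ∧ x i + w i ≤ x j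
  let l : ι → ℕ := fun i => (SL i).sup fun j => x j + w j
  let R : ι → ℕ := fun i => W - (SR i).sup fun j => W - x j
  have hl : ∀ i, ∀ j ∈ SL i, x j + w j ≤ l i := fun i j hj =>
    Finset.le_sup (f := fun j => x j + w j) hj
  have hR : ∀ i, ∀ j ∈ SR i, R i ≤ x j := by
    intro i j hj
    have h1 : W - x j ≤ (SR i).sup fun j => W - x j := Finset.le_sup (f := fun j => W - x j) hj
    have h2 := hG j (mem_filter.1 hj).1
    simp only [R]
    omega
  refine ⟨l, R, ?_, ?_, ?_⟩
  · intro i hi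
    have h0 := hT i hi
    refine ⟨?_, ?_, Nat.sub_le _ _⟩
    · apply Finset.sup_le
      intro j hj
      exact (mem_filter.1 hj).2.2
    · have : ((SR i).sup fun j => W - x j) ≤ W - (x i + w i) := by
        apply Finset.sup_le
        intro j hj
        have := (mem_filter.1 hj).2.2
        omega
      simp only [R]
      omega
  · intro i hi i' hi' hr
    by_cases h1 : ∃ j ∈ SR i, j ∈ SL i'
    · obtain ⟨j, hj, hj'⟩ := h1
      right; left
      have := hR i j hj
      have := hl i' j hj'
      omega
    by_cases h2 : ∃ j ∈ SL i, j ∈ SR i'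
    · obtain ⟨j, hj, hj'⟩ := h2
      right; right
      have := hl i j hj
      have := hR i' j hj'
      omega
    left
    have hw := hT i hi
    have hw' := hT i' hi'
    push Not at h1 h2
    have e1 : SL i = SL i' := by
      apply Finset.filter_congr
      intro j hj
      rw [hr]
      apply and_congr_right
      rintro ⟨p1, p2⟩
      have d1 := hd i hi j hj (by omega) (by omega)
      have d2 := hd i' hi' j hj (by omega) (by omega)
      constructor
      · intro h3
        rcases d2 with d2 | d2
        · exact d2
        · exact absurd (mem_filter.2 ⟨hj, ⟨p1, p2⟩, d2⟩) (h2 j (mem_filter.2 ⟨hj, ⟨by omega, by omega⟩, h3⟩))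
      · intro h3
        rcases d1 with d1 | d1
        · exact d1
        · exact absurd (mem_filter.2 ⟨hj, ⟨p1, p2⟩, h3⟩) (h1 j (mem_filter.2 ⟨hj, ⟨by omega, by omega⟩, d1⟩))
    have e2 : SR i = SR i' := by
      apply Finset.filter_congr
      intro j hj
      rw [hr]
      apply and_congr_right
      rintro ⟨p1, p2⟩
      have d1 := hd i hi j hj (by omega) (by omega)
      have d2 := hd i' hi' j hj (by omega) (by omega)
      constructor
      · intro h3
        rcases d2 with d2 | d2
        · exact absurd (mem_filter.2 ⟨hj, ⟨p1, p2⟩, d2⟩) (h1 j (mem_filter.2 ⟨hj, ⟨by omega, by omega⟩, h3⟩))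
        · exact d2
      · intro h3
        rcases d1 with d1 | d1
        · exact absurd (mem_filter.2 ⟨hj, ⟨p1, p2⟩, h3⟩) (h2 j (mem_filter.2 ⟨hj, ⟨by omega, by omega⟩, d1⟩))
        · exact d1
    simp only [l, R, e1, e2, and_self]
  · intro i hi j hj h1 h2
    rcases hd i hi j hj h1 h2 with h | h
    · left; exact hl i j (mem_filter.2 ⟨hj, ⟨h1, h2⟩, h⟩)
    · right; exact hR i j (mem_filter.2 ⟨hj, ⟨h1, h2⟩, h⟩)

/-- Combining the grid lemma with the filling of the horizontal boxes. -/
theorem combine (e t N : ℕ) (ht : 0 < t) : ∃ Θ K : ℕ, ∀ W g n : ℕ, 0 < W → n ≤ N →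
    ∀ (ι : Type) (w h x a b r l R yy : ι → ℕ) (G T : Finset ι), Disjoint G T →
    (∀ i ∈ G, 0 < w i ∧ x i + w i ≤ W ∧ a i < b i ∧ b i ≤ n ∧ h i ≤ (b i - a i) * g) →
    (∀ i ∈ G, ∀ j ∈ G, i ≠ j → x i + w i ≤ x j ∨ x j + w j ≤ x i ∨ b i ≤ a j ∨ b j ≤ a i) →
    (∀ i ∈ T, 0 < w i ∧ 0 < h i ∧ l i ≤ x i ∧ x i + w i ≤ R i ∧ R i ≤ W ∧ r i < n ∧
      yy i + h i ≤ g ∧ W < e * w i ∧ Θ * h i ≤ g) →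
    (∀ i ∈ T, ∀ j ∈ T, r i = r j → (l i = l j ∧ R i = R j) ∨ R i ≤ l j ∨ R j ≤ l i) →
    (∀ i ∈ T, ∀ j ∈ G, a j ≤ r i → r i < b j → x j + w j ≤ l i ∨ R i ≤ x j) →
    (∀ i ∈ T, ∀ j ∈ T, i ≠ j → r i = r j →
      x i + w i ≤ x j ∨ x j + w j ≤ x i ∨ yy i + h i ≤ yy j ∨ yy j + h j ≤ yy i) →
    ∃ (A : Finset ι) (κ : Type) (c : ι → κ) (U : Finset κ) (vert : κ → Prop) (X Y L Hh : κ → ℕ)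
      (x' y' : ι → ℕ),
      t * ∑ i ∈ T \ A, h i ≤ n * e * g ∧ A ⊆ T ∧ U.card ≤ K ∧ (∀ i ∈ G ∪ A, c i ∈ U) ∧
      (∀ k ∈ U, X k + L k ≤ W ∧ Y k + Hh k ≤ (n + n / 3) * g) ∧
      (∀ k ∈ U, ∀ k' ∈ U, k ≠ k' → X k + L k ≤ X k' ∨ X k' + L k' ≤ X k ∨
        Y k + Hh k ≤ Y k' ∨ Y k' + Hh k' ≤ Y k) ∧
      (∀ i ∈ G ∪ A, X (c i) ≤ x' i ∧ x' i + w i ≤ X (c i) + L (c i) ∧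
        Y (c i) ≤ y' i ∧ y' i + h i ≤ Y (c i) + Hh (c i)) ∧
      (∀ i ∈ G ∪ A, ∀ j ∈ G ∪ A, i ≠ j → c i = c j →
        (vert (c i) → x' i + w i ≤ x' j ∨ x' j + w j ≤ x' i) ∧
        (¬ vert (c i) → y' i + h i ≤ y' j ∨ y' j + h j ≤ y' i)) := by
  obtain ⟨Θ, Kh, hh⟩ := h_lemma' e t ht
  obtain ⟨Kg, hg⟩ := grid_lemma' N (e * N)
  refine ⟨Θ, Kg + e * N * Kh, ?_⟩
  intro W g n hW hn ι w h x a b r l R yy G T hGT hG hGd hT hTl hTG hTd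
  let bx : ι → ℕ × ℕ × ℕ := fun i => (r i, l i, R i)
  let BX : Finset (ℕ × ℕ × ℕ) := T.image bx
  have hBX : ∀ p ∈ BX, ∃ i ∈ T, p = (r i, l i, R i) := by
    intro p hp
    obtain ⟨i, hi, rfl⟩ := mem_image.1 hp
    exact ⟨i, hi, rfl⟩
  have hBXd : ∀ p ∈ BX, ∀ p' ∈ BX, p ≠ p' → p.1 = p'.1 → p.2.2 ≤ p'.2.1 ∨ p'.2.2 ≤ p.2.1 := by
    intro p hp p' hp' hne hr
    obtain ⟨i, hi, rfl⟩ := hBX p hp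
    obtain ⟨j, hj, rfl⟩ := hBX p' hp'
    rcases hTl i hi j hj hr with hh | hh
    · exact absurd (by rw [Prod.mk.injEq, Prod.mk.injEq]; exact ⟨hr, hh⟩) hne
    · exact hh
  have hBXc : BX.card ≤ e * n := by
    have := Finset.card_le_mul_card_image_of_maps_to (s := BX) (t := range n) (f := fun p => p.1)
      (by
        intro p hp
        obtain ⟨i, hi, rfl⟩ := hBX p hp
        exact mem_range.2 (hT i hi).2.2.2.2.2.1) e (by
        intro r₀ _
        apply wide_card _ (fun p => p.2.2 - p.2.1) (fun p => p.2.1) W e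
        · intro p hp
          obtain ⟨i, hi, rfl⟩ := hBX p (mem_filter.1 hp).1
          have := hT i hi
          dsimp only
          omega
        · intro p hp p' hp' hne
          rw [mem_filter] at hp hp'
          have h1 := hBXd p hp.1 p' hp'.1 hne (by omega)
          obtain ⟨i, hi, rfl⟩ := hBX p hp.1
          obtain ⟨j, hj, rfl⟩ := hBX p' hp'.1
          have := hT i hi
          have := hT j hj
          dsimp only at h1 ⊢
          omega
        · intro p hp
          obtain ⟨i, hi, rfl⟩ := hBX p (mem_filter.1 hp).1
          have := hT i hi
          refine lt_of_lt_of_le this.2.2.2.2.2.2.2.1 (Nat.mul_le_mul_left _ ?_)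
          dsimp only
          omega)
    simpa using this
  have hBXN : BX.card ≤ e * N := hBXc.trans (Nat.mul_le_mul_left _ hn)
  -- grid lemma
  let s : Finset (ι ⊕ (ℕ × ℕ × ℕ)) := G.disjSum BX
  let F : Finset (ι ⊕ (ℕ × ℕ × ℕ)) := BX.map Function.Embedding.inr
  obtain ⟨cg, Ug, Xg, Yg, Lg, Hg, xg, ag, g1, g2, g3, g4, g5, g6, g7⟩ :=
    hg n hn W hW (ι ⊕ (ℕ × ℕ × ℕ)) s (Sum.elim w fun p => p.2.2 - p.2.1) (Sum.elim a fun p => p.1)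
      (Sum.elim b fun p => p.1 + 1) (Sum.elim x fun p => p.2.1)
      (by
        rintro (i | p) hi
        · exact (hG i (by simpa [s] using hi)).1
        · obtain ⟨i, hk, rfl⟩ := hBX p (by simpa [s] using hi)
          have := hT i hk
          simp only [Sum.elim_inr]
          omega)
      (by
        rintro (i | p) hi
        · exact (hG i (by simpa [s] using hi)).2.2.1
        · simp)
      (by
        rintro (i | p) hi
        · exact (hG i (by simpa [s] using hi)).2.2.2.1
        · obtain ⟨i, hk, rfl⟩ := hBX p (by simpa [s] using hi)
          have := hT i hk
          simp only [Sum.elim_inr]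
          omega)
      (by
        rintro (i | p) hi
        · exact (hG i (by simpa [s] using hi)).2.1
        · obtain ⟨i, hk, rfl⟩ := hBX p (by simpa [s] using hi)
          have := hT i hk
          simp only [Sum.elim_inr]
          omega)
      (by
        rintro (i | p) hi (j | p') hj hne
        · exact hGd i (by simpa [s] using hi) j (by simpa [s] using hj) (fun hh => hne (by rw [hh]))
        · obtain ⟨k, hk, rfl⟩ := hBX p' (by simpa [s] using hj)
          have h1 := hTG k hk i (by simpa [s] using hi)
          have := hT k hk
          simp only [Sum.elim_inr, Sum.elim_inl]
          omega
        · obtain ⟨k, hk, rfl⟩ := hBX p (by simpa [s] using hi)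
          have h1 := hTG k hk j (by simpa [s] using hj)
          have := hT k hk
          simp only [Sum.elim_inr, Sum.elim_inl]
          omega
        · have h1 := hBXd p (by simpa [s] using hi) p' (by simpa [s] using hj) (fun hh => hne (by rw [hh]))
          obtain ⟨i, hk, rfl⟩ := hBX p (by simpa [s] using hi)
          obtain ⟨j, hk', rfl⟩ := hBX p' (by simpa [s] using hj)
          have := hT i hk
          have := hT j hk'
          simp only [Sum.elim_inr]
          dsimp only at h1
          omega)
      F (by
        intro q hq
        obtain ⟨p, hp, rfl⟩ := mem_map.1 hq
        simpa [s] using hp) (by rw [card_map]; exact hBXN)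
  -- box filling
  have hfill : ∀ p ∈ BX, _ := fun p hp => hh W (p.2.2 - p.2.1) g hW (by
      obtain ⟨i, hi, rfl⟩ := hBX p hp
      have := hT i hi
      dsimp only; omega) ι (T.filter fun i => bx i = p) w h (fun i => x i - p.2.1) yy
      (fun i hi => (hT i (mem_filter.1 hi).1).2.1)
      (by
        intro i hi
        obtain ⟨h1, rfl⟩ := mem_filter.1 hi
        have := hT i h1
        simp only [bx]
        omega)
      (by
        intro i hi j hj hne
        obtain ⟨h1, rfl⟩ := mem_filter.1 hi
        obtain ⟨h2, h3⟩ := mem_filter.1 hj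
        simp only [bx, Prod.mk.injEq] at h3 ⊢
        have := hTd i h1 j h2 hne h3.1.symm
        have := hT i h1
        have := hT j h2
        omega)
      (fun i hi => (hT i (mem_filter.1 hi).1).2.2.2.2.2.2.2.1)
      (fun i hi => (hT i (mem_filter.1 hi).1).2.2.2.2.2.2.2.2)
  choose! AA cc UU XX YY LL HH xx y'' f1 f2 f3 f4 f5 f6 f7 f8 using hfill
  have sG : ∀ i ∈ G, (Sum.inl i : ι ⊕ (ℕ × ℕ × ℕ)) ∈ s := fun i hi => by simpa [s] using hi
  have sB : ∀ p ∈ BX, (Sum.inr p : ι ⊕ (ℕ × ℕ × ℕ)) ∈ s := fun p hp => by simpa [s] using hp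
  have sF : ∀ p ∈ BX, (Sum.inr p : ι ⊕ (ℕ × ℕ × ℕ)) ∈ F := fun p hp => by simpa [F] using hp
  have bB : ∀ i ∈ T, bx i ∈ BX := fun i hi => mem_image_of_mem _ hi
  have hbox : ∀ p ∈ BX, Xg (cg (Sum.inr p)) ≤ xg (Sum.inr p) ∧
      xg (Sum.inr p) + (p.2.2 - p.2.1) ≤ Xg (cg (Sum.inr p)) + Lg (cg (Sum.inr p)) ∧
      Yg (cg (Sum.inr p)) * g ≤ ag (Sum.inr p) * g ∧
      ag (Sum.inr p) * g + g ≤ Yg (cg (Sum.inr p)) * g + Hg (cg (Sum.inr p)) * g := by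
    intro p hp
    obtain ⟨q1, q2, q3, q4⟩ := g5 _ (sB p hp)
    simp only [Sum.elim_inr, Nat.add_sub_cancel_left] at q1 q2 q3 q4
    refine ⟨q1, q2, Nat.mul_le_mul_right _ q3, ?_⟩
    have := Nat.mul_le_mul_right g q4
    rw [add_mul, add_mul, one_mul] at this
    exact this
  have hgd : ∀ k ∈ Ug, ∀ k' ∈ Ug, k ≠ k' → Xg k + Lg k ≤ Xg k' ∨ Xg k' + Lg k' ≤ Xg k ∨
        Yg k * g + Hg k * g ≤ Yg k' * g ∨ Yg k' * g + Hg k' * g ≤ Yg k * g := by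
    intro k hk k' hk' hne
    rcases g4 k hk k' hk' hne with h1 | h1 | h1 | h1
    · exact Or.inl h1
    · exact Or.inr (Or.inl h1)
    · right; right; left; rw [← add_mul]; exact Nat.mul_le_mul_right _ h1
    · right; right; right; rw [← add_mul]; exact Nat.mul_le_mul_right _ h1
  have hgh : ∀ k ∈ Ug, Yg k * g + Hg k * g ≤ (n + n / 3) * g := by
    intro k hk
    rw [← add_mul]; exact Nat.mul_le_mul_right _ (g3 k hk).2
  let A : Finset ι := T.filter fun i => i ∈ AA (bx i)
  let c : ι → ℕ ⊕ ((ℕ × ℕ × ℕ) × ℕ) := fun i =>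
    if i ∈ G then Sum.inl (cg (Sum.inl i)) else Sum.inr (bx i, cc (bx i) i)
  let U1 : Finset ℕ := G.image fun i => cg (Sum.inl i)
  let U2 : Finset ((ℕ × ℕ × ℕ) × ℕ) := BX.biUnion fun p => (UU p).image fun k => (p, k)
  have hU1 : ∀ k ∈ U1, k ∈ Ug ∧ ∀ p ∈ BX, k ≠ cg (Sum.inr p) := by
    intro k hk
    obtain ⟨i, hi, rfl⟩ := mem_image.1 hk
    refine ⟨g2 _ (sG i hi), ?_⟩
    intro p hp hcon
    have := g7 _ (sF p hp) _ (sG i hi) hcon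
    simp at this
  have hU2 : ∀ q ∈ U2, q.1 ∈ BX ∧ q.2 ∈ UU q.1 := by
    intro q hq
    obtain ⟨p, hp, hq⟩ := mem_biUnion.1 hq
    obtain ⟨k, hk, rfl⟩ := mem_image.1 hq
    exact ⟨hp, hk⟩
  have hU2' : ∀ q : (ℕ × ℕ × ℕ) × ℕ, q.1 ∈ BX → q.2 ∈ UU q.1 → q ∈ U2 := by
    intro q h1 h2
    exact mem_biUnion.2 ⟨q.1, h1, mem_image.2 ⟨q.2, h2, rfl⟩⟩
  have hA : ∀ i ∈ A, i ∉ G ∧ i ∈ T ∧ bx i ∈ BX ∧ i ∈ AA (bx i) := by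
    intro i hi
    obtain ⟨h1, h2⟩ := mem_filter.1 hi
    exact ⟨fun h3 => Finset.disjoint_left.1 hGT h3 h1, h1, bB i h1, h2⟩
  let x' : ι → ℕ := fun i => if i ∈ G then xg (Sum.inl i) else xg (Sum.inr (bx i)) + xx (bx i) i
  let y' : ι → ℕ := fun i => if i ∈ G then ag (Sum.inl i) * g else ag (Sum.inr (bx i)) * g + y'' (bx i) i
  refine ⟨A, ℕ ⊕ ((ℕ × ℕ × ℕ) × ℕ), c, U1.disjSum U2, fun k => k.isLeft = true,
    Sum.elim Xg (fun q => xg (Sum.inr q.1) + XX q.1 q.2),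
    Sum.elim (fun k => Yg k * g) (fun q => ag (Sum.inr q.1) * g + YY q.1 q.2),
    Sum.elim Lg (fun q => LL q.1 q.2), Sum.elim (fun k => Hg k * g) (fun q => HH q.1 q.2),
    x', y', ?_, filter_subset _ _, ?_, ?_, ?_, ?_, ?_, ?_⟩
  · have h1 : T \ A ⊆ BX.biUnion fun p => (T.filter fun i => bx i = p) \ AA p := by
      intro i hi
      rw [mem_sdiff, mem_filter] at hi
      rw [mem_biUnion]
      refine ⟨bx i, bB i hi.1, ?_⟩
      rw [mem_sdiff, mem_filter]
      exact ⟨⟨hi.1, rfl⟩, fun h2 => hi.2 ⟨hi.1, h2⟩⟩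
    calc t * ∑ i ∈ T \ A, h i ≤ t * ∑ p ∈ BX, ∑ i ∈ (T.filter fun i => bx i = p) \ AA p, h i := by
          refine Nat.mul_le_mul_left _ ((Finset.sum_le_sum_of_subset h1).trans ?_)
          exact GI.sum_biUnion_le' _ _ _
      _ = ∑ p ∈ BX, t * ∑ i ∈ (T.filter fun i => bx i = p) \ AA p, h i := by rw [Finset.mul_sum]
      _ ≤ ∑ p ∈ BX, g := Finset.sum_le_sum fun p hp => by convert f1 p hp
      _ = BX.card * g := by simp
      _ ≤ n * e * g := by rw [mul_comm n e]; exact Nat.mul_le_mul_right _ hBXc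
  · rw [card_disjSum]
    apply add_le_add
    · refine (Finset.card_le_card ?_).trans g1
      intro k hk; exact (hU1 k hk).1
    · refine (Finset.card_biUnion_le_card_mul _ _ Kh ?_).trans (Nat.mul_le_mul_right _ hBXN)
      intro p hp
      exact Finset.card_image_le.trans (f2 p hp)
  · intro i hi
    rcases mem_union.1 hi with hi | hi
    · simp only [c, if_pos hi, inl_mem_disjSum]
      exact mem_image_of_mem _ hi
    · obtain ⟨h1, h2, h3, h4⟩ := hA i hi
      simp only [c, if_neg h1, inr_mem_disjSum]
      exact hU2' _ h3 (f4 _ h3 i h4)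
  · rintro (k | q) hk
    · rw [inl_mem_disjSum] at hk
      exact ⟨(g3 k (hU1 k hk).1).1, hgh k (hU1 k hk).1⟩
    · rw [inr_mem_disjSum] at hk
      obtain ⟨h1, h2⟩ := hU2 q hk
      have h3 := hbox _ h1
      have h4 := f5 _ h1 _ h2
      have h5 := g2 _ (sB _ h1)
      have h6 := (g3 _ h5).1
      have h7 := hgh _ h5
      simp only [Sum.elim_inr]
      omega
  · have key : ∀ k ∈ U1, ∀ q ∈ U2, Xg k + Lg k ≤ xg (Sum.inr q.1) + XX q.1 q.2 ∨
        xg (Sum.inr q.1) + XX q.1 q.2 + LL q.1 q.2 ≤ Xg k ∨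
        Yg k * g + Hg k * g ≤ ag (Sum.inr q.1) * g + YY q.1 q.2 ∨
        ag (Sum.inr q.1) * g + YY q.1 q.2 + HH q.1 q.2 ≤ Yg k * g := by
      intro k hk q hq
      obtain ⟨h1, h2⟩ := hU2 q hq
      have h3 := hbox _ h1
      have h4 := f5 _ h1 _ h2
      have h6 := hgd k (hU1 k hk).1 _ (g2 _ (sB _ h1)) ((hU1 k hk).2 _ h1)
      omega
    rintro (k | q) hk (k' | q') hk' hne
    · rw [inl_mem_disjSum] at hk hk'
      exact hgd k (hU1 k hk).1 k' (hU1 k' hk').1 (fun hh => hne (by rw [hh]))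
    · rw [inl_mem_disjSum] at hk
      rw [inr_mem_disjSum] at hk'
      exact key k hk q' hk'
    · rw [inl_mem_disjSum] at hk'
      rw [inr_mem_disjSum] at hk
      have := key k' hk' q hk
      simp only [Sum.elim_inr, Sum.elim_inl]
      omega
    · rw [inr_mem_disjSum] at hk hk'
      obtain ⟨p, k⟩ := q
      obtain ⟨p', k'⟩ := q'
      obtain ⟨h1, h2⟩ := hU2 _ hk
      obtain ⟨h1', h2'⟩ := hU2 _ hk'
      simp only [Sum.elim_inr]
      dsimp only at h1 h2 h1' h2'
      by_cases hp : p = p'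
      · subst hp
        have := f6 p h1 k h2 k' h2' (fun hh => hne (by rw [hh]))
        omega
      · have h3 := hbox _ h1
        have h4 := f5 _ h1 _ h2
        have h3' := hbox _ h1'
        have h4' := f5 _ h1' _ h2'
        have h6 := hgd _ (g2 _ (sB _ h1)) _ (g2 _ (sB _ h1')) (fun hh => by
          have := g7 _ (sF _ h1') _ (sB _ h1) hh
          exact hp (by simpa using this))
        omega
  · intro i hi
    rcases mem_union.1 hi with hi | hi
    · simp only [c, x', y', if_pos hi, Sum.elim_inl]
      obtain ⟨q1, q2, q3, q4⟩ := g5 _ (sG i hi)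
      simp only [Sum.elim_inl] at q1 q2 q3 q4
      refine ⟨q1, q2, Nat.mul_le_mul_right _ q3, ?_⟩
      have := Nat.mul_le_mul_right g q4
      rw [add_mul, add_mul] at this
      have := (hG i hi).2.2.2.2
      omega
    · obtain ⟨h1, h2, h3, h4⟩ := hA i hi
      simp only [c, x', y', if_neg h1, Sum.elim_inr]
      have := f7 _ h3 i h4
      omega
  · intro i hi j hj hne
    rcases mem_union.1 hi with hi | hi <;> rcases mem_union.1 hj with hj | hj
    · simp only [c, x', y', if_pos hi, if_pos hj, Sum.inl.injEq]
      intro hcc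
      refine ⟨fun _ => ?_, fun hv => absurd rfl hv⟩
      exact g6 _ (sG i hi) _ (sG j hj) (fun hh => hne (by simpa using hh)) hcc
    · obtain ⟨h1, h2, h3, h4⟩ := hA j hj
      simp only [c, if_pos hi, if_neg h1]
      intro hcc
      exact absurd hcc (by simp)
    · obtain ⟨h1, h2, h3, h4⟩ := hA i hi
      simp only [c, if_pos hj, if_neg h1]
      intro hcc
      exact absurd hcc (by simp)
    · obtain ⟨h1, h2, h3, h4⟩ := hA i hi
      obtain ⟨h1', h2', h3', h4'⟩ := hA j hj
      simp only [c, x', y', if_neg h1, if_neg h1', Sum.inr.injEq]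
      intro hcc
      obtain ⟨e1, e2⟩ := Prod.mk.inj hcc
      refine ⟨fun hv => absurd hv (by simp), fun _ => ?_⟩
      rw [← e1] at h4' e2 ⊢
      have := f8 _ h3 i h4 j h4' hne e2
      omega
end SCP

set_option linter.unusedSectionVars false
namespace SCP
open Finset

lemma ceil_ex (m z : ℕ) (hm : 0 < m) : ∃ a, z ≤ a * m ∧ a * m < z + m := by
  refine ⟨(z + m - 1) / m, ?_, ?_⟩
  · have := Nat.lt_div_mul_add (a := z + m - 1) hm
    omega
  · have := Nat.div_mul_le_self (z + m - 1) m
    omega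

lemma floor_ex (m z : ℕ) (hm : 0 < m) : ∃ a, a * m ≤ z ∧ z < a * m + m :=
  ⟨z / m, Nat.div_mul_le_self z m, Nat.lt_div_mul_add hm⟩

theorem row_lemma (e t β N : ℕ) (ht : 0 < t) (hβ : 0 < β) : ∃ Θ K : ℕ, ∀ W H g n : ℕ,
    0 < W → 0 < g → n ≤ N → (β + 1) * H ≤ n * (β * g) →
    ∀ (ι : Type) (w h x y : ι → ℕ) (G T : Finset ι), Disjoint G T →
    (∀ i ∈ G ∪ T, 0 < w i ∧ 0 < h i ∧ x i + w i ≤ W ∧ y i + h i ≤ H) →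
    (∀ i ∈ G ∪ T, ∀ j ∈ G ∪ T, i ≠ j →
      x i + w i ≤ x j ∨ x j + w j ≤ x i ∨ y i + h i ≤ y j ∨ y j + h j ≤ y i) →
    (∀ i ∈ G, 2 * (β * g) ≤ h i) →
    (∀ i ∈ T, W < e * w i ∧ Θ * h i ≤ g) →
    ∃ (A : Finset ι) (κ : Type) (c : ι → κ) (U : Finset κ) (vert : κ → Prop) (X Y L Hh : κ → ℕ)
      (x' y' : ι → ℕ),
      t * ∑ i ∈ T \ A, h i ≤ 2 * (n * e * g) ∧ A ⊆ T ∧ U.card ≤ K ∧ (∀ i ∈ G ∪ A, c i ∈ U) ∧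
      (∀ k ∈ U, X k + L k ≤ W ∧ Y k + Hh k ≤ (n + n / 3) * g) ∧
      (∀ k ∈ U, ∀ k' ∈ U, k ≠ k' → X k + L k ≤ X k' ∨ X k' + L k' ≤ X k ∨
        Y k + Hh k ≤ Y k' ∨ Y k' + Hh k' ≤ Y k) ∧
      (∀ i ∈ G ∪ A, X (c i) ≤ x' i ∧ x' i + w i ≤ X (c i) + L (c i) ∧
        Y (c i) ≤ y' i ∧ y' i + h i ≤ Y (c i) + Hh (c i)) ∧
      (∀ i ∈ G ∪ A, ∀ j ∈ G ∪ A, i ≠ j → c i = c j →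
        (vert (c i) → x' i + w i ≤ x' j ∨ x' j + w j ≤ x' i) ∧
        (¬ vert (c i) → y' i + h i ≤ y' j ∨ y' j + h j ≤ y' i)) := by
  obtain ⟨Θ, K, HH⟩ := combine e t N ht
  refine ⟨Θ + t, K, ?_⟩
  intro W H g n hW hg hn hnH ι w h x y G T hGT hin hd hG hT
  obtain ⟨m, hm⟩ : ∃ m, m = β * g := ⟨_, rfl⟩
  have hm0 : 0 < m := by rw [hm]; positivity
  rw [← hm] at hnH
  rw [← hm] at hG
  have hβ1 : 0 < β + 1 := by omega
  have mulmono : ∀ u v, u ≤ v → (β + 1) * u ≤ (β + 1) * v := fun u v huv => Nat.mul_le_mul_left _ huv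
  have mulinv : ∀ u v, (β + 1) * u ≤ (β + 1) * v → u ≤ v := fun u v huv =>
    Nat.le_of_mul_le_mul_left huv hβ1
  have minv : ∀ u v, u * m ≤ v * m → u ≤ v := fun u v huv => Nat.le_of_mul_le_mul_right huv hm0
  have mmono : ∀ u v, u ≤ v → u * m ≤ v * m := fun u v huv => Nat.mul_le_mul_right _ huv
  choose a ha1 ha2 using fun i => ceil_ex m ((β + 1) * y i) hm0
  choose q hq1 hq2 using fun i => ceil_ex g (h i) hg
  choose r hr1 hr2 using fun i => floor_ex m ((β + 1) * y i) hm0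
  choose base hb1 hb2 using fun i => ceil_ex (β + 1) (r i * m) hβ1
  have inG : ∀ i ∈ G, i ∈ G ∪ T := fun i hi => mem_union_left _ hi
  have inT : ∀ i ∈ T, i ∈ G ∪ T := fun i hi => mem_union_right _ hi
  have hb : ∀ i ∈ G, (a i + q i) * m ≤ (β + 1) * (y i + h i) := by
    intro i hi
    have h1 := ha2 i
    have h2 : β * (q i * g) ≤ β * (h i + g) := Nat.mul_le_mul_left _ (hq2 i).le
    have h3 := hG i hi
    have h4 : (a i + q i) * m = a i * m + β * (q i * g) := by rw [hm]; ring
    have h5 : (β + 1) * (y i + h i) = (β + 1) * y i + β * h i + h i := by ring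
    have h6 : β * (h i + g) = β * h i + m := by rw [hm]; ring
    omega
  have hq0 : ∀ i ∈ G, 0 < q i := by
    intro i hi
    have h1 := hq1 i
    have h2 := (hin i (inG i hi)).2.1
    by_contra hcon
    have h3 : q i = 0 := by omega
    rw [h3] at h1
    omega
  let T' : Finset ι := T.filter fun i => (β + 1) * (y i + h i) ≤ (r i + 1) * m
  have hT' : ∀ i ∈ T', i ∈ T ∧ (β + 1) * (y i + h i) ≤ (r i + 1) * m := fun i hi => mem_filter.1 hi
  -- grid item covering the row of a thin item
  have hcov : ∀ i ∈ T', ∀ j ∈ G, a j ≤ r i → r i < a j + q j → x j + w j ≤ x i ∨ x i + w i ≤ x j := by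
    intro i hi j hj h1 h2
    obtain ⟨h3, h4⟩ := hT' i hi
    have h5 := hd i (inT i h3) j (inG j hj) (fun hh => Finset.disjoint_left.1 hGT hj (hh ▸ h3))
    have h6 := mulinv (y j) (y i) (((ha1 j).trans (mmono _ _ h1)).trans (hr1 i))
    have h7 := mulinv (y i + h i) (y j + h j) ((h4.trans (mmono _ _ h2)).trans (hb j hj))
    have h8 := hin i (inT i h3)
    omega
  obtain ⟨l, R, w1, w2, w3⟩ := walls W w x a (fun i => a i + q i) r G T'
    (fun j hj => ⟨(hin j (inG j hj)).1, (hin j (inG j hj)).2.2.1⟩)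
    (fun j hj => ⟨(hin j (inT j (hT' j hj).1)).1, (hin j (inT j (hT' j hj).1)).2.2.1⟩) hcov
  have hbase : ∀ i, base i ≤ y i := by
    intro i
    have h1 := hb2 i
    have h2 := hr1 i
    by_contra hcon
    have h3 := mulmono (y i + 1) (base i) (by omega)
    have h4 : (β + 1) * (y i + 1) = (β + 1) * y i + (β + 1) := by ring
    rw [mul_comm (base i)] at h1
    omega
  have hbg : ∀ i ∈ T', (y i - base i) + h i ≤ g := by
    intro i hi
    have h1 := (hT' i hi).2
    have h2 := hb1 i
    have h3 := hbase i
    apply mulinv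
    have h4 : (β + 1) * ((y i - base i) + h i) + base i * (β + 1) = (β + 1) * (y i + h i) := by
      obtain ⟨d, hd⟩ := Nat.exists_eq_add_of_le h3
      rw [hd, Nat.add_sub_cancel_left]; ring
    have h5 : (r i + 1) * m = r i * m + m := by ring
    have h6 : (β + 1) * g = m + g := by rw [hm]; ring
    omega
  obtain ⟨A, κ, c, U, vert, X, Y, L, Hh, x', y', a1, a2, a3, a4, a5, a6, a7, a8⟩ :=
    HH W g n hW hn ι w h x a (fun i => a i + q i) r l R (fun i => y i - base i) G T'
      (hGT.mono_right (filter_subset _ _))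
      (by
        intro i hi
        have h1 := hin i (inG i hi)
        refine ⟨h1.1, h1.2.2.1, ?_, ?_, ?_⟩
        · have := hq0 i hi
          omega
        · apply minv
          exact (hb i hi).trans ((mulmono _ _ h1.2.2.2).trans hnH)
        · rw [Nat.add_sub_cancel_left]; exact hq1 i)
      (by
        intro i hi j hj hne
        rcases hd i (inG i hi) j (inG j hj) hne with h1 | h1 | h1 | h1
        · exact Or.inl h1
        · exact Or.inr (Or.inl h1)
        · right; right; left
          apply minv
          exact (hb i hi).trans ((mulmono _ _ h1).trans (ha1 j))
        · right; right; right
          apply minv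
          exact (hb j hj).trans ((mulmono _ _ h1).trans (ha1 i)))
      (by
        intro i hi
        have h0 := (hT' i hi).1
        have h1 := hin i (inT i h0)
        obtain ⟨p1, p2, p3⟩ := w1 i hi
        refine ⟨h1.1, h1.2.1, p1, p2, p3, ?_, hbg i hi, (hT i h0).1, ?_⟩
        · by_contra hcon
          have h2 := mmono n (r i) (by omega)
          have h3 := hr1 i
          have h4 := mulmono (y i + 1) H (by omega)
          have h5 : (β + 1) * (y i + 1) = (β + 1) * y i + (β + 1) := by ring
          omega
        · refine le_trans (Nat.mul_le_mul_right _ (Nat.le_add_right _ _)) (hT i h0).2)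
      w2 w3
      (by
        intro i hi j hj hne hr
        have hbb : base i = base j := by
          have u1 := hb1 i
          have u2 := hb2 i
          have u3 := hb1 j
          have u4 := hb2 j
          rw [← hr] at u3 u4
          apply le_antisymm
          · by_contra hcon
            have := Nat.mul_le_mul_right (β + 1) (show base j + 1 ≤ base i by omega)
            rw [add_mul] at this
            omega
          · by_contra hcon
            have := Nat.mul_le_mul_right (β + 1) (show base i + 1 ≤ base j by omega)
            rw [add_mul] at this
            omega
        have h1 := hd i (inT i (hT' i hi).1) j (inT j (hT' j hj).1) hne
        have h2 := hbase i
        have h3 := hbase j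
        omega)
  refine ⟨A, κ, c, U, vert, X, Y, L, Hh, x', y', ?_, a2.trans (filter_subset _ _), a3, a4, a5, a6, a7, a8⟩
  -- the crossing items
  let C : Finset ι := T.filter fun i => ¬ (β + 1) * (y i + h i) ≤ (r i + 1) * m
  have hCc : C.card ≤ e * n := by
    have := Finset.card_le_mul_card_image_of_maps_to (s := C) (t := range n) (f := r)
      (by
        intro i hi
        have h0 := (mem_filter.1 hi).1
        have h1 := hin i (inT i h0)
        rw [mem_range]
        by_contra hcon
        have h2 := mmono n (r i) (by omega)
        have h3 := hr1 i
        have h4 := mulmono (y i + 1) H (by omega)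
        have h5 : (β + 1) * (y i + 1) = (β + 1) * y i + (β + 1) := by ring
        omega) e (by
        intro r₀ _
        apply wide_card _ w x W e
        · intro i hi
          exact (hin i (inT i (mem_filter.1 (mem_filter.1 hi).1).1)).2.2.1
        · intro i hi j hj hne
          obtain ⟨p1, p2⟩ := mem_filter.1 hi
          obtain ⟨p1', p2'⟩ := mem_filter.1 hj
          obtain ⟨p3, p4⟩ := mem_filter.1 p1
          obtain ⟨p3', p4'⟩ := mem_filter.1 p1'
          have hrr : r i = r j := by rw [p2, p2']
          have u1 := hr2 i
          have u2 := hr2 j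
          rcases hd i (inT i p3) j (inT j p3') hne with h1 | h1 | h1 | h1
          · exact Or.inl h1
          · exact Or.inr h1
          · exfalso
            have := mulmono _ _ h1
            rw [add_mul (r i) 1 m, one_mul, hrr] at p4
            omega
          · exfalso
            have := mulmono _ _ h1
            rw [add_mul (r j) 1 m, one_mul, ← hrr] at p4'
            omega
        · intro i hi
          exact (hT i (mem_filter.1 (mem_filter.1 hi).1).1).1)
    simpa using this
  have hCs : t * ∑ i ∈ C, h i ≤ n * e * g := by
    rw [Finset.mul_sum]
    calc ∑ i ∈ C, t * h i ≤ ∑ i ∈ C, g := Finset.sum_le_sum fun i hi =>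
          (Nat.mul_le_mul_right _ (Nat.le_add_left _ _)).trans (hT i (mem_filter.1 hi).1).2
      _ = C.card * g := by simp
      _ ≤ n * e * g := by rw [mul_comm n e]; exact Nat.mul_le_mul_right _ hCc
  have hsub : T \ A ⊆ (T' \ A) ∪ C := by
    intro i hi
    rw [mem_sdiff] at hi
    rw [mem_union, mem_sdiff]
    by_cases hc : (β + 1) * (y i + h i) ≤ (r i + 1) * m
    · left; exact ⟨mem_filter.2 ⟨hi.1, hc⟩, hi.2⟩
    · right; exact mem_filter.2 ⟨hi.1, hc⟩
  calc t * ∑ i ∈ T \ A, h i ≤ t * (∑ i ∈ T' \ A, h i + ∑ i ∈ C, h i) := by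
        refine Nat.mul_le_mul_left _ ((Finset.sum_le_sum_of_subset hsub).trans ?_)
        exact GI.sum_union_le' _ _ _
    _ = t * ∑ i ∈ T' \ A, h i + t * ∑ i ∈ C, h i := by ring
    _ ≤ 2 * (n * e * g) := by omega
end SCP

set_option linter.unusedSectionVars false
namespace SCP
open Finset

/-- Put the remaining rectangles in one horizontal container on top. -/
theorem stack {ι : Type} [Fintype ι] (W Q : ℕ) (w h : ι → ℕ) (hw : ∀ i, w i ≤ W) (P : Finset ι)
    (κ : Type) (c : ι → κ) (U : Finset κ) (vert : κ → Prop) (X Y L Hh : κ → ℕ) (x' y' : ι → ℕ)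
    (a4 : ∀ i ∈ P, c i ∈ U)
    (a5 : ∀ k ∈ U, X k + L k ≤ W ∧ Y k + Hh k ≤ Q)
    (a6 : ∀ k ∈ U, ∀ k' ∈ U, k ≠ k' → X k + L k ≤ X k' ∨ X k' + L k' ≤ X k ∨
        Y k + Hh k ≤ Y k' ∨ Y k' + Hh k' ≤ Y k)
    (a7 : ∀ i ∈ P, X (c i) ≤ x' i ∧ x' i + w i ≤ X (c i) + L (c i) ∧
        Y (c i) ≤ y' i ∧ y' i + h i ≤ Y (c i) + Hh (c i))
    (a8 : ∀ i ∈ P, ∀ j ∈ P, i ≠ j → c i = c j →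
        (vert (c i) → x' i + w i ≤ x' j ∨ x' j + w j ≤ x' i) ∧
        (¬ vert (c i) → y' i + h i ≤ y' j ∨ y' j + h j ≤ y' i)) :
    ∃ (κ : Type) (c : ι → κ) (V : Finset κ) (vert : κ → Prop) (X Y L Hh : κ → ℕ) (x' y' : ι → ℕ),
      V.card ≤ U.card + 1 ∧ (∀ i, c i ∈ V) ∧
      (∀ k ∈ V, X k + L k ≤ W ∧ Y k + Hh k ≤ Q + ∑ i ∈ univ \ P, h i) ∧
      (∀ k ∈ V, ∀ k' ∈ V, k ≠ k' → X k + L k ≤ X k' ∨ X k' + L k' ≤ X k ∨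
        Y k + Hh k ≤ Y k' ∨ Y k' + Hh k' ≤ Y k) ∧
      (∀ i, X (c i) ≤ x' i ∧ x' i + w i ≤ X (c i) + L (c i) ∧
        Y (c i) ≤ y' i ∧ y' i + h i ≤ Y (c i) + Hh (c i)) ∧
      (∀ i j, i ≠ j → c i = c j →
        (vert (c i) → x' i + w i ≤ x' j ∨ x' j + w j ≤ x' i) ∧
        (¬ vert (c i) → y' i + h i ≤ y' j ∨ y' j + h j ≤ y' i)) := by
  obtain ⟨pos, p1, p2⟩ := exists_prefix h (fun i => (i ∈ P : Prop))
  have p2' : ∀ i, i ∉ P → pos i + h i ≤ ∑ j ∈ univ \ P, h j := by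
    intro i hi
    have p3 : pos i + h i ≤ ∑ j ∈ univ.filter (fun j => (j ∈ P : Prop) = (i ∈ P : Prop)), h j := by
      convert p2 i
    refine p3.trans (Finset.sum_le_sum_of_subset ?_)
    intro j hj
    have hj2 := (mem_filter.1 hj).2
    rw [mem_sdiff]
    refine ⟨mem_univ _, fun hj' => hi ?_⟩
    rw [← hj2]; exact hj'
  have p1' : ∀ i j, i ∉ P → j ∉ P → i ≠ j → pos i + h i ≤ pos j ∨ pos j + h j ≤ pos i := by
    intro i j hi hj hne
    exact p1 i j hne (by simp [hi, hj])
  let f : (κ → ℕ) → ℕ → Option κ → ℕ := fun F d o => o.elim d F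
  refine ⟨Option κ, fun i => if i ∈ P then some (c i) else none, insertNone U, fun o => o.elim False vert,
    fun o => o.elim 0 X, fun o => o.elim Q Y, fun o => o.elim W L,
    fun o => o.elim (∑ i ∈ univ \ P, h i) Hh,
    fun i => if i ∈ P then x' i else 0, fun i => if i ∈ P then y' i else Q + pos i, ?_, ?_, ?_, ?_, ?_, ?_⟩
  · rw [card_insertNone]
  · intro i
    by_cases hi : i ∈ P
    · simpa [hi] using a4 i hi
    · simp [hi]
  · rintro (_ | k) hk
    · simp
    · have := a5 k (by simpa using hk)
      simp only [Option.elim]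
      omega
  · rintro (_ | k) hk (_ | k') hk' hne
    · exact absurd rfl hne
    · have := a5 k' (by simpa using hk')
      simp only [Option.elim]
      omega
    · have := a5 k (by simpa using hk)
      simp only [Option.elim]
      omega
    · exact a6 k (by simpa using hk) k' (by simpa using hk') (fun hh => hne (by rw [hh]))
  · intro i
    by_cases hi : i ∈ P
    · simpa only [if_pos hi, Option.elim] using a7 i hi
    · simp only [if_neg hi, Option.elim]
      have := p2' i hi
      have := hw i
      omega
  · intro i j hne
    by_cases hi : i ∈ P <;> by_cases hj : j ∈ P
    · simp only [if_pos hi, if_pos hj, Option.elim, Option.some.injEq]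
      exact a8 i hi j hj hne
    · simp [hi, hj]
    · simp [hi, hj]
    · simp only [if_neg hi, if_neg hj, Option.elim]
      have := p1' i j hi hj hne
      intro _
      exact ⟨fun hh => hh.elim, fun _ => by omega⟩

lemma arith_final (e β t E B g n H S S1 S2 Z : ℕ) (he : 0 < e) (heB : e ≤ B) (hβ : β = 4 * e)
    (ht : t = 16 * (e * e)) (hE : E = 8 * (e * e)) (hm : E * S1 ≤ e * H)
    (a1 : t * S2 ≤ 2 * (n * e * g)) (hg1 : g * (2 * β * B) ≤ H)
    (hn2 : n * (β * g) < (β + 1) * H + β * g) (hSS : S ≤ S1 + S2)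
    (hq2 : Z ≤ (n + n / 3) * g + S) : 3 * e * Z ≤ (4 * e + 3) * H := by
  have c1 : 8 * e * S1 ≤ H := by
    have : e * (8 * e * S1) ≤ e * H := by
      calc e * (8 * e * S1) = E * S1 := by rw [hE]; ring
        _ ≤ _ := hm
    exact Nat.le_of_mul_le_mul_left this he
  have c2 : 8 * e * S2 ≤ n * g := by
    have : (2 * e) * (8 * e * S2) ≤ (2 * e) * (n * g) := by
      calc (2 * e) * (8 * e * S2) = t * S2 := by rw [ht]; ring
        _ ≤ _ := a1
        _ = _ := by ring
    exact Nat.le_of_mul_le_mul_left this (by omega)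
  have c3 : 8 * (e * g) ≤ H := by
    have h1 : 1 ≤ B := by omega
    calc 8 * (e * g) ≤ (8 * (e * g)) * B := Nat.le_mul_of_pos_right _ h1
      _ = g * (2 * β * B) := by rw [hβ]; ring
      _ ≤ H := hg1
  have c4 : 4 * (e * (n * g)) ≤ 4 * (e * H) + H + 4 * (e * g) := by
    have h1 : n * (β * g) = 4 * (e * (n * g)) := by rw [hβ]; ring
    have h2 : (β + 1) * H + β * g = 4 * (e * H) + H + 4 * (e * g) := by rw [hβ]; ring
    omega
  have c5 : H ≤ e * H := Nat.le_mul_of_pos_left _ he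
  have c6 : n * g ≤ 2 * H := by
    have : e * (n * g) ≤ e * (2 * H) := by
      have : e * (2 * H) = 2 * (e * H) := by ring
      omega
    exact Nat.le_of_mul_le_mul_left this he
  have c7 : 8 * (e * S) ≤ 3 * H := by
    have h1 := Nat.mul_le_mul_left (8 * e) hSS
    have h2 : 8 * e * (S1 + S2) = 8 * e * S1 + 8 * e * S2 := by ring
    have h3 : 8 * e * S = 8 * (e * S) := by ring
    omega
  have c8 : 3 * (e * Z) ≤ 4 * (e * (n * g)) + 3 * (e * S) := by
    have h1 : 3 * (n + n / 3) ≤ 4 * n := by omega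
    have h2 := Nat.mul_le_mul_right (e * g) h1
    have h3 := Nat.mul_le_mul_left (3 * e) hq2
    calc 3 * (e * Z) = 3 * e * Z := by ring
      _ ≤ 3 * e * ((n + n / 3) * g + S) := h3
      _ = 3 * (n + n / 3) * (e * g) + 3 * (e * S) := by ring
      _ ≤ 4 * n * (e * g) + 3 * (e * S) := by omega
      _ = _ := by ring
  have e1 : 3 * e * Z = 3 * (e * Z) := by ring
  have e2 : (4 * e + 3) * H = 4 * (e * H) + 3 * H := by ring
  omega

set_option maxHeartbeats 800000 in
theorem nat_main (e : ℕ) (he : 0 < e) : ∃ K : ℕ, ∀ W H : ℕ, 0 < W → 0 < H →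
    ∀ (ι : Type) [Fintype ι] (w h x y : ι → ℕ), (∀ i, 0 < w i ∧ 0 < h i) →
    (∀ i, x i + w i ≤ W ∧ y i + h i ≤ H) →
    (∀ i j, i ≠ j → x i + w i ≤ x j ∨ x j + w j ≤ x i ∨ y i + h i ≤ y j ∨ y j + h j ≤ y i) →
    (∀ i, H < e * h i ∨ W < e * w i) →
    ∃ (κ : Type) (c : ι → κ) (U : Finset κ) (vert : κ → Prop) (X Y L Hh : κ → ℕ) (x' y' : ι → ℕ),
      U.card ≤ K ∧ (∀ i, c i ∈ U) ∧
      (∀ k ∈ U, X k + L k ≤ W ∧ 3 * e * (Y k + Hh k) ≤ (4 * e + 3) * H) ∧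
      (∀ k ∈ U, ∀ k' ∈ U, k ≠ k' → X k + L k ≤ X k' ∨ X k' + L k' ≤ X k ∨
        Y k + Hh k ≤ Y k' ∨ Y k' + Hh k' ≤ Y k) ∧
      (∀ i, X (c i) ≤ x' i ∧ x' i + w i ≤ X (c i) + L (c i) ∧
        Y (c i) ≤ y' i ∧ y' i + h i ≤ Y (c i) + Hh (c i)) ∧
      (∀ i j, i ≠ j → c i = c j →
        (vert (c i) → x' i + w i ≤ x' j ∨ x' j + w j ≤ x' i) ∧
        (¬ vert (c i) → y' i + h i ≤ y' j ∨ y' j + h j ≤ y' i)) := by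
  obtain ⟨β, hβ⟩ : ∃ β, β = 4 * e := ⟨_, rfl⟩
  obtain ⟨t, ht⟩ : ∃ t, t = 16 * (e * e) := ⟨_, rfl⟩
  obtain ⟨E, hE⟩ : ∃ E, E = 8 * (e * e) := ⟨_, rfl⟩
  have hee : 0 < e * e := Nat.mul_pos he he
  have HR := fun N => row_lemma e t β N (by omega) (by omega)
  choose Θ Kr HR using HR
  let Nf : ℕ → ℕ := fun B => (β + 1) * 4 * B + 1
  let Bf : ℕ → ℕ := fun k => Nat.rec e (fun _ B => B + Θ (Nf B) * (4 * β * B)) k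
  have Bs : ∀ k, Bf (k + 1) = Bf k + Θ (Nf (Bf k)) * (4 * β * Bf k) := fun k => rfl
  have B0 : Bf 0 = e := rfl
  have Bmono : Monotone Bf := monotone_nat_of_le_succ fun k => by rw [Bs]; omega
  have Be : ∀ k, e ≤ Bf k := fun k => by rw [← B0]; exact Bmono (Nat.zero_le k)
  obtain ⟨H0, hH0⟩ : ∃ H0, H0 = 2 * β * Bf E := ⟨_, rfl⟩
  obtain ⟨Ks, hKs⟩ := grid_lemma' H0 0
  refine ⟨Ks + ∑ k ∈ range E, (Kr (Nf (Bf k)) + 1), ?_⟩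
  intro W H hW hH ι _ w h x y hpos hin hd hns
  by_cases hsmall : H < H0
  · obtain ⟨c, U, X, Y, L, Hh, x', a', a1, a2, a3, a4, a5, a6, a7⟩ :=
      hKs H hsmall.le W hW ι univ w y (fun i => y i + h i) x (fun i _ => (hpos i).1)
        (fun i _ => by have := hpos i; omega) (fun i _ => (hin i).2) (fun i _ => (hin i).1)
        (fun i _ j _ hne => hd i j hne) ∅ (by simp) (by simp)
    refine ⟨ℕ, c, U, fun _ => True, X, Y, L, Hh, x', a', by omega, fun i => a2 i (mem_univ _), ?_, a4, ?_, ?_⟩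
    · intro k hk
      refine ⟨(a3 k hk).1, ?_⟩
      have h1 : 3 * (Y k + Hh k) ≤ 4 * H := by have := (a3 k hk).2; omega
      have h2 := Nat.mul_le_mul_left e h1
      nlinarith
    · intro i
      have := a5 i (mem_univ _)
      simpa only [Nat.add_sub_cancel_left] using this
    · intro i j hne hc
      exact ⟨fun _ => a6 i (mem_univ _) j (mem_univ _) hne hc, fun hh => absurd trivial hh⟩
  · push Not at hsmall
    -- wide rectangles
    let Wd : Finset ι := univ.filter fun i => W < e * w i
    have hWd : ∑ i ∈ Wd, h i ≤ e * H := by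
      have h1 := area_le Wd w h x y W H (fun i _ => hin i) (fun i _ j _ hne => hd i j hne)
      have h2 : ∑ i ∈ Wd, W * h i ≤ ∑ i ∈ Wd, e * (w i * h i) := by
        apply Finset.sum_le_sum
        intro i hi
        have := (mem_filter.1 hi).2.le
        calc W * h i ≤ (e * w i) * h i := Nat.mul_le_mul_right _ this
          _ = e * (w i * h i) := by ring
      rw [← Finset.mul_sum, ← Finset.mul_sum] at h2
      have h3 := Nat.mul_le_mul_left e h1
      have h4 : W * ∑ i ∈ Wd, h i ≤ W * (e * H) := by
        calc _ ≤ _ := h2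
          _ ≤ _ := h3
          _ = _ := by ring
      exact Nat.le_of_mul_le_mul_left h4 hW
    obtain ⟨k, hk, hmed⟩ := pigeon E (by omega)
      (fun k => Wd.filter fun i => h i * Bf k ≤ H ∧ H < h i * Bf (k + 1)) Wd h
      (fun k => filter_subset _ _) (by
        intro k k' hkk
        rw [Finset.disjoint_left]
        intro i hi hi'
        have h1 := (mem_filter.1 hi).2
        have h2 := (mem_filter.1 hi').2
        have h3 := Nat.mul_le_mul_left (h i) (Bmono (show k + 1 ≤ k' from hkk))
        omega)
    obtain ⟨B, hB⟩ : ∃ B, B = Bf k := ⟨_, rfl⟩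
    have hBs := Bs k
    rw [← hB] at hBs hmed
    have heB : e ≤ B := hB ▸ Be k
    have hBE : 2 * β * B ≤ H := by
      refine le_trans (Nat.mul_le_mul_left _ ?_) (hH0 ▸ hsmall)
      rw [hB]; exact Bmono hk.le
    have hB0 : 0 < 2 * β * B := by
      have : 0 < β := by omega
      have : 0 < B := by omega
      positivity
    obtain ⟨g, hg1, hg2⟩ := floor_ex (2 * β * B) H hB0
    have hg0 : 0 < g := by
      by_contra hcon
      have : g = 0 := by omega
      rw [this] at hg2
      omega
    have hg3 : H ≤ 4 * β * B * g := by nlinarith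
    have hβ0 : 0 < β := by omega
    have hβg : 0 < β * g := Nat.mul_pos hβ0 hg0
    obtain ⟨n, hn1, hn2⟩ := ceil_ex (β * g) ((β + 1) * H) hβg
    have hnN : n ≤ Nf B := by
      by_contra hcon
      have h1 : (β + 1) * 4 * B + 1 ≤ n := by simp only [Nf] at hcon; omega
      have h2 := Nat.mul_le_mul_right (β * g) h1
      have h3 := Nat.mul_le_mul_left (β + 1) hg3
      nlinarith
    let G : Finset ι := univ.filter fun i => H < h i * B
    let T : Finset ι := univ.filter fun i => W < e * w i ∧ h i * Bf (k + 1) ≤ H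
    have hBB : B ≤ Bf (k + 1) := by rw [hBs]; omega
    have hGT : Disjoint G T := by
      rw [Finset.disjoint_left]
      intro i hi hi'
      have h1 := (mem_filter.1 hi).2
      have h2 := (mem_filter.1 hi').2.2
      have h3 := Nat.mul_le_mul_left (h i) hBB
      omega
    obtain ⟨A, κ, c, U, vert, X, Y, L, Hh, x', y', a1, a2, a3, a4, a5, a6, a7, a8⟩ :=
      HR (Nf B) W H g n hW hg0 hnN hn1 ι w h x y G T hGT
        (fun i _ => ⟨(hpos i).1, (hpos i).2, (hin i).1, (hin i).2⟩)
        (fun i _ j _ hne => hd i j hne)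
        (by
          intro i hi
          have h1 := (mem_filter.1 hi).2
          have h2 : 0 < B := by omega
          by_contra hcon
          push Not at hcon
          have h3 := Nat.mul_le_mul_right B hcon.le
          nlinarith)
        (by
          intro i hi
          obtain ⟨h1, h2⟩ := (mem_filter.1 hi).2
          refine ⟨h1, ?_⟩
          rw [hBs] at h2
          have h3 : (4 * β * B) * (Θ (Nf B) * h i) ≤ (4 * β * B) * g := by
            calc (4 * β * B) * (Θ (Nf B) * h i) = h i * (Θ (Nf B) * (4 * β * B)) := by ring
              _ ≤ h i * (B + Θ (Nf B) * (4 * β * B)) := Nat.mul_le_mul_left _ (Nat.le_add_left _ _)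
              _ ≤ H := h2
              _ ≤ _ := hg3
          have h4 : 0 < 4 * β * B := by
            have : 4 * β * B = 2 * (2 * β * B) := by ring
            omega
          exact Nat.le_of_mul_le_mul_left h3 h4)
    obtain ⟨κ', c', V, vert', X', Y', L', Hh', x2, y2, b1, b2, b3, b4, b5, b6⟩ :=
      stack W ((n + n / 3) * g) w h (fun i => by have := hin i; omega) (G ∪ A) κ c U vert X Y L Hh x' y'
        a4 a5 a6 a7 a8
    refine ⟨κ', c', V, vert', X', Y', L', Hh', x2, y2, ?_, b2, ?_, b4, b5, b6⟩
    · have h1 := Finset.single_le_sum (f := fun k => Kr (Nf (Bf k)) + 1) (s := range E)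
        (fun _ _ => Nat.zero_le _) (mem_range.2 hk)
      rw [← hB] at h1
      omega
    · intro q hq
      refine ⟨(b3 q hq).1, ?_⟩
      have hq2 := (b3 q hq).2
      obtain ⟨S, hS⟩ : ∃ S, S = ∑ i ∈ univ \ (G ∪ A), h i := ⟨_, rfl⟩
      obtain ⟨S1, hS1⟩ : ∃ S1, S1 = ∑ i ∈ Wd.filter (fun i => h i * B ≤ H ∧ H < h i * Bf (k + 1)), h i :=
        ⟨_, rfl⟩
      obtain ⟨S2, hS2⟩ : ∃ S2, S2 = ∑ i ∈ T \ A, h i := ⟨_, rfl⟩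
      have hSS : S ≤ S1 + S2 := by
        rw [hS, hS1, hS2]
        refine le_trans (Finset.sum_le_sum_of_subset ?_) (GI.sum_union_le' _ _ _)
        intro i hi
        rw [mem_sdiff, mem_union, not_or] at hi
        obtain ⟨_, hi1, hi2⟩ := hi
        have hi3 : h i * B ≤ H := by
          by_contra hcon
          exact hi1 (mem_filter.2 ⟨mem_univ _, by omega⟩)
        have hi4 : W < e * w i := by
          rcases hns i with h1 | h1
          · have := Nat.mul_le_mul_right (h i) heB
            rw [mul_comm B] at this
            omega
          · exact h1
        rw [mem_union]
        by_cases hi5 : h i * Bf (k + 1) ≤ H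
        · right
          rw [mem_sdiff]
          exact ⟨mem_filter.2 ⟨mem_univ _, hi4, hi5⟩, hi2⟩
        · left
          exact mem_filter.2 ⟨mem_filter.2 ⟨mem_univ _, hi4⟩, hi3, by omega⟩
      rw [← hS] at hq2
      rw [← hS2] at a1
      have hm : E * S1 ≤ e * H := by
        refine le_trans ?_ hWd
        rw [hS1]; convert hmed
      -- arithmetic
      exact arith_final e β t E B g n H S S1 S2 _ he heB hβ ht hE hm a1 hg1 hn2 hSS hq2
end SCP

/-- Structural container lemma (Lemma 4.3 with α = 1/3): for every `ε ∈ (0,1)` there is a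
constant `K = K(ε)` such that whenever a family of rectangles of width at most `W` admits a
feasible packing into `[0,W]×[0,H]`, all the non-small rectangles (those with `h_i > ε·H`
or `w_i > ε·W`) can be feasibly packed into at most `K` horizontal/vertical containers with
pairwise disjoint interiors inside `[0,W]×[0,⌈(4/3+ε)·H⌉]`. -/
theorem structural_container_packing
    (ε : ℝ) (hε : ε ∈ Set.Ioo (0 : ℝ) 1) :
    ∃ K : ℕ, 0 < K ∧
      ∀ (W H : ℕ), 0 < W → 0 < H →
      ∀ (ι : Type) (_ : Fintype ι) (w h : ι → ℕ),
        (∀ i, 0 < w i ∧ 0 < h i ∧ w i ≤ W) →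
        (∃ x y : ι → ℕ, IsPacking w h x y W H) →
        ∃ (n : ℕ) (cx cy cw ch : ℕ → ℝ) (vert : ℕ → Bool) (x y : ι → ℕ) (c : ι → ℕ),
          n ≤ K ∧
          (∀ m < n, 0 ≤ cx m ∧ 0 ≤ cy m ∧ 0 ≤ cw m ∧ 0 ≤ ch m ∧
            cx m + cw m ≤ W ∧ cy m + ch m ≤ (⌈(4 / 3 + ε) * H⌉₊ : ℝ)) ∧
          (∀ m < n, ∀ m' < n, m ≠ m' →
            RegionDisjoint (cx m) (cy m) (cw m) (ch m) (cx m') (cy m') (cw m') (ch m')) ∧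
          (∀ i, (ε * H < (h i : ℝ) ∨ ε * W < (w i : ℝ)) →
            x i + w i ≤ W ∧ y i + h i ≤ ⌈(4 / 3 + ε) * H⌉₊) ∧
          (∀ i j, (ε * H < (h i : ℝ) ∨ ε * W < (w i : ℝ)) →
            (ε * H < (h j : ℝ) ∨ ε * W < (w j : ℝ)) → i ≠ j →
            RectDisjoint (x i) (y i) (w i) (h i) (x j) (y j) (w j) (h j)) ∧
          (∀ i, (ε * H < (h i : ℝ) ∨ ε * W < (w i : ℝ)) →
            c i < n ∧
            InRegion (x i) (y i) (w i) (h i) (cx (c i)) (cy (c i)) (cw (c i)) (ch (c i))) ∧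
          (∀ i j, (ε * H < (h i : ℝ) ∨ ε * W < (w i : ℝ)) →
            (ε * H < (h j : ℝ) ∨ ε * W < (w j : ℝ)) → i ≠ j → c i = c j →
            (vert (c i) = true → x i + w i ≤ x j ∨ x j + w j ≤ x i) ∧
            (vert (c i) = false → y i + h i ≤ y j ∨ y j + h j ≤ y i)) := by
  classical
  obtain ⟨hε0, hε1⟩ := hε
  obtain ⟨e, he⟩ := exists_nat_gt (1 / ε)
  have he0 : (0 : ℝ) < e := lt_trans (by positivity) he
  have heε : 1 ≤ (e : ℝ) * ε := by
    rw [div_lt_iff₀ hε0] at he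
    exact he.le
  have he1 : 0 < e := by exact_mod_cast he0
  obtain ⟨K, HK⟩ := SCP.nat_main e he1
  refine ⟨K + 1, by omega, ?_⟩
  intro W H hW hH ι _ w h hwh hpack
  obtain ⟨x, y, hin, hd⟩ := hpack
  have hHr : (0 : ℝ) < H := by exact_mod_cast hH
  have hWr : (0 : ℝ) < W := by exact_mod_cast hW
  let NS : ι → Prop := fun i => ε * H < (h i : ℝ) ∨ ε * W < (w i : ℝ)
  have hNS : ∀ i, NS i → H < e * h i ∨ W < e * w i := by
    intro i hi
    rcases hi with hi | hi
    · left
      have : (H : ℝ) < e * h i := by nlinarith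
      exact_mod_cast this
    · right
      have : (W : ℝ) < e * w i := by nlinarith
      exact_mod_cast this
  obtain ⟨κ, c, U, vert, X, Y, L, Hh, x', y', a1, a2, a3, a4, a5, a6⟩ :=
    HK W H hW hH {i // NS i} (fun i => w i) (fun i => h i) (fun i => x i) (fun i => y i)
      (fun i => ⟨(hwh i).1, (hwh i).2.1⟩) (fun i => hin i)
      (fun i j hne => hd (fun hh => hne (Subtype.ext hh))) (fun i => hNS i i.2)
  have hY : ∀ k ∈ U, Y k + Hh k ≤ ⌈(4 / 3 + ε) * H⌉₊ := by
    intro k hk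
    have h1 := (a3 k hk).2
    have h2 : 3 * (e : ℝ) * ((Y k + Hh k : ℕ) : ℝ) ≤ (4 * e + 3) * H := by exact_mod_cast h1
    have h3 : ((Y k + Hh k : ℕ) : ℝ) ≤ (4 / 3 + ε) * H := by
      have h4 : (4 * e + 3) * (H : ℝ) ≤ (3 * e) * ((4 / 3 + ε) * H) := by nlinarith
      exact le_of_mul_le_mul_left (h2.trans h4) (by positivity)
    exact_mod_cast h3.trans (Nat.le_ceil _)
  by_cases hex : ∃ i, NS i
  swap
  · refine ⟨0, fun _ => 0, fun _ => 0, fun _ => 0, fun _ => 0, fun _ => true, fun _ => 0, fun _ => 0,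
      fun _ => 0, by omega, by simp, by simp, ?_, ?_, ?_, ?_⟩
    · exact fun i hi => (hex ⟨i, hi⟩).elim
    · exact fun i _ hi => (hex ⟨i, hi⟩).elim
    · exact fun i hi => (hex ⟨i, hi⟩).elim
    · exact fun i _ hi => (hex ⟨i, hi⟩).elim
  obtain ⟨i₀, hi₀⟩ := hex
  have : Nonempty κ := ⟨c ⟨i₀, hi₀⟩⟩
  obtain ⟨f, φ, f1, f2⟩ := SCP.renumber U
  let q : ι → {i // NS i} := fun i => if hi : NS i then ⟨i, hi⟩ else ⟨i₀, hi₀⟩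
  have hq : ∀ i, NS i → (q i : ι) = i := by
    intro i hi; simp only [q, dif_pos hi]
  have hqne : ∀ i j, NS i → NS j → i ≠ j → q i ≠ q j := by
    intro i j hi hj hne hh
    apply hne; rw [← hq i hi, hh, hq j hj]
  have hc : ∀ i, φ (f (c (q i))) = c (q i) := fun i => (f1 _ (a2 _)).2
  have hR : ∀ i, NS i → X (c (q i)) ≤ x' (q i) ∧ x' (q i) + w i ≤ X (c (q i)) + L (c (q i)) ∧
      Y (c (q i)) ≤ y' (q i) ∧ y' (q i) + h i ≤ Y (c (q i)) + Hh (c (q i)) := by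
    intro i hi
    have := a5 (q i)
    rw [hq i hi] at this
    exact this
  have hcont : ∀ i j, NS i → NS j → i ≠ j → c (q i) = c (q j) →
      (vert (c (q i)) → x' (q i) + w i ≤ x' (q j) ∨ x' (q j) + w j ≤ x' (q i)) ∧
      (¬ vert (c (q i)) → y' (q i) + h i ≤ y' (q j) ∨ y' (q j) + h j ≤ y' (q i)) := by
    intro i j hi hj hne hcc
    have := a6 (q i) (q j) (hqne i j hi hj hne) hcc
    rw [hq i hi, hq j hj] at this
    exact this
  refine ⟨U.card, fun m => (X (φ m) : ℝ), fun m => (Y (φ m) : ℝ), fun m => (L (φ m) : ℝ),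
    fun m => (Hh (φ m) : ℝ), fun m => decide (vert (φ m)), fun i => x' (q i), fun i => y' (q i),
    fun i => f (c (q i)), by omega, ?_, ?_, ?_, ?_, ?_, ?_⟩
  · intro m hm
    have h1 := a3 _ (f2 m hm).1
    have h2 := hY _ (f2 m hm).1
    refine ⟨by positivity, by positivity, by positivity, by positivity, ?_, ?_⟩
    · beta_reduce; exact_mod_cast h1.1
    · beta_reduce; exact_mod_cast h2
  · intro m hm m' hm' hne
    have h1 := a4 _ (f2 m hm).1 _ (f2 m' hm').1 (fun hh => hne (by
      rw [← (f2 m hm).2, hh, (f2 m' hm').2]))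
    unfold RegionDisjoint
    beta_reduce
    exact_mod_cast h1
  · intro i hi
    have h1 := hR i hi
    have h2 := a3 _ (a2 (q i))
    have h3 := hY _ (a2 (q i))
    beta_reduce
    constructor
    · omega
    · exact h1.2.2.2.trans h3
  · intro i j hi hj hne
    have h1 := hR i hi
    have h2 := hR j hj
    unfold RectDisjoint
    beta_reduce
    by_cases hcc : c (q i) = c (q j)
    · have h3 := hcont i j hi hj hne hcc
      by_cases hv : vert (c (q i))
      · have := h3.1 hv
        omega
      · have := h3.2 hv
        omega
    · have := a4 _ (a2 (q i)) _ (a2 (q j)) hcc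
      omega
  · intro i hi
    refine ⟨(f1 _ (a2 _)).1, ?_⟩
    have h1 := hR i hi
    unfold InRegion
    dsimp only
    rw [hc i]
    exact_mod_cast h1
  · intro i j hi hj hne hcc
    have h3 := hcont i j hi hj hne (by rw [← hc i, ← hc j]; exact congrArg φ hcc)
    dsimp only
    rw [hc i]
    refine ⟨fun hv => h3.1 (by simpa using hv), fun hv => h3.2 (by simpa using hv)⟩
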